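/- arXiv:1205.1599 — 2 statements merged into one kernel-verified Lean document; each statement's English description precedes it below -/
import Mathlib

section
/- Let q be an odd prime power, and let r > 1 and n > 1 be integers. Then for any choice of distinct polynomials α_1, …, α_r ∈ F_q[x] with deg α_j < n for all j, and any exponents ε_1, …, ε_r ∈ {1,2} not all equal to 2, one has |C(α_1,…,α_r;n)| ≤ 2rn·q^{n−1/2} + 3rn²·q^{n−1}. -/
/-!
Fix all coefficients of a monic polynomial of degree `n` except those of `1` and `x`. The sum then
runs over pencils `f_j + b x + t`, where `f_j = f + α_j`. By Stickelberger's theorem on the parity of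
the number of irreducible factors, `μ(f_j + b x + t)` is, up to a constant sign,
`χ(H_{f_j}(b, t))`, where `χ` is the quadratic character and
`H_f(b, t) = Res_x(f' + b, f + b x + t)`; in particular `H_f` vanishes exactly at the parameters for
which the polynomial is not squarefree (`polyMoebius_eq`, `eval_pencilRes`). For fixed `b` the sum
over `t` is therefore a quadratic character sum of the product `H` of the `H_{f_j}` with `ε_j = 1`,
the factors with `ε_j = 2` only removing their at most `n - 1` zeros each.

Such a sum is `O(√q)` unless the specialisation of `H` at `b` is a constant times a square. The
bound `(2 deg H + 4) √q` is proved by Stepanov's method (`weil_bound`); it is weaker than Weil's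
`(deg H - 1) √q`, but `deg_t H ≤ r (n - 1)` makes it at most `2 r n √q`.

It remains to show that degenerate `b` are rare. Assume that no `f_j''` vanishes identically; the
coefficient of `x²` in `f` shows that this excludes a proportion of at most `r / q` of the `f`.

* `H` itself is not a square (`prod_pencilRes_ne`). Its roots `t` are `-(f_j(ρ) + b ρ)` with
  `f_j'(ρ) = -b`. Let `ξ` be transcendental over `F` and put `b = -f_i'(ξ)`. A coincidence of roots
  at `t = -(f_i(ξ) + b ξ)` means that the tangent lines to the graphs of `f_j` at `ρ` and of `f_i`
  at `ξ` agree. Differentiating this relation with respect to `ξ` gives `ρ = ξ`, hence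
  `f_j(ξ) = f_i(ξ)` and `j = i`; and `ξ` is a simple root of `f_i' + b` since `f_i'' ≠ 0`.
* `H` is monic in `t` up to a constant, and its weighted degree is under control. Extracting a
  polynomial approximate square root `S` of `H`, a specialisation can be a square only if all
  coefficients of `H - S²` vanish there, and some coefficient is a nonzero polynomial in `b` of degree
  at most `n · deg_t H` (`card_square_specialisations`).

Exceptional `f` and `b` are estimated trivially and contribute `O(q^{n-1})`.
-/

open Polynomial

noncomputable section
open scoped Classical

/-- The Möbius function of a polynomial over a field: `(-1)^s` on squarefree polynomials with
`s` distinct monic irreducible factors, and `0` otherwise. -/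
def polyMoebius {F : Type*} [Field F] (g : Polynomial F) : ℤ :=
  if Squarefree g then (-1) ^ (UniqueFactorizationMonoid.normalizedFactors g).card else 0

/-- The set `M_n` of monic polynomials of degree `n` over a finite field. -/
def monicPolys (F : Type*) [Field F] [Fintype F] (n : ℕ) : Finset (Polynomial F) :=
  Finset.image
    (fun a : Fin n → F => X ^ n + ∑ i : Fin n, Polynomial.C (a i) * X ^ (i : ℕ))
    Finset.univ

/-- The autocorrelation sum `C(α_1, ..., α_r; n) = ∑_{F ∈ M_n} ∏_j μ(F + α_j)^{ε_j}`. -/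
def Csum (F : Type*) [Field F] [Fintype F] (n r : ℕ)
    (α : Fin r → Polynomial F) (ε : Fin r → ℕ) : ℤ :=
  ∑ g ∈ monicPolys F n, ∏ j, polyMoebius (g + α j) ^ (ε j)

/-! ### Stepanov's auxiliary polynomial -/

section Stepanov

variable {F : Type*} [Field F]

lemma dvd_hasseDeriv_mul_pow (h u : F[X]) (N k : ℕ) :
    h ^ (N - k) ∣ hasseDeriv k (u * h ^ N) := by
  induction N generalizing k with
  | zero => simp
  | succ N ih =>
    rw [pow_succ, ← mul_assoc, hasseDeriv_mul]
    refine Finset.dvd_sum fun ij hij => ?_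
    obtain ⟨i, j⟩ := ij
    have hs : i + j = k := by simpa using hij
    rcases Nat.eq_zero_or_pos j with rfl | hj
    · have : i = k := by simpa using hs
      subst this
      rw [hasseDeriv_zero']
      by_cases hi : i ≤ N
      · rw [Nat.succ_sub hi, pow_succ]
        exact mul_dvd_mul (ih i) dvd_rfl
      · rw [show N + 1 - i = 0 by omega]; simp
    · exact Dvd.dvd.mul_right ((pow_dvd_pow h (by omega)).trans (ih i)) _

/-- `u ↦ hasseDeriv k (u * h ^ N)` factors as `h ^ (N - k)` times a linear operator which raises
degrees by at most `k * (deg h - 1)`. -/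
lemma exists_hasse_quot (h : F[X]) (hh : h ≠ 0) (N k : ℕ) (hk : k ≤ N) :
    ∃ L : F[X] →ₗ[F] F[X], (∀ u, hasseDeriv k (u * h ^ N) = h ^ (N - k) * L u) ∧
      ∀ u B, u ∈ degreeLT F B → L u ∈ degreeLT F (B + k * (h.natDegree - 1)) := by
  have hne : h ^ (N - k) ≠ 0 := pow_ne_zero _ hh
  choose L hL using fun u => dvd_hasseDeriv_mul_pow h u N k
  refine ⟨⟨⟨L, fun u v => mul_left_cancel₀ hne ?_⟩, fun c u => mul_left_cancel₀ hne ?_⟩, hL, ?_⟩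
  · rw [← hL, mul_add, ← hL, ← hL, add_mul, map_add]
  · rw [← hL, RingHom.id_apply, mul_smul_comm, ← hL, smul_mul_assoc, map_smul]
  · intro u B hu
    rw [mem_degreeLT] at hu ⊢
    change (L u).degree < _
    by_cases hu0 : L u = 0
    · rw [hu0, degree_zero]; exact WithBot.bot_lt_coe _
    have hd : hasseDeriv k (u * h ^ N) ≠ 0 := by rw [hL u]; exact mul_ne_zero hne hu0
    have hune : u ≠ 0 := by rintro rfl; simp at hd
    rw [degree_eq_natDegree hune] at hu
    rw [degree_eq_natDegree hu0]
    have hu' : u.natDegree < B := by exact_mod_cast hu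
    have h1 := natDegree_hasseDeriv_le (u * h ^ N) k
    have hk' : k ≤ (u * h ^ N).natDegree := by
      by_contra hlt
      exact hd (hasseDeriv_eq_zero_of_lt_natDegree _ _ (by omega))
    rw [natDegree_mul hune (pow_ne_zero _ hh), natDegree_pow] at h1 hk'
    rw [hL u, natDegree_mul hne hu0, natDegree_pow] at h1
    have : (L u).natDegree < B + k * (h.natDegree - 1) := by
      rcases Nat.eq_zero_or_pos h.natDegree with h0 | h0
      · rw [h0] at h1 ⊢; simp at h1 ⊢; omega
      · obtain ⟨d, hdd⟩ : ∃ d, h.natDegree = d + 1 := ⟨_, (Nat.succ_pred_eq_of_pos h0).symm⟩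
        obtain ⟨M, rfl⟩ := Nat.exists_eq_add_of_le hk
        rw [hdd] at h1 hk' ⊢
        simp only [Nat.add_sub_cancel_left, Nat.add_sub_cancel] at h1 ⊢
        zify [hk'] at h1
        zify at hu' ⊢
        nlinarith
    exact_mod_cast this

variable [Fintype F]

/-- Multiplying by `x^(q j)` acts on the Taylor coefficients at `a` of order below `q` as the scalar
`a^j`, because `x^q = a + (x - a)^q`. -/
lemma coeff_taylor_mul_X_pow (a : F) (P : F[X]) (j k : ℕ) (hk : k < Fintype.card F) :
    (taylor a (P * X ^ (Fintype.card F * j))).coeff k = a ^ j * (taylor a P).coeff k := by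
  have h1 : taylor a ((X : F[X]) ^ (Fintype.card F * j)) = (X ^ Fintype.card F + C a) ^ j := by
    rw [taylor_X_pow, pow_mul]
    congr 1
    rw [← FiniteField.expand_card]; simp
  obtain ⟨w, hw⟩ : X ^ Fintype.card F ∣ (X ^ Fintype.card F + C a) ^ j - (C a) ^ j := by
    have := sub_dvd_pow_sub_pow (X ^ Fintype.card F + C a) (C a) j
    simpa using this
  rw [taylor_mul, h1, sub_eq_iff_eq_add.mp hw, mul_add, coeff_add, ← C_pow, coeff_mul_C,
    mul_left_comm, coeff_X_pow_mul']
  rw [if_neg (by omega), zero_add, mul_comm]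

/-- The auxiliary polynomial is nonzero: the lowest block `r + s h^((q-1)/2)` being `0` modulo
`X ^ q` would give `r² h = h(0) s²` after squaring, since `h ^ q ≡ h(0)` modulo `X ^ q`. -/
lemma block_ne_zero (hq : Odd (Fintype.card F)) (h r s : F[X]) (h0 : h.eval 0 ≠ 0)
    (hns : ∀ (c : F) (u : F[X]), h ≠ C c * u ^ 2)
    (hr : r ≠ 0 → 2 * r.natDegree + h.natDegree < Fintype.card F)
    (hs : 2 * s.natDegree < Fintype.card F)
    (hd : X ^ Fintype.card F ∣ r + s * h ^ ((Fintype.card F - 1) / 2)) : r = 0 ∧ s = 0 := by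
  set q := Fintype.card F with hqdef
  obtain ⟨d, hd2⟩ := hq
  have hhq : h ^ ((q - 1) / 2) * h ^ ((q - 1) / 2) * h = h ^ q := by
    rw [← pow_add, ← pow_succ]; congr 1; omega
  have h1 : X ^ q ∣ h ^ q - C (h.eval 0) := by
    rw [hqdef, ← FiniteField.expand_card h]
    have : (X : F[X]) ∣ h - C (h.eval 0) := by
      rw [X_dvd_iff, coeff_zero_eq_eval_zero]; simp
    obtain ⟨w, hw⟩ := this
    have hx : expand F (Fintype.card F) h - C (h.eval 0) = expand F (Fintype.card F) (h - C (h.eval 0)) := by simp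
    rw [hx, hw, map_mul, expand_X]
    exact dvd_mul_right _ _
  have h2 : X ^ q ∣ r ^ 2 * h - C (h.eval 0) * s ^ 2 := by
    have e : r ^ 2 * h - C (h.eval 0) * s ^ 2 =
        (r + s * h ^ ((q - 1) / 2)) * ((r - s * h ^ ((q - 1) / 2)) * h)
          + s ^ 2 * (h ^ q - C (h.eval 0)) := by
      rw [← hhq]; ring
    rw [e]
    exact dvd_add (hd.mul_right _) (h1.mul_left _)
  have hh : h ≠ 0 := by rintro rfl; simp at h0
  have h3 : r ^ 2 * h - C (h.eval 0) * s ^ 2 = 0 := by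
    by_contra hne
    have := natDegree_le_of_dvd h2 hne
    rw [natDegree_X_pow] at this
    have hle := natDegree_sub_le (r ^ 2 * h) (C (h.eval 0) * s ^ 2)
    have ha : (r ^ 2 * h).natDegree < q := by
      by_cases hr0 : r = 0
      · simp [hr0]; omega
      · calc _ ≤ (r ^ 2).natDegree + h.natDegree := natDegree_mul_le
          _ < q := by rw [natDegree_pow]; exact hr hr0
    have hb : (C (h.eval 0) * s ^ 2).natDegree < q := by
      calc _ ≤ (s ^ 2).natDegree := natDegree_C_mul_le _ _
        _ < q := by rw [natDegree_pow]; exact hs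
    have := max_lt ha hb
    omega
  rw [sub_eq_zero] at h3
  by_cases hr0 : r = 0
  · subst hr0
    refine ⟨rfl, ?_⟩
    have : C (h.eval 0) * s ^ 2 = 0 := by rw [← h3]; ring
    simpa [h0] using this
  · exfalso
    have hdv : r ^ 2 ∣ s ^ 2 := by
      refine ⟨C (h.eval 0)⁻¹ * h, ?_⟩
      rw [mul_left_comm, h3, ← mul_assoc, ← C_mul, inv_mul_cancel₀ h0]; simp
    obtain ⟨t, ht⟩ := (UniqueFactorizationMonoid.pow_dvd_pow_iff_dvd two_ne_zero).mp hdv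
    apply hns (h.eval 0) t
    apply mul_left_cancel₀ (pow_ne_zero 2 hr0)
    rw [h3, ht]; ring

/-- Stepanov's method. When the linear system expressing the vanishing has more unknowns
than equations (`hdim`), there is a nonzero `R = h ^ l ∑_{j < J} (r_j + s_j h^((q-1)/2)) x^(q j)`, with
`deg r_j < A` and `deg s_j < B`, vanishing to order `l` at every `a` with `h(a) = 0` or
`h(a)^((q-1)/2) = cc`. Comparing this with the degree of `R` bounds the number of such `a`. -/
lemma stepanov_count (hq : Odd (Fintype.card F)) (h : F[X]) (hm : 1 ≤ h.natDegree)
    (h0 : h.eval 0 ≠ 0) (hns : ∀ (c : F) (u : F[X]), h ≠ C c * u ^ 2) (cc : F)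
    (l J A B : ℕ) (hl : l ≤ Fintype.card F) (hAB : A ≤ B)
    (hA : 2 * A + h.natDegree ≤ Fintype.card F + 1) (hB : 2 * B ≤ Fintype.card F + 1) (hB1 : 1 ≤ B)
    (hdim : ∑ k ∈ Finset.range l, (B + k * (h.natDegree - 1) + (J - 1)) < J * (A + B)) :
    l * (Finset.univ.filter fun a : F =>
        h.eval a = 0 ∨ h.eval a ^ ((Fintype.card F - 1) / 2) = cc).card ≤
      l * h.natDegree + (B - 1) + h.natDegree * ((Fintype.card F - 1) / 2)
        + (J - 1) * Fintype.card F := by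
  set q := Fintype.card F with hqdef
  set e := (q - 1) / 2 with he
  have hh : h ≠ 0 := by rintro rfl; simp at h0
  have hJ : 1 ≤ J := by
    rcases Nat.eq_zero_or_pos J with rfl | hJ
    · simp at hdim
    · exact hJ
  choose L hL hLd using fun k : Fin l => exists_hasse_quot h hh l k k.2.le
  choose L' hL' hLd' using fun k : Fin l =>
    exists_hasse_quot h hh (l + e) k (k.2.le.trans (Nat.le_add_right _ _))
  -- the linear system whose nontrivial solution gives the auxiliary polynomial
  let V := Fin J → (degreeLT F A × degreeLT F B)
  let W := (k : Fin l) → degreeLT F (B + k * (h.natDegree - 1) + (J - 1))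
  have hmem : ∀ (v : V) (k : Fin l), (∑ j : Fin J, X ^ (j : ℕ) *
      (L k (v j).1 + cc • L' k (v j).2) : F[X]) ∈
        degreeLT F (B + k * (h.natDegree - 1) + (J - 1)) := by
    intro v k
    refine Submodule.sum_mem _ fun j _ => ?_
    have h1 : L k (v j).1 + cc • L' k (v j).2 ∈ degreeLT F (B + k * (h.natDegree - 1)) :=
      Submodule.add_mem _ (hLd k _ _ (degreeLT_mono hAB (v j).1.2))
        (Submodule.smul_mem _ _ (hLd' k _ _ (v j).2.2))
    rw [mem_degreeLT] at h1 ⊢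
    by_cases hz : L k (v j).1 + cc • L' k (v j).2 = 0
    · rw [hz, mul_zero, degree_zero]; exact WithBot.bot_lt_coe _
    rw [degree_eq_natDegree (mul_ne_zero (pow_ne_zero _ X_ne_zero) hz),
      natDegree_mul (pow_ne_zero _ X_ne_zero) hz, natDegree_X_pow]
    rw [degree_eq_natDegree hz] at h1
    have h1' : (L k (v j).1 + cc • L' k (v j).2).natDegree < B + k * (h.natDegree - 1) := by exact_mod_cast h1
    have := j.2
    norm_cast
    omega
  let T : V →ₗ[F] W :=
    { toFun := fun v k => ⟨∑ j : Fin J, X ^ (j : ℕ) *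
        (L k (v j).1 + cc • L' k (v j).2), hmem v k⟩
      map_add' := by
        intro v w
        funext k
        apply Subtype.ext
        change (∑ j : Fin J, X ^ (j : ℕ) * (L k (((v j).1 : F[X]) + (w j).1) +
            cc • L' k (((v j).2 : F[X]) + (w j).2)) : F[X]) =
          (∑ j : Fin J, X ^ (j : ℕ) * (L k (v j).1 + cc • L' k (v j).2)) +
            ∑ j : Fin J, X ^ (j : ℕ) * (L k (w j).1 + cc • L' k (w j).2)
        rw [← Finset.sum_add_distrib]
        refine Finset.sum_congr rfl fun j _ => ?_
        rw [map_add, map_add, smul_add]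
        ring
      map_smul' := by
        intro c v
        funext k
        apply Subtype.ext
        change (∑ j : Fin J, X ^ (j : ℕ) * (L k (c • ((v j).1 : F[X])) +
            cc • L' k (c • ((v j).2 : F[X]))) : F[X]) =
          c • (∑ j : Fin J, X ^ (j : ℕ) * (L k (v j).1 + cc • L' k (v j).2))
        rw [Finset.smul_sum]
        refine Finset.sum_congr rfl fun j _ => ?_
        rw [map_smul, map_smul, smul_comm cc c, ← smul_add, mul_smul_comm] }
  have hfd : ∀ n, Module.finrank F (degreeLT F n) = n := fun n => by
    rw [(degreeLTEquiv F n).finrank_eq]; simp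
  have hfin : ∀ n, Module.Finite F (degreeLT F n) := fun n =>
    Module.Finite.equiv (degreeLTEquiv F n).symm
  have hker : LinearMap.ker T ≠ ⊥ := by
    apply LinearMap.ker_ne_bot_of_finrank_lt
    rw [Module.finrank_pi_fintype, Module.finrank_pi_fintype]
    simp only [hfd, Module.finrank_prod, Finset.sum_const, Finset.card_univ, Fintype.card_fin,
      smul_eq_mul]
    rw [Fin.sum_univ_eq_sum_range (fun k => B + k * (h.natDegree - 1) + (J - 1))]
    exact hdim
  obtain ⟨v, hvT, hv0⟩ := (Submodule.ne_bot_iff _).mp hker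
  have hTv : ∀ k : Fin l, (∑ j : Fin J, X ^ (j : ℕ) *
      (L k (v j).1 + cc • L' k (v j).2) : F[X]) = 0 := fun k => by
    have := congrFun (LinearMap.mem_ker.mp hvT) k
    exact congrArg Subtype.val this
  let b : Fin J → F[X] := fun j => ((v j).1 : F[X]) + (v j).2 * h ^ e
  set R : F[X] := ∑ j : Fin J, h ^ l * b j * X ^ (q * (j : ℕ)) with hR
  have hdr : ∀ j, ((v j).1 : F[X]) ≠ 0 → 2 * ((v j).1 : F[X]).natDegree + h.natDegree < q := by
    intro j hj
    have h1 := mem_degreeLT.mp (v j).1.2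
    rw [degree_eq_natDegree hj] at h1
    have : ((v j).1 : F[X]).natDegree < A := by exact_mod_cast h1
    omega
  have hds : ∀ j, ((v j).2 : F[X]).natDegree ≤ B - 1 := by
    intro j
    by_cases hj : ((v j).2 : F[X]) = 0
    · simp [hj]
    have h1 := mem_degreeLT.mp (v j).2.2
    rw [degree_eq_natDegree hj] at h1
    have : ((v j).2 : F[X]).natDegree < B := by exact_mod_cast h1
    omega
  have hdr' : ∀ j, ((v j).1 : F[X]).natDegree ≤ B - 1 := by
    intro j
    by_cases hj : ((v j).1 : F[X]) = 0
    · simp [hj]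
    have h1 := mem_degreeLT.mp (v j).1.2
    rw [degree_eq_natDegree hj] at h1
    have : ((v j).1 : F[X]).natDegree < A := by exact_mod_cast h1
    omega
  -- the blocks `b j` vanish one after the other, starting from the lowest power `x^(q j)`
  have hRne : R ≠ 0 := by
    intro hR0
    have hS : ∑ j : Fin J, b j * X ^ (q * (j : ℕ)) = 0 := by
      refine (mul_eq_zero.mp ?_).resolve_left (pow_ne_zero l hh)
      rw [Finset.mul_sum, ← hR0, hR]
      exact Finset.sum_congr rfl fun j _ => by ring
    apply hv0
    have key : ∀ n : ℕ, ∀ j : Fin J, (j : ℕ) = n → v j = 0 := by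
      intro n
      induction n using Nat.strong_induction_on with
      | _ n ih =>
        intro j hj
        have hdiv : X ^ q ∣ b j := by
          have h1 : b j * X ^ (q * (j : ℕ)) =
              - ∑ i ∈ Finset.univ.erase j, b i * X ^ (q * (i : ℕ)) := by
            rw [← Finset.add_sum_erase _ _ (Finset.mem_univ j)] at hS
            exact eq_neg_of_add_eq_zero_left hS
          have h2 : X ^ (q * (j + 1 : ℕ)) ∣ b j * X ^ (q * (j : ℕ)) := by
            rw [h1, dvd_neg]
            refine Finset.dvd_sum fun i hi => ?_
            have hne : i ≠ j := Finset.ne_of_mem_erase hi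
            rcases lt_or_gt_of_ne (fun h => hne (Fin.ext h) : (i : ℕ) ≠ j) with hlt | hgt
            · have := ih i (by omega) i rfl
              simp [b, this]
            · exact Dvd.dvd.mul_left (pow_dvd_pow _ (Nat.mul_le_mul_left _ hgt)) _
          rw [Nat.mul_add, pow_add, mul_comm (b j), Nat.mul_one] at h2
          exact (mul_dvd_mul_iff_left (pow_ne_zero _ X_ne_zero)).mp h2
        obtain ⟨hr0, hs0⟩ := block_ne_zero hq h (v j).1 (v j).2 h0 hns (hdr j)
          (by have := hds j; omega) hdiv
        exact Prod.ext (Subtype.ext hr0) (Subtype.ext hs0)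
    funext j
    exact key j j rfl
  have hvan : ∀ a : F, (h.eval a = 0 ∨ h.eval a ^ e = cc) → (X - C a) ^ l ∣ R := by
    intro a ha
    rw [X_sub_C_pow_dvd_iff, ← taylor_apply, X_pow_dvd_iff]
    intro k hk
    have e1 : ∀ j, (taylor a (h ^ l * b j * X ^ (q * (j : ℕ)))).coeff k =
        a ^ (j : ℕ) * (h.eval a ^ (l - k) * (L ⟨k, hk⟩ (v j).1).eval a +
          h.eval a ^ (l - k) * h.eval a ^ e * (L' ⟨k, hk⟩ (v j).2).eval a) := by
      intro j
      rw [coeff_taylor_mul_X_pow a _ _ _ (by omega)]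
      congr 1
      have : h ^ l * b j = (v j).1 * h ^ l + (v j).2 * h ^ (l + e) := by
        simp only [b]; rw [pow_add]; ring
      rw [this, map_add, coeff_add, taylor_coeff, taylor_coeff]
      have a1 := hL ⟨k, hk⟩ (v j).1
      have a2 := hL' ⟨k, hk⟩ (v j).2
      simp only at a1 a2
      rw [a1, a2, eval_mul, eval_mul, eval_pow, eval_pow, ← pow_add]
      congr 4
      omega
    rw [hR, map_sum, finsetSum_coeff, Finset.sum_congr rfl fun j _ => e1 j]
    rcases ha with ha | ha
    · rw [ha, zero_pow (by omega)]; simp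
    · have := congrArg (eval a) (hTv ⟨k, hk⟩)
      rw [eval_finsetSum, eval_zero] at this
      rw [ha]
      calc _ = h.eval a ^ (l - k) * ∑ j : Fin J, eval a (X ^ (j : ℕ) *
            (L ⟨k, hk⟩ (v j).1 + cc • L' ⟨k, hk⟩ (v j).2)) := by
            rw [Finset.mul_sum]
            refine Finset.sum_congr rfl fun j _ => ?_
            simp only [eval_mul, eval_pow, eval_X, eval_add, eval_smul, smul_eq_mul]
            ring
        _ = 0 := by rw [this, mul_zero]
  set S := Finset.univ.filter fun a : F => h.eval a = 0 ∨ h.eval a ^ e = cc with hS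
  have hprod : ∏ a ∈ S, (X - C a) ^ l ∣ R := by
    apply Finset.prod_dvd_of_coprime
    · intro a _ b _ hab
      exact (isCoprime_X_sub_C_of_isUnit_sub (sub_ne_zero.mpr hab).isUnit).pow
    · intro a ha
      exact hvan a (by simpa [hS] using ha)
  have hdeg := natDegree_le_of_dvd hprod hRne
  rw [natDegree_prod _ _ (fun a _ => pow_ne_zero _ (X_sub_C_ne_zero a))] at hdeg
  simp only [natDegree_pow, natDegree_X_sub_C, mul_one, Finset.sum_const, smul_eq_mul] at hdeg
  rw [mul_comm]
  refine hdeg.trans ?_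
  refine natDegree_sum_le_of_forall_le _ _ fun j _ => ?_
  have hb : (b j).natDegree ≤ (B - 1) + h.natDegree * e := by
    refine (natDegree_add_le _ _).trans (max_le ((hdr' j).trans (Nat.le_add_right _ _)) ?_)
    refine natDegree_mul_le.trans (Nat.add_le_add (hds j) ?_)
    rw [natDegree_pow, mul_comm]
  refine natDegree_mul_le.trans ?_
  rw [natDegree_X_pow]
  have h1 : (h ^ l * b j).natDegree ≤ l * h.natDegree + ((B - 1) + h.natDegree * e) := by
    refine natDegree_mul_le.trans ?_
    rw [natDegree_pow]
    omega
  have h2 : q * (j : ℕ) ≤ (J - 1) * q := by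
    rw [mul_comm]; exact Nat.mul_le_mul_right _ (by have := j.2; omega)
  omega

end Stepanov

/-! ### Quadratic character sums of polynomials -/

section Weil

/-- The real-number estimate behind `stepanov_bound`: here `s = √q`, the order of vanishing is
`x = ⌈s⌉` and `j` is the number of blocks minus one. -/
lemma stepanov_numeric (s x N j D : ℝ) (m : ℝ) (hm : 1 ≤ m) (hs : 2 * m + 4 < s) (hx : s ≤ x)
    (hx1 : x < s + 1) (hj0 : 0 ≤ j) (hD : D = 2 * s ^ 2 + 1 - m - 2 * x)
    (hj : j * D ≤ x * (s ^ 2 - 1) + (m - 1) * x * (x - 1))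
    (hN : 2 * (x * N) ≤ 2 * x * m + (s ^ 2 - 1) * (m + 1) + 2 * j * s ^ 2) :
    2 * N - s ^ 2 ≤ 2 * m * s + 4 * s := by
  have hs0 : 0 < s := by linarith
  have hx0 : 0 < x := by linarith
  obtain ⟨y, rfl⟩ : ∃ y, j = x * y := ⟨j / x, by field_simp⟩
  have hy0 : 0 ≤ y := by
    by_contra h
    push Not at h
    nlinarith
  have hyD : y * D ≤ (s ^ 2 - 1) + (m - 1) * (x - 1) := by
    apply le_of_mul_le_mul_left _ hx0
    nlinarith
  have hDpos : (s ^ 2 - 1) + (m - 1) * (x - 1) ≤ D := by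
    have : (m - 1) * (x - 1) ≤ (m - 1) * s := by
      apply mul_le_mul_of_nonneg_left <;> linarith
    nlinarith
  have hD0 : 0 < D := by nlinarith
  have hy1 : y ≤ 1 := by
    by_contra h
    push Not at h
    nlinarith
  have h1 : x * (2 * N) ≤ x * (2 * m + s * (m + 1) + (s ^ 2 - 1) + (m - 1) * (x - 1)
      + (m - 1 + 2 * x) * y) := by
    have e1 : (s ^ 2 - 1) * (m + 1) ≤ x * (s * (m + 1)) := by
      rw [← mul_assoc]
      apply mul_le_mul_of_nonneg_right <;> nlinarith
    have e2 : 2 * (x * y) * s ^ 2 = x * (y * D) + x * ((m - 1 + 2 * x) * y) := by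
      rw [hD]; ring
    have e3 := mul_le_mul_of_nonneg_left hyD hx0.le
    nlinarith
  have h2 := le_of_mul_le_mul_left h1 hx0
  have h3 : (m - 1) * (x - 1) ≤ (m - 1) * s := by
    apply mul_le_mul_of_nonneg_left <;> linarith
  have h4 : (m - 1 + 2 * x) * y ≤ (m - 1 + 2 * x) := by
    have : 0 ≤ m - 1 + 2 * x := by linarith
    nlinarith
  nlinarith

variable {F : Type*} [Field F] [Fintype F]

/-- Stepanov's count with order of vanishing `⌈√q⌉`, `A = ⌊(q + 1 - m) / 2⌋`,
`B = (q + 1) / 2` and enough blocks to make the linear system underdetermined. -/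
lemma stepanov_bound (hq : Odd (Fintype.card F)) (h : F[X]) (hm : 1 ≤ h.natDegree)
    (h0 : h.eval 0 ≠ 0) (hns : ∀ (c : F) (u : F[X]), h ≠ C c * u ^ 2) (cc : F)
    (hs : 2 * (h.natDegree : ℝ) + 4 < √(Fintype.card F)) :
    2 * ((Finset.univ.filter fun a : F =>
        h.eval a = 0 ∨ h.eval a ^ ((Fintype.card F - 1) / 2) = cc).card : ℝ) - Fintype.card F ≤
      2 * h.natDegree * √(Fintype.card F) + 4 * √(Fintype.card F) := by
  set q := Fintype.card F with hqdef
  set m := h.natDegree with hmdef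
  set s := √(q : ℝ) with hsdef
  have hs2 : s ^ 2 = q := Real.sq_sqrt (Nat.cast_nonneg q)
  have hmR : (1 : ℝ) ≤ m := by exact_mod_cast hm
  have hs0 : 0 < s := by linarith
  set l := ⌈s⌉₊ with hl
  have hl1 : s ≤ l := Nat.le_ceil s
  have hl2 : (l : ℝ) < s + 1 := Nat.ceil_lt_add_one hs0.le
  have hlpos : 1 ≤ l := Nat.one_le_iff_ne_zero.mpr (by
    intro h; rw [h] at hl1; simp at hl1; linarith)
  have hbig : m + 2 * l < 2 * q + 1 := by
    have : (m : ℝ) + 2 * l < 2 * q + 1 := by rw [← hs2]; nlinarith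
    exact_mod_cast this
  have hlq : l ≤ q := by
    have : (l : ℝ) ≤ q := by rw [← hs2]; nlinarith
    exact_mod_cast this
  have hmq : m ≤ q := by
    have : (m : ℝ) ≤ q := by rw [← hs2]; nlinarith
    exact_mod_cast this
  set D := 2 * q + 1 - m - 2 * l with hD
  set Q := l * (q - 1) + (m - 1) * (l * (l - 1)) with hQ
  set j := Q / D with hj
  have hDpos : 0 < D := by omega
  have hjD : j * D ≤ Q := Nat.div_mul_le_self Q D
  have hjD' : Q < (j + 1) * D := by
    rw [mul_comm]; exact Nat.lt_mul_div_succ Q hDpos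
  have hqpos : 1 ≤ q := hq.pos
  have hcount := stepanov_count hq h hm h0 hns cc l (j + 1) ((q + 1 - m) / 2) ((q + 1) / 2)
    hlq (by omega) (by omega) (by omega) (by omega) (by
      have hg : (∑ k ∈ Finset.range l, k) * 2 = l * (l - 1) := Finset.sum_range_id_mul_two l
      rw [Finset.sum_add_distrib, Finset.sum_add_distrib, ← Finset.sum_mul]
      simp only [Finset.sum_const, Finset.card_range, smul_eq_mul, Nat.add_sub_cancel]
      have hB : 2 * ((q + 1) / 2) = q + 1 := by obtain ⟨d, hd⟩ := hq; omega
      have hA : q ≤ 2 * ((q + 1 - m) / 2) + m := by omega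
      set A := (q + 1 - m) / 2
      set B := (q + 1) / 2
      set G := ∑ k ∈ Finset.range l, k
      rw [← hmdef]
      have hDZ : (D : ℤ) = 2 * q + 1 - m - 2 * l := by rw [hD]; omega
      have hQZ : (Q : ℤ) = l * (q - 1) + (m - 1) * (2 * G) := by
        rw [hQ, ← hg]; push_cast [hm, hqpos]; ring
      zify at hjD' hB hA ⊢
      rw [hDZ, hQZ] at hjD'
      have : (1 : ℤ) ≤ m := by exact_mod_cast hm
      push_cast [hm]
      have hjA : (j + 1 : ℤ) * q ≤ (j + 1) * (2 * A + m) :=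
        mul_le_mul_of_nonneg_left hA (by positivity)
      have hlB : (l : ℤ) * (2 * B) = l * (q + 1) := by rw [hB]
      have hjB : (j + 1 : ℤ) * (2 * B) = (j + 1) * (q + 1) := by rw [hB]
      nlinarith)
  simp only [Nat.add_sub_cancel] at hcount
  rw [← hs2]
  refine stepanov_numeric s l _ j D m hmR hs hl1 hl2 (Nat.cast_nonneg _) ?_ ?_ ?_
  · have hDZ : (D : ℤ) = 2 * q + 1 - m - 2 * l := by rw [hD]; omega
    rw [hs2]; exact_mod_cast hDZ
  · have : ((j * D : ℕ) : ℝ) ≤ (Q : ℕ) := by exact_mod_cast hjD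
    rw [hQ] at this
    push_cast [hm, hqpos, hlpos] at this
    rw [hs2]
    linarith
  · have h2 : 2 * ((q - 1) / 2) = q - 1 := by obtain ⟨d, hd⟩ := hq; omega
    have h3 : (q + 1) / 2 - 1 = (q - 1) / 2 := by omega
    rw [h3] at hcount
    have h2R : 2 * (((q - 1) / 2 : ℕ) : ℝ) = q - 1 := by
      have : ((2 * ((q - 1) / 2) : ℕ) : ℝ) = ((q - 1 : ℕ) : ℝ) := by rw [h2]
      push_cast [hqpos] at this ⊢
      exact this
    have hc : ((l * _ : ℕ) : ℝ) ≤ ((_ : ℕ) : ℝ) := Nat.cast_le.mpr hcount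
    rw [← hmdef] at hc
    rw [Nat.cast_mul, Nat.cast_add, Nat.cast_add, Nat.cast_add, Nat.cast_mul, Nat.cast_mul,
      Nat.cast_mul] at hc
    rw [hs2]
    set e : ℝ := (((q - 1) / 2 : ℕ) : ℝ)
    have e1 : (m : ℝ) * (2 * e) = m * (q - 1) := by rw [h2R]
    linarith

/-- A weak form of Weil's bound for quadratic character sums, with constant `2` in place of `1`
and no restriction relating `q` and the degree. -/
lemma weil_bound (hq : Odd (Fintype.card F)) (h : F[X]) (hm : 1 ≤ h.natDegree)
    (hns : ∀ (c : F) (u : F[X]), h ≠ C c * u ^ 2) :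
    |((∑ a : F, quadraticChar F (h.eval a) : ℤ) : ℝ)| ≤
      2 * h.natDegree * √(Fintype.card F) + 4 * √(Fintype.card F) := by
  set q := Fintype.card F with hqdef
  have hs2 : √(q : ℝ) ^ 2 = q := Real.sq_sqrt (Nat.cast_nonneg q)
  have hs0 : 0 ≤ √(q : ℝ) := Real.sqrt_nonneg _
  rcases le_or_gt (√(q : ℝ)) (2 * (h.natDegree : ℝ) + 4) with hle | hgt
  · have h1 : |∑ a : F, quadraticChar F (h.eval a)| ≤ (q : ℤ) := by
      refine (Finset.abs_sum_le_sum_abs _ _).trans ?_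
      refine (Finset.sum_le_card_nsmul _ _ 1 fun a _ => ?_).trans (by simp [hqdef])
      by_cases ha : h.eval a = 0
      · simp [ha]
      · rcases quadraticChar_dichotomy ha with h | h <;> simp [h]
    have h2 : |((∑ a : F, quadraticChar F (h.eval a) : ℤ) : ℝ)| ≤ q := by exact_mod_cast h1
    refine h2.trans ?_
    have h3 := mul_le_mul_of_nonneg_right hle hs0
    linarith
  -- a base point where `h` does not vanish is moved to the origin
  obtain ⟨b, hb⟩ : ∃ b : F, h.eval b ≠ 0 := by
    by_contra hcon
    push Not at hcon
    have hh : h ≠ 0 := by rintro rfl; simp at hm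
    have hle : q ≤ h.natDegree := by
      have : (Finset.univ : Finset F).val ≤ h.roots := by
        rw [Finset.val_le_iff_val_subset]
        intro a _
        rw [mem_roots hh]
        exact hcon a
      have := (Multiset.card_le_card this).trans (card_roots' h)
      simpa [hqdef] using this
    have : (q : ℝ) ≤ h.natDegree := by exact_mod_cast hle
    nlinarith
  set g := taylor b h with hg
  have hgm : g.natDegree = h.natDegree := natDegree_taylor h b
  have hsum : ∑ a : F, quadraticChar F (h.eval a) = ∑ a : F, quadraticChar F (g.eval a) := by
    refine (Fintype.sum_equiv (Equiv.addRight b) _ _ fun a => ?_).symm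
    rw [hg, taylor_eval]; rfl
  have hg0 : g.eval 0 ≠ 0 := by rw [hg, taylor_eval]; simpa using hb
  have hgns : ∀ (c : F) (u : F[X]), g ≠ C c * u ^ 2 := by
    intro c u hcu
    apply hns c (taylor (-b) u)
    have := congrArg (taylor (-b)) hcu
    rw [hg, taylor_taylor] at this
    simpa [taylor_mul, taylor_pow] using this
  have hchar : ringChar F ≠ 2 := by
    intro h2
    have := FiniteField.even_card_of_char_two h2
    rw [← hqdef] at this
    obtain ⟨d, hd⟩ := hq
    omega
  have hpow : ∀ a : F, ((quadraticChar F a : ℤ) : F) = a ^ ((q - 1) / 2) := by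
    intro a
    rw [quadraticChar_eq_pow_of_char_ne_two' hchar]
    congr 1
    obtain ⟨d, hd⟩ := hq
    omega
  have hind : ∀ e : ℤ, e = 1 ∨ e = -1 → ∀ a : F, e * quadraticChar F (g.eval a) ≤
      2 * (if g.eval a = 0 ∨ g.eval a ^ ((q - 1) / 2) = (e : F) then 1 else 0) - 1 := by
    intro e he a
    by_cases ha : g.eval a = 0
    · simp [ha]
    by_cases hc : quadraticChar F (g.eval a) = e
    · have : g.eval a ^ ((q - 1) / 2) = (e : F) := by rw [← hpow, hc]
      rw [if_pos (Or.inr this), hc]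
      rcases he with rfl | rfl <;> norm_num
    · have : quadraticChar F (g.eval a) = -e := by
        rcases quadraticChar_dichotomy ha with h | h <;> rcases he with rfl | rfl <;>
          simp_all
      rw [this]
      have h1 : e * -e = -1 := by rcases he with rfl | rfl <;> norm_num
      rw [h1]
      split_ifs <;> norm_num
  have hfin : ∀ e : ℤ, e = 1 ∨ e = -1 →
      (e : ℝ) * ((∑ a : F, quadraticChar F (g.eval a) : ℤ) : ℝ) ≤
      2 * h.natDegree * √(q : ℝ) + 4 * √(q : ℝ) := by
    intro e he
    have hb := stepanov_bound hq g (by rw [hgm]; exact hm) hg0 hgns (e : F) (by rw [hgm]; exact hgt)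
    rw [hgm, ← hqdef] at hb
    refine le_trans ?_ hb
    have h1 : e * ∑ a : F, quadraticChar F (g.eval a) ≤ 2 * ((Finset.univ.filter fun a : F =>
        g.eval a = 0 ∨ g.eval a ^ ((q - 1) / 2) = (e : F)).card : ℤ) - q := by
      rw [Finset.mul_sum]
      refine (Finset.sum_le_sum fun a _ => hind e he a).trans ?_
      rw [Finset.sum_sub_distrib, ← Finset.mul_sum, Finset.sum_boole]
      simp [hqdef]
    exact_mod_cast h1
  rw [hsum, abs_le]
  have h1 := hfin 1 (Or.inl rfl)
  have h2 := hfin (-1) (Or.inr rfl)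
  push_cast at h1 h2 ⊢
  constructor <;> linarith

end Weil

/-! ### The Möbius function and discriminants -/

section Pellet

variable {F : Type*} [Field F]

/-- If the roots of the monic `P` are listed by an injective `v`, then `Res(P, P')` is, up to an
explicit sign, the square of the Vandermonde determinant of `v`. -/
lemma resultant_derivative_eq_vandermonde {L : Type*} [Field L] (P : F[X]) (ι : F →+* L)
    (hm : P.Monic) {d : ℕ} (hd : P.natDegree = d) (v : Fin d → L) (hinj : Function.Injective v)
    (hroot : ∀ i, (P.map ι).eval (v i) = 0) :
    ι (resultant P (derivative P)) = (-1) ^ (d.choose 2) * (Matrix.vandermonde v).det ^ 2 := by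
  have hfac : P.map ι = Lagrange.nodal Finset.univ v := by
    refine eq_of_monic_of_dvd_of_natDegree_le (Lagrange.nodal_monic) (hm.map _) ?_ ?_
    · refine Finset.prod_dvd_of_coprime ?_ ?_
      · intro i _ j _ hij
        exact isCoprime_X_sub_C_of_isUnit_sub (sub_ne_zero.2 (hinj.ne hij)).isUnit
      · intro i _
        exact dvd_iff_isRoot.2 (hroot i)
    · rw [natDegree_map, Lagrange.natDegree_nodal]; simp [hd]
  have hroots : (P.map ι).roots = Finset.univ.val.map v := by
    rw [hfac, Lagrange.nodal]
    have h := roots_multiset_prod_X_sub_C (Finset.univ.val.map v)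
    rw [Multiset.map_map] at h
    exact h
  have hsplit : (P.map ι).Splits := by
    rw [splits_iff_card_roots, hroots, natDegree_map]; simp [hd]
  rw [← resultant_map_map]
  have h1 := resultant_eq_prod_eval (P.map ι)
    ((derivative P).map ι) (derivative P).natDegree natDegree_map_le hsplit
  rw [natDegree_map] at h1
  rw [h1, (hm.map _).leadingCoeff, one_pow, one_mul, hroots, Multiset.map_map]
  change ∏ i, _ = _
  have h2 : ∀ i ∈ (Finset.univ : Finset (Fin d)),
      eval (v i) ((derivative P).map ι) = ∏ j ∈ {i}ᶜ, (v i - v j) := by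
    intro i hi
    rw [← derivative_map, hfac, Lagrange.eval_nodal_derivative_eval_node_eq hi,
      Lagrange.eval_nodal, Finset.compl_eq_univ_sdiff, Finset.sdiff_singleton_eq_erase]
  simp only [Function.comp_apply]
  rw [Finset.prod_congr rfl h2,
    ← Finset.prod_prod_Ioi_mul_eq_prod_prod_off_diag (fun j i => v i - v j)]
  have h3 : ∀ i j, (v i - v j) * (v j - v i) = (-1) * (v j - v i) ^ 2 := by intros; ring
  simp only [h3, Finset.prod_mul_distrib, Finset.prod_const, Fin.card_Ioi, Finset.prod_pow]
  rw [Matrix.det_vandermonde v]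
  congr 1
  rw [Finset.prod_pow_eq_pow_sum, Nat.choose_two_right, ← Finset.sum_range_id,
    ← Finset.sum_range_reflect, Finset.sum_range]

variable [Fintype F]

/-- The roots of an irreducible polynomial of degree `d` over a finite field form a `d`-cycle
under Frobenius. -/
lemma exists_roots_cycle {L : Type*} [Field L] [Fintype L] [Algebra F L] (β : L) (P : F[X]) (m : ℕ)
    (hfr : Module.finrank F L = m + 1)
    (hgen : ∀ f g : L →ₐ[F] L, f β = g β → f = g) (h0 : aeval β P = 0) :
    ∃ v : Fin (m + 1) → L, Function.Injective v ∧
      (∀ i, v i ^ Fintype.card F = v (finRotate (m + 1) i)) ∧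
      ∀ i, (P.map (algebraMap F L)).eval (v i) = 0 := by
  have hcard : Fintype.card L = Fintype.card F ^ (m + 1) := by
    rw [Module.card_eq_pow_finrank (K := F), hfr]
  let q := Fintype.card F
  let φ := FiniteField.frobeniusAlgHom F L
  have hφi : ∀ (i : ℕ) (x : L), (φ ^ i) x = x ^ q ^ i := by
    intro i x
    rw [AlgHom.coe_pow]
    exact congrFun (pow_iterate q i) x
  refine ⟨fun i => β ^ q ^ (i : ℕ), ?_, ?_, ?_⟩
  · intro i j hij
    have h1 : φ ^ (i : ℕ) = φ ^ (j : ℕ) := by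
      refine hgen _ _ ?_
      rw [hφi, hφi]; exact hij
    have hb := (FiniteField.bijective_frobeniusAlgHom_pow F L).injective
    have := @hb ⟨i, by rw [hfr]; exact i.2⟩ ⟨j, by rw [hfr]; exact j.2⟩ h1
    simpa [Fin.ext_iff] using this
  · intro i
    rw [finRotate_apply]
    simp only [← pow_mul, ← pow_succ, Fin.val_add_one]
    split_ifs with h
    · rw [h]
      simp only [Fin.val_last, pow_zero, pow_one]
      rw [← pow_succ, ← hcard]; exact FiniteField.pow_card β
    · rw [← pow_succ]
  · intro i
    change (P.map (algebraMap F L)).eval (β ^ q ^ (i : ℕ)) = 0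
    rw [← hφi, eval_map_algebraMap, aeval_algHom_apply, h0, map_zero]

/-- For an irreducible `P` of degree `d`, the product of differences `δ` of its roots
`β, β^q, …` is multiplied by the sign `(-1)^(d-1)` of a `d`-cycle under Frobenius, so that
`Res(P, P') = (-1)^(d choose 2) δ²` is controlled by whether `δ` lies in the base field. -/
lemma exists_sqrt_discr.{u} {F : Type u} [Field F] [Fintype F] (P : F[X])
    (hP : Irreducible P) (hm : P.Monic) :
    ∃ (L : Type u) (_ : Field L) (φ : F →+* L) (δ : L), δ ≠ 0 ∧
      φ (resultant P (derivative P)) = (-1) ^ (P.natDegree.choose 2) * δ ^ 2 ∧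
      δ ^ Fintype.card F = (-1) ^ (P.natDegree - 1) * δ := by
  have : Fact (Irreducible P) := ⟨hP⟩
  have hP0 : P ≠ 0 := hP.ne_zero
  have : FiniteDimensional F (AdjoinRoot P) := (AdjoinRoot.powerBasis hP0).finite
  have : Finite (AdjoinRoot P) := Module.finite_of_finite F
  let _ : Fintype (AdjoinRoot P) := Fintype.ofFinite _
  have hfr : Module.finrank F (AdjoinRoot P) = P.natDegree := by
    rw [(AdjoinRoot.powerBasis hP0).finrank, AdjoinRoot.powerBasis_dim]
  obtain ⟨m, hdm⟩ : ∃ m, P.natDegree = m + 1 :=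
    ⟨P.natDegree - 1, by have := hP.natDegree_pos; omega⟩
  obtain ⟨v, hinj, hrot, hroot⟩ := exists_roots_cycle (AdjoinRoot.root P) P m (hfr.trans hdm)
    (fun f g h => AdjoinRoot.algHom_ext h) (AdjoinRoot.aeval_eq P ▸ AdjoinRoot.mk_self)
  refine ⟨AdjoinRoot P, inferInstance, algebraMap F _, (Matrix.vandermonde v).det,
    Matrix.det_vandermonde_ne_zero_iff.2 hinj, ?_, ?_⟩
  · have := resultant_derivative_eq_vandermonde P (algebraMap F (AdjoinRoot P)) hm hdm v hinj hroot
    rw [this, hdm]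
  · let φ : AdjoinRoot P →+* AdjoinRoot P :=
      (FiniteField.frobeniusAlgHom F (AdjoinRoot P) : AdjoinRoot P →+* AdjoinRoot P)
    have h1 : ∀ x, x ^ Fintype.card F = φ x := fun x => rfl
    have h2 : φ.mapMatrix (Matrix.vandermonde v) =
        (Matrix.vandermonde v).submatrix (finRotate (m + 1)) id := by
      ext i j
      simp only [RingHom.mapMatrix_apply, Matrix.map_apply, Matrix.vandermonde_apply, map_pow,
        Matrix.submatrix_apply, id]
      rw [← hrot, h1]
    rw [h1, RingHom.map_det, h2, Matrix.det_permute, sign_finRotate, hdm]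
    simp

/-- Stickelberger's theorem for an irreducible polynomial. -/
lemma quadraticChar_discr_irreducible (hq : Odd (Fintype.card F)) (P : F[X]) (hP : Irreducible P)
    (hm : P.Monic) :
    quadraticChar F (resultant P (derivative P)) =
      quadraticChar F (-1) ^ (P.natDegree.choose 2) * (-1) ^ (P.natDegree - 1) := by
  have hchar : ringChar F ≠ 2 := fun h =>
    (Nat.not_even_iff_odd.2 hq) (FiniteField.even_card_iff_char_two.1 h |> Nat.even_iff.2)
  obtain ⟨L, _, φ, δ, hδ, h1, h2⟩ := exists_sqrt_discr P hP hm
  set D := resultant P (derivative P)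
  set c := P.natDegree.choose 2
  have hDa : φ ((-1) ^ c * D) = δ ^ 2 := by
    rw [map_mul, h1, map_pow, map_neg, map_one, ← mul_assoc, ← mul_pow]; simp
  have h3 : φ (((-1) ^ c * D) ^ (Fintype.card F / 2)) = (-1) ^ (P.natDegree - 1) := by
    rw [map_pow, hDa, ← pow_mul]
    have h4 : Fintype.card F = 2 * (Fintype.card F / 2) + 1 := by
      obtain ⟨k, hk⟩ := hq; omega
    rw [h4, pow_succ] at h2
    exact mul_right_cancel₀ hδ h2
  have h5 : ((quadraticChar F ((-1) ^ c * D) : ℤ) : F) = (((-1) ^ (P.natDegree - 1) : ℤ) : F) := by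
    rw [quadraticChar_eq_pow_of_char_ne_two' hchar]
    apply φ.injective
    rw [h3]; simp
  have hne : (1 : F) ≠ -1 := (Ring.neg_one_ne_one_of_char_ne_two hchar).symm
  have hne0 : (-1) ^ c * D ≠ 0 := by
    intro h; rw [h, map_zero] at hDa; exact pow_ne_zero 2 hδ hDa.symm
  have h6 : quadraticChar F ((-1) ^ c * D) = (-1) ^ (P.natDegree - 1) := by
    rcases quadraticChar_dichotomy hne0 with h | h <;>
    rcases neg_one_pow_eq_or ℤ (P.natDegree - 1) with h' | h' <;>
    rw [h, h'] at h5 ⊢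
    · exact absurd (by simpa using h5) hne
    · exact absurd (by simpa using h5.symm) hne
  rw [map_mul, map_pow] at h6
  have h7 : quadraticChar F (-1) ^ c * quadraticChar F (-1) ^ c = 1 := by
    rw [← mul_pow, ← sq, quadraticChar_sq_one (by simp), one_pow]
  rw [← h6, ← mul_assoc, h7, one_mul]

/-- Multiplicativity of discriminants: `Δ(PQ) = ± Δ(P) Δ(Q) Res(P, Q)²`. -/
lemma resultant_derivative_mul {F : Type*} [Field F] (P Q : F[X]) (hP : P.Monic) (hQ : Q.Monic) :
    resultant (P * Q) (derivative (P * Q)) =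
      (-1) ^ (P.natDegree * Q.natDegree) * resultant P (derivative P) *
        resultant Q (derivative Q) * resultant P Q ^ 2 := by
  have key : ∀ (A g : F[X]) (n : ℕ), A.Monic → g.natDegree ≤ n →
      resultant A g A.natDegree n = resultant A g := by
    intro A g n hA hg
    obtain ⟨k, rfl⟩ := Nat.exists_eq_add_of_le hg
    rw [resultant_add_right_deg _ _ _ _ _ le_rfl, coeff_natDegree, hA.leadingCoeff, one_pow,
      one_mul]
  have hmul : ∀ (A g h : F[X]), A.Monic → resultant A (g * h) = resultant A g * resultant A h := by
    intro A g h hA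
    rw [← resultant_mul_right _ _ _ _ le_rfl, key _ _ _ hA natDegree_mul_le]
  have hadd : ∀ (A g h : F[X]), A.Monic → resultant A (g + A * h) = resultant A g := by
    intro A g h hA
    set N := h.natDegree + A.natDegree + g.natDegree with hN
    have hb : (g + A * h).natDegree ≤ N := by
      refine natDegree_add_le_of_degree_le (by omega) (natDegree_mul_le.trans (by omega))
    rw [← key A _ N hA hb, resultant_add_mul_right _ _ _ _ _ (by omega) le_rfl,
      key A _ N hA (by omega)]
  have hb : (derivative (P * Q)).natDegree ≤ (derivative (P * Q)).natDegree := le_rfl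
  have h0 : (P * Q).natDegree = P.natDegree + Q.natDegree := hP.natDegree_mul hQ
  have h1 : resultant (P * Q) (derivative (P * Q)) =
      resultant P (derivative (P * Q)) * resultant Q (derivative (P * Q)) := by
    rw [← resultant_mul_left _ _ _ _ le_rfl, h0]
  have h2 : resultant P (derivative (P * Q)) = resultant P (derivative P) * resultant P Q := by
    rw [derivative_mul, hadd _ _ _ hP, hmul _ _ _ hP]
  have h3 : resultant Q (derivative (P * Q)) = resultant Q P * resultant Q (derivative Q) := by
    rw [derivative_mul, add_comm, mul_comm (derivative P), hadd _ _ _ hQ, hmul _ _ _ hQ]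
  rw [h1, h2, h3, resultant_comm Q P, mul_comm Q.natDegree]
  ring

/-- **Stickelberger's theorem**: the parity of the number of irreducible factors of a squarefree
polynomial is determined by the quadratic character of its discriminant. -/
lemma quadraticChar_discr (hq : Odd (Fintype.card F)) (G : F[X]) (hm : G.Monic)
    (hsq : Squarefree G) :
    quadraticChar F (resultant G (derivative G)) =
      quadraticChar F (-1) ^ (G.natDegree.choose 2) * (-1) ^ G.natDegree *
        (-1) ^ (UniqueFactorizationMonoid.normalizedFactors G).card := by
  induction hn : G.natDegree using Nat.strong_induction_on generalizing G with
  | _ n ih =>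
  subst hn
  by_cases hu : IsUnit G
  · rw [hm.isUnit_iff] at hu
    subst hu
    simp [UniqueFactorizationMonoid.normalizedFactors_one]
  obtain ⟨P, hPm, hP, Q, rfl⟩ := exists_monic_irreducible_factor G hu
  have hQm : Q.Monic := hPm.of_mul_monic_left hm
  have hdeg := hPm.natDegree_mul hQm
  have hPpos := hP.natDegree_pos
  have hcop : IsRelPrime P Q := (squarefree_mul_iff.1 hsq).1
  have hcop' : IsCoprime P Q := hcop.isCoprime
  have hI := ih Q.natDegree (by omega) Q hQm (squarefree_mul_iff.1 hsq).2.2 rfl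
  have hI' := quadraticChar_discr_irreducible hq P hP hPm
  have hr : quadraticChar F (resultant P Q) ^ 2 = 1 :=
    quadraticChar_sq_one (resultant_ne_zero _ _ hcop')
  rw [resultant_derivative_mul P Q hPm hQm, map_mul, map_mul, map_mul, map_pow, map_pow, hr, hI,
    hI', hdeg, UniqueFactorizationMonoid.normalizedFactors_mul hP.ne_zero hQm.ne_zero,
    Multiset.card_add, UniqueFactorizationMonoid.normalizedFactors_irreducible hP,
    Multiset.card_singleton]
  have hc : (P.natDegree + Q.natDegree).choose 2 =
      P.natDegree * Q.natDegree + P.natDegree.choose 2 + Q.natDegree.choose 2 := by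
    rw [Nat.add_choose_eq, Finset.Nat.antidiagonal_succ]
    simp [Finset.Nat.antidiagonal_succ]; ring
  obtain ⟨p, hp⟩ : ∃ p, P.natDegree = p + 1 := ⟨P.natDegree - 1, by omega⟩
  rw [hc, hp, Nat.add_sub_cancel]
  simp only [pow_add, pow_one]
  ring

/-- For monic `G` of degree `n` with `deg G' = e`, the Möbius function is, up to a sign depending
only on `n`, `e` and the field, the quadratic character of the resultant of `G'` and `G`. -/
lemma polyMoebius_eq (hq : Odd (Fintype.card F)) (n e : ℕ) :
    ∃ σ : ℤ, σ ^ 2 = 1 ∧ ∀ G : F[X], G.Monic → G.natDegree = n → (derivative G).natDegree = e →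
      polyMoebius G = σ * quadraticChar F (resultant (derivative G) G e n) := by
  have hone : quadraticChar F (-1) ^ 2 = 1 := quadraticChar_sq_one (by simp)
  refine ⟨quadraticChar F (-1) ^ (e * n) * (quadraticChar F (-1) ^ (n.choose 2) * (-1) ^ n), ?_, ?_⟩
  · simp only [mul_pow, ← pow_mul]
    simp only [mul_comm _ 2]
    simp only [pow_mul, hone]; simp
  rintro G hm rfl rfl
  rw [resultant_comm, map_mul, map_pow, polyMoebius]
  split_ifs with hsq
  · rw [quadraticChar_discr hq G hm hsq]
    generalize (UniqueFactorizationMonoid.normalizedFactors G).card = s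
    generalize (derivative G).natDegree * G.natDegree = a
    generalize G.natDegree.choose 2 = b
    have e1 : ∀ k, quadraticChar F (-1) ^ k * quadraticChar F (-1) ^ k = 1 := by
      intro k; rw [← pow_add, ← two_mul, pow_mul, hone, one_pow]
    have e2 : ((-1 : ℤ)) ^ G.natDegree * (-1) ^ G.natDegree = 1 := by
      rw [← mul_pow]; simp
    linear_combination (- (-1 : ℤ) ^ s) * (quadraticChar F (-1) ^ b * quadraticChar F (-1) ^ b) *
      (quadraticChar F (-1) ^ a * quadraticChar F (-1) ^ a) * e2 - (-1 : ℤ) ^ s *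
      (quadraticChar F (-1) ^ a * quadraticChar F (-1) ^ a) * e1 b - (-1 : ℤ) ^ s * e1 a
  · have : resultant G (derivative G) = 0 := by
      rw [resultant_eq_zero_iff]
      exact ⟨Or.inl hm.ne_zero, fun h => hsq (PerfectField.separable_iff_squarefree.1 h)⟩
    rw [this]; simp

end Pellet

/-! ### The resultant attached to a pencil of polynomials -/

section Weights

variable {R : Type*} [CommRing R]

/-- The bivariate polynomial `P` (outer variable `t`, inner variable `b`) has weighted degree at
most `d`, where `b` has weight `u` and `t` has weight `w`. The bound is an integer, so that a
negative bound forces `P = 0`. -/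
def WtLE (u w : ℕ) (d : ℤ) (P : R[X][X]) : Prop :=
  ∀ i j, (P.coeff i).coeff j ≠ 0 → (u * j + w * i : ℤ) ≤ d

variable {u w : ℕ} {d d' : ℤ} {P Q : R[X][X]}

lemma WtLE.mono (h : WtLE u w d P) (hd : d ≤ d') : WtLE u w d' P :=
  fun i j hij => (h i j hij).trans hd

lemma WtLE.zero : WtLE u w d (0 : R[X][X]) := fun i j h => absurd (by simp) h

lemma WtLE.C_C (c : R) : WtLE u w 0 (C (C c)) := by
  intro i j h
  rw [coeff_C] at h
  split_ifs at h with hi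
  · rw [coeff_C] at h
    split_ifs at h with hj
    · simp [hi, hj]
    · exact absurd rfl h
  · simp at h

lemma WtLE.C_X : WtLE u w u (C X : R[X][X]) := by
  intro i j h
  rw [coeff_C] at h
  split_ifs at h with hi
  · rw [coeff_X] at h
    split_ifs at h with hj
    · simp [hi, ← hj]
    · exact absurd rfl h
  · simp at h

lemma WtLE.X : WtLE u w w (X : R[X][X]) := by
  intro i j h
  rw [coeff_X] at h
  split_ifs at h with hi
  · rw [coeff_one] at h
    split_ifs at h with hj
    · simp [← hi, hj]
    · exact absurd rfl h
  · simp at h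

lemma WtLE.add (hP : WtLE u w d P) (hQ : WtLE u w d Q) : WtLE u w d (P + Q) := by
  intro i j h
  rw [coeff_add, coeff_add] at h
  by_cases h1 : (P.coeff i).coeff j = 0
  · exact hQ i j (fun h2 => h (by rw [h1, h2, add_zero]))
  · exact hP i j h1

lemma WtLE.neg (hP : WtLE u w d P) : WtLE u w d (-P) := by
  intro i j h
  exact hP i j (by simpa using h)

lemma WtLE.mul (hP : WtLE u w d P) (hQ : WtLE u w d' Q) : WtLE u w (d + d') (P * Q) := by
  intro i j h
  rw [coeff_mul, finsetSum_coeff] at h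
  obtain ⟨⟨a, b⟩, hab, h1⟩ := Finset.exists_ne_zero_of_sum_ne_zero h
  rw [coeff_mul] at h1
  obtain ⟨⟨a', b'⟩, hab', h2⟩ := Finset.exists_ne_zero_of_sum_ne_zero h1
  have h3 := hP a a' (left_ne_zero_of_mul h2)
  have h4 := hQ b b' (right_ne_zero_of_mul h2)
  rw [← Finset.HasAntidiagonal.mem_antidiagonal.1 hab,
    ← Finset.HasAntidiagonal.mem_antidiagonal.1 hab']
  dsimp only at *
  push_cast
  linarith

lemma WtLE.sum {ι : Type*} (s : Finset ι) (P : ι → R[X][X]) (h : ∀ i ∈ s, WtLE u w d (P i)) :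
    WtLE u w d (∑ i ∈ s, P i) :=
  Finset.sum_induction P (WtLE u w d) (fun _ _ => WtLE.add) WtLE.zero h

lemma WtLE.prod {ι : Type*} (s : Finset ι) (P : ι → R[X][X]) (d : ι → ℤ)
    (h : ∀ i ∈ s, WtLE u w (d i) (P i)) : WtLE u w (∑ i ∈ s, d i) (∏ i ∈ s, P i) := by
  induction s using Finset.induction_on with
  | empty => simpa using WtLE.C_C (u := u) (w := w) (1 : R)
  | insert a s ha ih =>
    rw [Finset.sum_insert ha, Finset.prod_insert ha]
    exact (h a (by simp)).mul (ih fun i hi => h i (by simp [hi]))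

/-- If the coefficients of `f` and `g` at `x^k` have weights at most `m - k` and `n - k`, then
`Res(f, g)` has weight at most `n m`. -/
lemma WtLE.resultant (f g : R[X][X][X]) (m n : ℕ)
    (hf : ∀ k ≤ m, WtLE u w (m - k) (f.coeff k)) (hg : ∀ k ≤ n, WtLE u w (n - k) (g.coeff k)) :
    WtLE u w (n * m) (resultant f g m n) := by
  let δ : Fin (m + n) → ℤ := fun j => (if (j : ℕ) < m then n else 0)
  have hent : ∀ i j : Fin (m + n), WtLE u w (δ j + (j : ℕ) - (i : ℕ)) (sylvester f g m n i j) := by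
    intro i j
    induction j using Fin.addCases with
    | left j =>
      simp only [sylvester, Matrix.of_apply, Fin.addCases_left]
      split_ifs with h
      · obtain ⟨h1, h2⟩ := h
        refine (hg ((i : ℕ) - (j : ℕ)) (by omega)).mono ?_
        simp only [δ, Fin.val_castAdd, j.2, if_true]
        push_cast [h1]; linarith
      · exact WtLE.zero
    | right j =>
      simp only [sylvester, Matrix.of_apply, Fin.addCases_right]
      split_ifs with h
      · obtain ⟨h1, h2⟩ := h
        refine (hf ((i : ℕ) - (j : ℕ)) (by omega)).mono ?_
        simp only [δ, Fin.val_natAdd]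
        push_cast [h1]; simp
      · exact WtLE.zero
  have hδ : ∑ j, δ j = n * m := by
    rw [Fin.sum_univ_add]
    simp [δ, mul_comm]
  rw [Polynomial.resultant, Matrix.det_apply]
  refine WtLE.sum _ _ fun σ _ => ?_
  have h1 : WtLE u w (n * m) (∏ i, sylvester f g m n (σ i) i) := by
    refine (WtLE.prod Finset.univ _ (fun i => δ i + (i : ℕ) - (σ i : ℕ)) fun i _ => hent _ _).mono ?_
    rw [Finset.sum_sub_distrib, Finset.sum_add_distrib, hδ,
      Equiv.sum_comp σ (fun i => ((i : ℕ) : ℤ))]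
    linarith
  rcases Int.units_eq_one_or (Equiv.Perm.sign σ) with h | h <;> rw [h]
  · simpa using h1
  · simpa using h1.neg

end Weights

section Pencil

variable {F : Type*} [Field F]

/-- The resultant `H_f(b, t) = Res_x(f'(x) + b, f(x) + b x + t)`, as a polynomial in the outer
variable `t` over the ring of polynomials in the inner variable `b`. -/
def pencilRes (f : F[X]) : F[X][X] :=
  resultant ((derivative f).map (C.comp C) + C (C X))
    (f.map (C.comp C) + C (C X) * X + C X) (derivative f).natDegree f.natDegree

/-- Specialising both variables of `pencilRes`. -/
lemma eval_pencilRes (f : F[X]) (β τ : F) :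
    ((pencilRes f).map (evalRingHom β)).eval τ =
      resultant (derivative f + C β) (f + C β * X + C τ) (derivative f).natDegree f.natDegree := by
  have h1 : ((pencilRes f).map (evalRingHom β)).eval τ =
      eval₂RingHom (evalRingHom β) τ (pencilRes f) := by
    rw [coe_eval₂RingHom, eval_map]
  rw [h1, pencilRes, ← resultant_map_map]
  have h2 : (eval₂RingHom (evalRingHom β) τ).comp (C.comp C) = RingHom.id F := by
    ext; simp
  have h3 : ((derivative f).map (C.comp C) + C (C X) : F[X][X][X]).map
      (eval₂RingHom (evalRingHom β) τ) = derivative f + C β := by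
    simp only [Polynomial.map_add, map_map, h2, map_C, Polynomial.map_id]
    simp
  have h4 : (f.map (C.comp C) + C (C X) * X + C X : F[X][X][X]).map
      (eval₂RingHom (evalRingHom β) τ) = f + C β * X + C τ := by
    simp only [Polynomial.map_add, Polynomial.map_mul, map_map, h2, map_C, map_X, Polynomial.map_id]
    simp
  rw [h3, h4]

/-- Over an extension where `f' + β` splits, `H_f(β, t) = lc(f')^n ∏ (t + f(ρ) + βρ)` over the
roots `ρ` of `f' + β`. -/
lemma map_pencilRes {K : Type*} [Field K] (f : F[X]) (ι : F →+* K) (β : K)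
    (he : 1 ≤ (derivative f).natDegree)
    (hs : ((derivative f).map ι + C β).Splits) (hn : 1 < f.natDegree) :
    (pencilRes f).map (eval₂RingHom ι β) = C ((ι (derivative f).leadingCoeff) ^ f.natDegree) *
      (((derivative f).map ι + C β).roots.map
        fun ρ => X - C (-((f.map ι).eval ρ + β * ρ))).prod := by
  set g := (derivative f).map ι + C β with hg
  have hgd : g.natDegree = (derivative f).natDegree := by rw [hg, natDegree_add_C, natDegree_map]
  have hlc : g.leadingCoeff = ι (derivative f).leadingCoeff := by
    rw [leadingCoeff, hgd, hg, coeff_add, coeff_C_of_ne_zero (by omega), add_zero, coeff_map]; rfl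
  have h1 : (pencilRes f).map (eval₂RingHom ι β) =
      mapRingHom (eval₂RingHom ι β) (pencilRes f) := rfl
  have h2 : (mapRingHom (eval₂RingHom ι β)).comp (C.comp C) = (C : K →+* K[X]).comp ι := by
    ext; simp
  have h3 : (((derivative f).map (C.comp C) + C (C X)) : F[X][X][X]).map
      (mapRingHom (eval₂RingHom ι β)) = g.map C := by
    rw [hg]
    simp only [Polynomial.map_add, map_map, h2, map_C]
    simp
  have h4 := resultant_eq_prod_eval (g.map C)
    ((f.map (C.comp C) + C (C X) * X + C X : F[X][X][X]).map (mapRingHom (eval₂RingHom ι β)))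
    f.natDegree (by
      refine natDegree_map_le.trans ?_
      refine natDegree_add_le_of_degree_le (natDegree_add_le_of_degree_le natDegree_map_le ?_) ?_
      · exact (natDegree_C_mul_le _ _).trans (natDegree_X_le.trans hn.le)
      · rw [natDegree_C]; omega) (hs.map C)
  rw [natDegree_map_eq_of_injective C_injective, hgd] at h4
  rw [h1, pencilRes, ← resultant_map_map, h3, h4,
    leadingCoeff_map_of_injective C_injective, hlc, hs.roots_map, Multiset.map_map, C_pow]
  congr 2
  refine Multiset.map_congr rfl fun ρ _ => ?_
  simp only [Function.comp_apply, Polynomial.map_add, map_map, h2, Polynomial.map_mul, map_C, map_X,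
    eval_add, eval_mul, eval_C, eval_X]
  rw [← map_map, eval_map, eval₂_at_apply]
  simp [eval_map]
  ring

lemma exists_isAlgClosed.{u} (F : Type u) [Field F] :
    ∃ (K : Type u) (_ : Field K) (_ : IsAlgClosed K) (ι : F[X] →+* K), Function.Injective ι :=
  ⟨AlgebraicClosure (FractionRing F[X]), inferInstance, inferInstance,
    (algebraMap (FractionRing F[X]) (AlgebraicClosure (FractionRing F[X]))).comp
      (algebraMap F[X] (FractionRing F[X])),
    (algebraMap (FractionRing F[X]) _).injective.comp
      (IsFractionRing.injective F[X] (FractionRing F[X]))⟩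

/-- `H_f` has degree `deg f'` in `t`, with a constant leading coefficient. -/
lemma natDegree_pencilRes (f : F[X]) (he : 1 ≤ (derivative f).natDegree) (hn : 1 < f.natDegree) :
    (pencilRes f).natDegree = (derivative f).natDegree ∧
    (pencilRes f).leadingCoeff = C ((derivative f).leadingCoeff ^ f.natDegree) := by
  obtain ⟨K, _, _, ι', hι⟩ := exists_isAlgClosed F
  have h1 : eval₂RingHom (ι'.comp C) (ι' X) = ι' := by
    ext <;> simp
  have h2 := map_pencilRes f (ι'.comp C) (ι' X) he (IsAlgClosed.splits _) hn
  rw [h1] at h2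
  set g := (derivative f).map (ι'.comp C) + C (ι' X) with hg
  have hgd : g.natDegree = (derivative f).natDegree := by rw [hg, natDegree_add_C, natDegree_map]
  have hcard : g.roots.card = (derivative f).natDegree := by
    rw [← (IsAlgClosed.splits g).natDegree_eq_card_roots, hgd]
  set c := (ι'.comp C) (derivative f).leadingCoeff ^ f.natDegree with hc
  have hc0 : c ≠ 0 := by
    refine pow_ne_zero _ ?_
    rw [_root_.map_ne_zero, leadingCoeff_ne_zero]
    intro h; rw [h] at he; simp at he
  set Pi0 := (g.roots.map fun ρ => X - C (-((f.map (ι'.comp C)).eval ρ + ι' X * ρ))).prod with hPi0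
  have hmon : Pi0.Monic := monic_multiset_prod_of_monic _ _ fun ρ _ => monic_X_sub_C _
  have hdeg : Pi0.natDegree = (derivative f).natDegree := by
    rw [hPi0, natDegree_multiset_prod_of_monic, Multiset.map_map]
    · simp only [Function.comp_def, natDegree_X_sub_C]
      simp [hcard]
    · intro p hp
      obtain ⟨ρ, -, rfl⟩ := Multiset.mem_map.1 hp
      exact monic_X_sub_C _
  constructor
  · rw [← natDegree_map_eq_of_injective hι, h2, natDegree_C_mul hc0, hdeg]
  · apply hι
    rw [← leadingCoeff_map_of_injective hι, h2, leadingCoeff_mul, leadingCoeff_C,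
      hmon.leadingCoeff, mul_one, hc, RingHom.comp_apply, ← map_pow, ← map_pow]

/-- With `e = deg f'`, the weighted degree of `H_f` is at most `n e` when `b`, `t` have weights
`e`, `n`. Since `e ≥ 1`, this implies the same bound for the weights `1`, `n`. -/
lemma wtLE_pencilRes (f : F[X]) (he : 1 ≤ (derivative f).natDegree)
    (hen : (derivative f).natDegree < f.natDegree) :
    WtLE 1 f.natDegree (f.natDegree * (derivative f).natDegree) (pencilRes f) := by
  set e := (derivative f).natDegree
  set n := f.natDegree
  have h : WtLE e n (n * e) (pencilRes f) := by
    refine WtLE.resultant _ _ e n ?_ ?_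
    · intro k hk
      rw [coeff_add, coeff_map]
      refine WtLE.add ((WtLE.C_C _).mono (by simpa using hk)) ?_
      rw [coeff_C]
      split_ifs with h
      · exact WtLE.C_X.mono (by simp [h])
      · exact WtLE.zero
    · intro k hk
      rw [coeff_add, coeff_add, coeff_map]
      refine WtLE.add (WtLE.add ((WtLE.C_C _).mono (by simpa using hk)) ?_) ?_
      · rw [coeff_C_mul_X]
        split_ifs with h
        · refine WtLE.C_X.mono ?_
          rw [h]; push_cast; omega
        · exact WtLE.zero
      · rw [coeff_C]
        split_ifs with h
        · exact WtLE.X.mono (by simp [h])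
        · exact WtLE.zero
  intro i j hij
  have h1 := h i j hij
  have h2 : (1 : ℤ) ≤ e := by exact_mod_cast he
  have h3 : (e : ℤ) * j ≤ n * (e - i) := by linarith
  have h4 : (j : ℤ) ≤ e * j := by nlinarith
  push_cast
  linarith

end Pencil

/-! ### Tangent lines at the generic point -/

section Generic

variable {F : Type*} [Field F] {K : Type*} [Field K]

/-- The evaluation kernel of a point `ρ` in `F[X][Y]` is generated, up to denominators in `F[X]`,
by a single polynomial. -/
lemma exists_generator (ι : F[X] →+* K) (hι : Function.Injective ι) (ρ : K) :
    ∃ m : F[X][X], eval₂ ι ρ m = 0 ∧ ∀ B : F[X][X], eval₂ ι ρ B = 0 →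
      ∃ (d : F[X]) (u : F[X][X]), d ≠ 0 ∧ C d * B = m * u := by
  let _ : Algebra F[X] K := ι.toAlgebra
  have : FaithfulSMul F[X] K := (faithfulSMul_iff_algebraMap_injective _ _).2 hι
  let _ : Algebra (FractionRing F[X]) K := FractionRing.liftAlgebra F[X] K
  have : IsScalarTower F[X] (FractionRing F[X]) K := FractionRing.isScalarTower_liftAlgebra _ _
  have hae : ∀ B : F[X][X], eval₂ ι ρ B =
      aeval ρ (B.map (algebraMap F[X] (FractionRing F[X]))) := by
    intro B
    rw [aeval_map_algebraMap]; rfl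
  have hinj : Function.Injective (algebraMap F[X] (FractionRing F[X])) :=
    IsFractionRing.injective _ _
  have hclear : ∀ p : (FractionRing F[X])[X], ∃ (d : F[X]) (u : F[X][X]), d ≠ 0 ∧
      u.map (algebraMap F[X] (FractionRing F[X])) =
        C (algebraMap F[X] (FractionRing F[X]) d) * p := by
    intro p
    obtain ⟨b, hb, h⟩ := IsLocalization.integerNormalization_spec (nonZeroDivisors F[X]) p
    exact ⟨b, _, nonZeroDivisors.ne_zero hb, by rw [h, ← algebraMap_smul (FractionRing F[X]) b p,
      smul_eq_C_mul]⟩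
  obtain ⟨d₁, m, hd₁, hm⟩ := hclear (minpoly (FractionRing F[X]) ρ)
  refine ⟨m, ?_, ?_⟩
  · rw [hae, hm, map_mul, minpoly.aeval, mul_zero]
  · intro B hB
    rw [hae] at hB
    obtain ⟨v, hv⟩ := minpoly.dvd _ _ hB
    obtain ⟨d₂, u, hd₂, hu⟩ := hclear v
    refine ⟨d₁ * d₂, u, mul_ne_zero hd₁ hd₂, ?_⟩
    apply map_injective _ hinj
    rw [Polynomial.map_mul, Polynomial.map_mul, map_C, hm, hu, hv, map_mul, C_mul]
    ring

/-- Two tangent lines, with the same slope, to the graphs of `f` and `g`, one at the generic point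
`ξ = ι X` for `g` and the other at `ρ` for `f`, coincide only if `ρ = ξ`. The reason is that
differentiating the relation `f(ρ) - ρ g'(ξ) = g(ξ) - ξ g'(ξ)` with respect to `ξ` gives
`ρ g''(ξ) = ξ g''(ξ)`; the hypothesis `f'' ≠ 0` makes `ρ` separable over `F(ξ)`. -/
lemma eq_generic_of_tangent (ι : F[X] →+* K) (hι : Function.Injective ι) (f g : F[X])
    (hf : derivative (derivative f) ≠ 0) (hg : derivative (derivative g) ≠ 0) (ρ : K)
    (h1 : eval₂ (ι.comp C) ρ (derivative f) = ι (derivative g))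
    (h2 : eval₂ (ι.comp C) ρ f - ρ * ι (derivative g) = ι g - ι X * ι (derivative g)) :
    ρ = ι X := by
  -- `ρ` is transcendental over `F`, hence is not a root of `f''`
  have hf2 : eval₂ (ι.comp C) ρ (derivative (derivative f)) ≠ 0 := by
    intro h0
    let _ : Algebra F K := (ι.comp C).toAlgebra
    have halg : IsAlgebraic F ρ := ⟨_, hf, h0⟩
    have hmem : aeval ρ (derivative f) ∈ integralClosure F K := by
      have := Subalgebra.aeval_coe (integralClosure F K) ⟨ρ, halg.isIntegral⟩ (derivative f)
      rw [this]
      exact Subtype.property _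
    have hx : aeval (ι X) (derivative g) = ι (derivative g) := by
      change eval₂ (ι.comp C) (ι X) (derivative g) = _
      rw [← hom_eval₂, eval₂_C_X]
    have h3 : IsAlgebraic F (aeval (ι X) (derivative g)) := by
      rw [hx, ← h1]
      exact IsIntegral.isAlgebraic hmem
    have h4 : IsAlgebraic F (ι X) := by
      refine IsAlgebraic.of_aeval (derivative g) ?_ ?_ h3
      · intro h
        rw [natDegree_eq_zero] at h
        obtain ⟨c, hc⟩ := h
        rw [← hc] at hg; simp at hg
      · rw [mem_nonZeroDivisors_iff_ne_zero, leadingCoeff_ne_zero]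
        intro h; rw [h] at hg; simp at hg
    obtain ⟨p, hp, hp0⟩ := h4
    change eval₂ (ι.comp C) (ι X) p = 0 at hp0
    rw [← hom_eval₂, eval₂_C_X] at hp0
    exact hp ((map_eq_zero_iff ι hι).1 hp0)
  obtain ⟨m, hm, hgen⟩ := exists_generator ι hι ρ
  let A : F[X][X] := (derivative f).map C - C (derivative g)
  let B : F[X][X] := f.map C - X * C (derivative g) - C (g - X * derivative g)
  have hA : eval₂ ι ρ A = 0 := by
    simp only [A, eval₂_sub, eval₂_map, eval₂_C]
    rw [h1, sub_self]
  have hB : eval₂ ι ρ B = 0 := by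
    simp only [B, eval₂_sub, eval₂_map, eval₂_C, eval₂_mul, eval₂_X, map_sub, map_mul]
    rw [h2, sub_self]
  have hdB : derivative B = A := by
    simp [A, B, derivative_map]
  have hdA : derivative A = (derivative (derivative f)).map C := by
    simp [A, derivative_map]
  -- `m` is separable at `ρ`
  obtain ⟨d, u, hd, hdu⟩ := hgen A hA
  have hmder : eval₂ ι ρ (derivative m) ≠ 0 := by
    intro h0
    have h3 := congrArg (fun p => eval₂ ι ρ (derivative p)) hdu
    simp only [derivative_mul, derivative_C, zero_mul, zero_add, eval₂_mul, eval₂_add, hm, h0,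
      hdA, eval₂_C, eval₂_map, mul_eq_zero] at h3
    rcases h3 with h3 | h3
    · exact hd ((map_eq_zero_iff ι hι).1 h3)
    · exact hf2 h3
  obtain ⟨d, u, hd, hdu⟩ := hgen B hB
  have hu : eval₂ ι ρ u = 0 := by
    have h3 := congrArg (fun p => eval₂ ι ρ (derivative p)) hdu
    simp only [derivative_mul, derivative_C, zero_mul, zero_add, eval₂_mul, eval₂_add, hm, 
      hdB, hA, mul_zero, add_zero] at h3
    exact (mul_eq_zero.1 h3.symm).resolve_left hmder
  -- the derivation `∂/∂X` acting on coefficients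
  let D : F[X][X] → F[X][X] := fun p => Bivariate.swap (derivative (Bivariate.swap p))
  have hDmul : ∀ p q, D (p * q) = D p * q + p * D q := by
    intro p q
    simp only [D, map_mul, derivative_mul, map_add, Bivariate.swap_swap_apply]
  have hDB : eval₂ ι ρ (D B) = 0 := by
    have h3 := congrArg (fun p => eval₂ ι ρ (D p)) hdu
    simp only [hDmul, eval₂_add, eval₂_mul, hm, hu, hB, mul_zero, zero_mul, zero_add,
      mul_eq_zero, eval₂_C] at h3
    exact h3.resolve_left fun h => hd ((map_eq_zero_iff ι hι).1 h)
  have hDC : ∀ h : F[X], D (C h) = C (derivative h) := by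
    intro h
    simp [D, Bivariate.swap_C, derivative_map, Bivariate.swap_map_C]
  have hDB' : D B = C (X * derivative (derivative g)) - X * C (derivative (derivative g)) := by
    have e1 : D B = D (f.map C) - D (X * C (derivative g)) - D (C (g - X * derivative g)) := by
      simp [D, B]
    have e2 : D (f.map C) = 0 := by
      simp [D, Bivariate.swap_map_C]
    have e3 : D X = 0 := by
      simp [D, Bivariate.swap_Y]
    rw [e1, e2, hDmul, e3, hDC, hDC, derivative_sub, derivative_mul, derivative_X]
    simp only [C_sub, C_add, C_mul, C_1]
    ring
  rw [hDB', eval₂_sub, eval₂_mul, eval₂_C, eval₂_X, eval₂_C, map_mul, ← sub_mul] at hDB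
  rcases mul_eq_zero.1 hDB with h | h
  · exact (sub_eq_zero.1 h).symm
  · exact absurd ((map_eq_zero_iff ι hι).1 h) hg

end Generic

/-! ### The product of the resultants is not a square -/

section NonSquare

variable {F : Type*} [Field F] {J : Type*}

lemma natDegree_derivative_pos {f : F[X]} (hf : derivative (derivative f) ≠ 0) :
    1 ≤ (derivative f).natDegree := by
  rw [Nat.one_le_iff_ne_zero]
  intro h
  rw [natDegree_eq_zero] at h
  obtain ⟨c, hc⟩ := h
  rw [← hc] at hf; simp at hf

/-- For distinct `f_j` with `f_j'' ≠ 0`, the product of the `H_{f_j}` is not a square up to a factor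
in `F[b]`: at `b = -f_{j₀}'(ξ)`, with `ξ` generic, it has the simple root
`t = -(f_{j₀}(ξ) + b ξ)`. -/
lemma prod_pencilRes_ne (s : Finset J) (hs : s.Nonempty) (f : J → F[X]) (hinj : Set.InjOn f s)
    (h2 : ∀ j ∈ s, derivative (derivative (f j)) ≠ 0) (hn : ∀ j ∈ s, 1 < (f j).natDegree)
    (c : F[X]) (S : F[X][X]) : ∏ j ∈ s, pencilRes (f j) ≠ C c * S ^ 2 := by
  intro hH
  obtain ⟨K, _, _, ι, hι⟩ := exists_isAlgClosed F
  obtain ⟨j₀, hj₀⟩ := hs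
  set κ : F →+* K := ι.comp C with hκ
  have hξ : ∀ p : F[X], eval₂ κ (ι X) p = ι p := fun p => by
    rw [hκ, ← hom_eval₂, eval₂_C_X]
  set b : K := -ι (derivative (f j₀)) with hb
  set t₀ : K := -(ι (f j₀) + b * ι X) with ht₀
  let g : J → K[X] := fun j => (derivative (f j)).map κ + C b
  let v : J → K → K := fun j ρ => -(((f j).map κ).eval ρ + b * ρ)
  let cst : J → K := fun j => (κ (derivative (f j)).leadingCoeff) ^ (f j).natDegree
  have hmap : ∀ j ∈ s, (pencilRes (f j)).map (eval₂RingHom κ b) =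
      C (cst j) * (((g j).roots.map (v j)).map fun x => X - C x).prod := by
    intro j hj
    rw [map_pencilRes (f j) κ b (natDegree_derivative_pos (h2 j hj)) (IsAlgClosed.splits _)
      (hn j hj), Multiset.map_map]
    rfl
  have hcst : ∏ j ∈ s, cst j ≠ 0 := by
    refine Finset.prod_ne_zero_iff.2 fun j hj => pow_ne_zero _ ?_
    rw [_root_.map_ne_zero, leadingCoeff_ne_zero]
    intro h
    have := natDegree_derivative_pos (h2 j hj)
    rw [h] at this; simp at this
  have hg0 : ∀ j ∈ s, g j ≠ 0 := by
    intro j hj h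
    have h3 : (g j).natDegree = (derivative (f j)).natDegree := by
      simp only [g]; rw [natDegree_add_C, natDegree_map]
    have := natDegree_derivative_pos (h2 j hj)
    rw [h] at h3; simp at h3; omega
  have hroots : ((∏ j ∈ s, pencilRes (f j)).map (eval₂RingHom κ b)).roots =
      ∑ j ∈ s, (g j).roots.map (v j) := by
    rw [Polynomial.map_prod, Finset.prod_congr rfl hmap, Finset.prod_mul_distrib, ← map_prod,
      roots_C_mul _ hcst]
    have : ∏ j ∈ s, (((g j).roots.map (v j)).map fun x => X - C x).prod =
        ((∑ j ∈ s, (g j).roots.map (v j)).map fun x => X - C x).prod := by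
      rw [← Multiset.coe_mapAddMonoidHom, map_sum, Multiset.prod_sum]
    rw [this, roots_multiset_prod_X_sub_C]
  have heven : 2 ∣ ((∏ j ∈ s, pencilRes (f j)).map (eval₂RingHom κ b)).roots.count t₀ := by
    rw [hH, Polynomial.map_mul, Polynomial.map_pow, map_C]
    by_cases h0 : eval₂RingHom κ b c = 0
    · simp [h0]
    · rw [roots_C_mul _ h0, roots_pow, Multiset.count_nsmul]
      exact dvd_mul_right _ _
  -- the vanishing factors are those with `j = j₀` and `ρ = ξ`
  have hkey : ∀ j ∈ s, ∀ ρ ∈ (g j).roots, t₀ = v j ρ → ρ = ι X ∧ j = j₀ := by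
    intro j hj ρ hρ hv
    have h3 : eval₂ κ ρ (derivative (f j)) = ι (derivative (f j₀)) := by
      have := (mem_roots (hg0 j hj)).1 hρ
      simp only [g, IsRoot, eval_add, eval_map, eval_C, hb] at this
      linear_combination this
    have h4 : eval₂ κ ρ (f j) - ρ * ι (derivative (f j₀)) =
        ι (f j₀) - ι X * ι (derivative (f j₀)) := by
      simp only [v, ht₀, eval_map, hb] at hv
      linear_combination hv
    have h5 := eq_generic_of_tangent ι hι (f j) (f j₀) (h2 j hj) (h2 j₀ hj₀) ρ h3 h4
    refine ⟨h5, hinj hj hj₀ (hι ?_)⟩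
    rw [h5, hξ] at h4
    linear_combination h4
  have hone : ((∏ j ∈ s, pencilRes (f j)).map (eval₂RingHom κ b)).roots.count t₀ = 1 := by
    rw [hroots, Multiset.count_sum', Finset.sum_eq_single_of_mem j₀ hj₀]
    · rw [Multiset.count_map]
      have hfil : (g j₀).roots.filter (fun ρ => t₀ = v j₀ ρ) =
          (g j₀).roots.filter (fun ρ => ι X = ρ) := by
        refine Multiset.filter_congr fun ρ hρ => ⟨fun h => (hkey j₀ hj₀ ρ hρ h).1.symm, ?_⟩
        rintro rfl
        simp only [v, ht₀, eval_map, hξ]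
      rw [hfil, ← Multiset.countP_eq_card_filter]
      change Multiset.count (ι X) _ = 1
      rw [count_roots]
      have hroot : (g j₀).IsRoot (ι X) := by
        simp only [g, IsRoot, eval_add, eval_map, eval_C, hb, hξ]; ring
      refine le_antisymm ?_ ((rootMultiplicity_pos (hg0 j₀ hj₀)).2 hroot)
      by_contra! hlt
      rw [one_lt_rootMultiplicity_iff_isRoot (hg0 j₀ hj₀)] at hlt
      have := hlt.2
      simp only [g, IsRoot, derivative_add, derivative_C, add_zero, derivative_map, eval_map,
        hξ] at this
      exact h2 j₀ hj₀ ((map_eq_zero_iff ι hι).1 this)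
    · intro j hj hne
      rw [Multiset.count_eq_zero, Multiset.mem_map]
      rintro ⟨ρ, hρ, h⟩
      exact hne (hkey j hj ρ hρ h.symm).2
  rw [hone] at heven
  omega

end NonSquare

/-! ### Specialisations that become squares -/

section SquareSpecialisations

variable {F : Type*} [Field F]

/-- Integral square-root extraction: a monic `G` of degree `2k` agrees with the square of a monic
`S` in all degrees `≥ 2k - i`, with control of the weights of `S`. -/
lemma exists_sqrt_approx (h2 : (2 : F) ≠ 0) (n k : ℕ) (G : F[X][X]) (hG : G.Monic)
    (hdeg : G.natDegree = 2 * k) (hw : WtLE 1 n (n * (2 * k)) G) (i : ℕ) (hi : i ≤ k) :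
    ∃ S : F[X][X], S.Monic ∧ S.natDegree = k ∧ WtLE 1 n (n * k) S ∧
      (G - S ^ 2).degree < (2 * k - i : ℕ) := by
  induction i with
  | zero =>
    refine ⟨X ^ k, monic_X_pow k, natDegree_X_pow k, ?_, ?_⟩
    · intro i j h
      rw [coeff_X_pow] at h
      split_ifs at h with hik
      · rw [coeff_one] at h
        split_ifs at h with hj
        · subst hik; subst hj; push_cast; nlinarith
        · exact absurd rfl h
      · exact absurd (coeff_zero _) h
    · have h1 : (X ^ k : F[X][X]) ^ 2 = X ^ (2 * k) := by rw [← pow_mul, mul_comm]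
      have h3 : G.degree = (2 * k : ℕ) := by rw [degree_eq_natDegree hG.ne_zero, hdeg]
      rw [h1, Nat.sub_zero]
      have := degree_sub_lt_left (q := X ^ (2 * k)) (by rw [h3, degree_X_pow]) hG.ne_zero
        (by rw [hG.leadingCoeff, (monic_X_pow (R := F[X]) (2 * k)).leadingCoeff])
      rwa [h3] at this
  | succ i ih =>
    obtain ⟨S, hS, hSd, hSw, hlt⟩ := ih (by omega)
    set l := k - i - 1 with hl
    set D := G - S ^ 2 with hD
    have hDw : WtLE 1 n (n * (2 * k)) D := by
      have h3 : WtLE 1 n (n * (2 * k)) (-(S ^ 2)) := by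
        rw [pow_two]
        exact ((hSw.mul hSw).mono (by linarith)).neg
      rw [hD, sub_eq_add_neg]
      exact hw.add h3
    set a := D.coeff (l + k) with ha
    set T : F[X][X] := C (C (2 : F)⁻¹ * a) * X ^ l with hT
    have hTd : T.degree < k := (degree_C_mul_X_pow_le _ _).trans_lt (by
      exact_mod_cast (by omega : l < k))
    have hS' : S.degree = k := by rw [degree_eq_natDegree hS.ne_zero, hSd]
    have hTS : T.degree < S.degree := by rwa [hS']
    refine ⟨S + T, hS.add_of_left hTS, ?_, hSw.add ?_, ?_⟩
    · rw [natDegree_add_eq_left_of_degree_lt hTS, hSd]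
    · intro i' j h
      rw [hT, coeff_C_mul_X_pow] at h
      split_ifs at h with hil
      · rw [coeff_C_mul] at h
        have h4 := hDw (l + k) j (right_ne_zero_of_mul h)
        subst hil
        push_cast at h4 ⊢
        nlinarith
      · exact absurd (coeff_zero _) h
    · have hsq : G - (S + T) ^ 2 = D - C a * (X ^ l * S) - C (C (2 : F)⁻¹ * a) ^ 2 * X ^ (2 * l) := by
        have h5 : C (C (2 : F)⁻¹ * a) * 2 = C a := by
          have : (2 : F[X][X]) = C (C 2) :=
            (map_ofNat ((C : F[X] →+* F[X][X]).comp C) 2).symm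
          rw [this, ← C_mul, mul_right_comm, ← C_mul, inv_mul_cancel₀ h2, C_1, one_mul]
        rw [hD, hT, ← h5]; ring
      rw [hsq, degree_lt_iff_coeff_zero]
      intro m hm
      have hm1 : l + k ≤ m := by omega
      rw [coeff_sub, coeff_sub, coeff_C_mul, coeff_X_pow_mul', ← C_pow, coeff_C_mul_X_pow,
        if_pos (by omega), if_neg (by omega), sub_zero]
      rcases hm1.eq_or_lt with rfl | hm1
      · have : S.coeff (l + k - l) = 1 := by
          rw [Nat.add_sub_cancel_left, ← hSd]; exact hS
        rw [this, mul_one, ha, sub_self]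
      · rw [coeff_eq_zero_of_natDegree_lt (p := S) (by omega), mul_zero, sub_zero]
        refine coeff_eq_zero_of_degree_lt (hlt.trans_le ?_)
        exact_mod_cast (by omega)

/-- Only few specialisations of the inner variable turn a nonsquare `H` into a square up to a
constant. -/
lemma card_square_specialisations [Fintype F] (h2 : (2 : F) ≠ 0) (n M : ℕ) (H : F[X][X]) (c₀ : F)
    (hc₀ : c₀ ≠ 0) (hlc : H.leadingCoeff = C c₀) (hM : H.natDegree = M) (hw : WtLE 1 n (n * M) H)
    (hns : ∀ (c : F[X]) (S : F[X][X]), H ≠ C c * S ^ 2) :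
    (Finset.univ.filter fun β : F => ∃ (c : F) (u : F[X]),
      H.map (evalRingHom β) = C c * u ^ 2).card ≤ n * M := by
  set G : F[X][X] := C (C c₀⁻¹) * H with hG
  have hH : H = C (C c₀) * G := by
    rw [hG, ← mul_assoc, ← C_mul, ← C_mul, mul_inv_cancel₀ hc₀, C_1, C_1, one_mul]
  have hGm : G.Monic := by
    rw [Monic, hG, leadingCoeff_mul, leadingCoeff_C, hlc, ← C_mul, inv_mul_cancel₀ hc₀, C_1]
  have hGd : G.natDegree = M := by
    rw [hG, natDegree_C_mul (by simpa using hc₀), hM]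
  have hGw : WtLE 1 n (n * M) G := by
    simpa using (WtLE.C_C (u := 1) (w := n) c₀⁻¹).mul hw
  have hspec : ∀ β : F, (∃ (c : F) (u : F[X]), H.map (evalRingHom β) = C c * u ^ 2) →
      ∃ v : F[X], v.Monic ∧ G.map (evalRingHom β) = v ^ 2 := by
    rintro β ⟨c, u, h⟩
    have h3 : G.map (evalRingHom β) = C (c₀⁻¹ * c) * u ^ 2 := by
      rw [hG, Polynomial.map_mul, map_C, h, C_mul, mul_assoc]; simp
    have h4 : c₀⁻¹ * c * u.leadingCoeff ^ 2 = 1 := by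
      have := hGm.map (evalRingHom β)
      rw [h3, Monic, leadingCoeff_mul, leadingCoeff_C, leadingCoeff_pow] at this
      exact this
    have hu : u.leadingCoeff ≠ 0 := by
      intro h; rw [h] at h4; simp at h4
    refine ⟨C u.leadingCoeff⁻¹ * u, ?_, ?_⟩
    · rw [Monic, leadingCoeff_mul, leadingCoeff_C, inv_mul_cancel₀ hu]
    · rw [h3, mul_pow, ← C_pow]
      congr 2
      field_simp
      field_simp at h4
      linear_combination h4
  rcases Nat.even_or_odd' M with ⟨k, rfl | rfl⟩
  · obtain ⟨S, hS, hSd, hSw, hlt⟩ := exists_sqrt_approx h2 n k G hGm hGd (by exact_mod_cast hGw)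
      k le_rfl
    set D := G - S ^ 2 with hD
    have hD0 : D ≠ 0 := by
      intro h
      refine hns (C c₀) S ?_
      rw [hH, sub_eq_zero.1 h]
    have hDw : WtLE 1 n (n * (2 * k)) D := by
      have h3 : WtLE 1 n (n * (2 * k)) (-(S ^ 2)) := by
        rw [pow_two]
        exact ((hSw.mul hSw).mono (by linarith)).neg
      rw [hD, sub_eq_add_neg]
      exact WtLE.add (by exact_mod_cast hGw) h3
    have hz : ∀ β : F, (∃ (c : F) (u : F[X]), H.map (evalRingHom β) = C c * u ^ 2) →
        D.map (evalRingHom β) = 0 := by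
      intro β hβ
      obtain ⟨v, hv, hvG⟩ := hspec β hβ
      have hvd : v.natDegree = k := by
        have := hGm.natDegree_map (evalRingHom β)
        rw [hvG, natDegree_pow, hGd] at this
        omega
      have hSm := hS.map (evalRingHom β)
      have hSmd : (S.map (evalRingHom β)).natDegree = k := by rw [hS.natDegree_map, hSd]
      have hfac : D.map (evalRingHom β) =
          (v - S.map (evalRingHom β)) * (v + S.map (evalRingHom β)) := by
        rw [hD, Polynomial.map_sub, hvG, Polynomial.map_pow]; ring
      have hck : (v + S.map (evalRingHom β)).coeff k = 2 := by
        have e1 : v.coeff k = 1 := by rw [← hvd]; exact hv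
        have e2 : (S.map (evalRingHom β)).coeff k = 1 := by
          rw [Monic, leadingCoeff, hSmd] at hSm; exact hSm
        rw [coeff_add, e1, e2]; norm_num
      have hk : (k : WithBot ℕ) ≤ (v + S.map (evalRingHom β)).degree :=
        le_degree_of_ne_zero (by rw [hck]; exact h2)
      by_contra hne
      have h6 : (v - S.map (evalRingHom β)) ≠ 0 := fun h => hne (by rw [hfac, h, zero_mul])
      have h7 : (k : WithBot ℕ) ≤ (D.map (evalRingHom β)).degree := by
        rw [hfac, degree_mul]
        exact hk.trans (le_add_of_nonneg_left (zero_le_degree_iff.2 h6))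
      have h8 := h7.trans ((degree_map_le).trans hlt.le)
      have h9 := h7.trans_lt ((degree_map_le).trans_lt hlt)
      have : 2 * k - k = k := by omega
      rw [this] at h9
      exact lt_irrefl _ h9
    obtain ⟨i, hi⟩ : ∃ i, D.coeff i ≠ 0 := by
      by_contra! h
      exact hD0 (Polynomial.ext (by simpa using h))
    have hdi : (D.coeff i).natDegree ≤ n * (2 * k) := by
      have h3 := hDw i (D.coeff i).natDegree (by
        rw [coeff_natDegree, Ne, leadingCoeff_eq_zero]; exact hi)
      have : ((D.coeff i).natDegree : ℤ) ≤ (n * (2 * k) : ℕ) := by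
        push_cast at h3 ⊢
        nlinarith [Int.natCast_nonneg (n * i)]
      exact_mod_cast this
    refine le_trans ?_ hdi
    refine le_trans (Finset.card_le_card (t := (D.coeff i).roots.toFinset) ?_)
      ((Multiset.toFinset_card_le _).trans (card_roots' _))
    intro β hβ
    rw [Multiset.mem_toFinset, mem_roots hi]
    have h3 := congrArg (fun p => p.coeff i) (hz β (Finset.mem_filter.1 hβ).2)
    simpa [coeff_map] using h3
  · rw [Finset.filter_eq_empty_iff.2]
    · simp
    · intro β _ hβ
      obtain ⟨v, hv, hvG⟩ := hspec β hβ
      have := hGm.natDegree_map (evalRingHom β)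
      rw [hvG, natDegree_pow, hGd] at this
      omega

end SquareSpecialisations

/-! ### Summation over lines and planes of polynomials -/

section Assembly

variable {F : Type*} [Field F]

lemma two_ne_zero_of_odd_card [Fintype F] (hq : Odd (Fintype.card F)) : (2 : F) ≠ 0 :=
  Ring.two_ne_zero fun h =>
    (Nat.not_even_iff_odd.2 hq) (FiniteField.even_card_iff_char_two.1 h |> Nat.even_iff.2)

lemma abs_polyMoebius_le (g : F[X]) : |polyMoebius g| ≤ 1 := by
  unfold polyMoebius
  split_ifs <;> simp

lemma abs_prod_polyMoebius_le {J : Type*} (s : Finset J) (g : J → F[X]) (ε : J → ℕ) :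
    |∏ j ∈ s, polyMoebius (g j) ^ ε j| ≤ 1 := by
  rw [Finset.abs_prod]
  refine Finset.prod_le_one (fun _ _ => abs_nonneg _) fun j _ => ?_
  rw [abs_pow]
  exact pow_le_one₀ (abs_nonneg _) (abs_polyMoebius_le _)

variable [Fintype F]

lemma card_zeros_le (p : F[X]) (hp : p ≠ 0) :
    ((Finset.univ.filter fun a : F => p.eval a = 0).card) ≤ p.natDegree := by
  refine le_trans (Finset.card_le_card (t := p.roots.toFinset) ?_)
      ((Multiset.toFinset_card_le _).trans (card_roots' _))
  intro a ha
  rw [Multiset.mem_toFinset, mem_roots hp]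
  exact (Finset.mem_filter.1 ha).2

/-- A character sum twisted by squares of characters differs from the untwisted one only at the
zeros of the twisting polynomials. -/
lemma abs_sum_twisted_le {J : Type*} (hq : Odd (Fintype.card F)) (s : Finset J) (h : F[X])
    (p : J → F[X]) (hp : ∀ j ∈ s, p j ≠ 0) (hm : 1 ≤ h.natDegree)
    (hns : ∀ (c : F) (u : F[X]), h ≠ C c * u ^ 2) :
    |((∑ a : F, quadraticChar F (h.eval a) * ∏ j ∈ s, quadraticChar F ((p j).eval a) ^ 2 : ℤ) : ℝ)|
      ≤ 2 * h.natDegree * √(Fintype.card F) + 4 * √(Fintype.card F) +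
        ∑ j ∈ s, ((p j).natDegree : ℝ) := by
  have hchi : ∀ a : F, |quadraticChar F a| ≤ 1 := by
    intro a
    by_cases ha : a = 0
    · simp [ha]
    · rcases quadraticChar_dichotomy ha with h | h <;> simp [h]
  have hterm : ∀ a : F, |quadraticChar F (h.eval a) * ∏ j ∈ s, quadraticChar F ((p j).eval a) ^ 2
      - quadraticChar F (h.eval a)| ≤ ∑ j ∈ s, if (p j).eval a = 0 then 1 else 0 := by
    intro a
    by_cases hz : ∃ j ∈ s, (p j).eval a = 0
    · obtain ⟨j, hj, hj0⟩ := hz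
      have h0 : ∏ j ∈ s, quadraticChar F ((p j).eval a) ^ 2 = 0 :=
        Finset.prod_eq_zero hj (by simp [hj0])
      rw [h0, mul_zero, zero_sub, abs_neg]
      refine (hchi _).trans ?_
      refine le_trans ?_ (Finset.single_le_sum (f := fun j => if (p j).eval a = 0 then (1 : ℤ) else 0)
        (fun i _ => by split_ifs <;> simp) hj)
      simp [hj0]
    · push Not at hz
      have h1 : ∏ j ∈ s, quadraticChar F ((p j).eval a) ^ 2 = 1 :=
        Finset.prod_eq_one fun j hj => quadraticChar_sq_one (hz j hj)
      rw [h1, mul_one, sub_self, abs_zero]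
      exact Finset.sum_nonneg fun i _ => by split_ifs <;> simp
  have hdiff : |(∑ a : F, quadraticChar F (h.eval a) * ∏ j ∈ s, quadraticChar F ((p j).eval a) ^ 2)
      - ∑ a : F, quadraticChar F (h.eval a)| ≤ ∑ j ∈ s, ((p j).natDegree : ℤ) := by
    rw [← Finset.sum_sub_distrib]
    refine (Finset.abs_sum_le_sum_abs _ _).trans ((Finset.sum_le_sum fun a _ => hterm a).trans ?_)
    rw [Finset.sum_comm]
    refine Finset.sum_le_sum fun j hj => ?_
    rw [Finset.sum_boole]
    exact_mod_cast card_zeros_le _ (hp j hj)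
  have hdiff' : |((∑ a : F, quadraticChar F (h.eval a) *
      ∏ j ∈ s, quadraticChar F ((p j).eval a) ^ 2 : ℤ) : ℝ)
      - ((∑ a : F, quadraticChar F (h.eval a) : ℤ) : ℝ)| ≤ ∑ j ∈ s, ((p j).natDegree : ℝ) := by
    exact_mod_cast hdiff
  have hw := weil_bound hq h hm hns
  have := abs_sub_abs_le_abs_sub ((∑ a : F, quadraticChar F (h.eval a) *
      ∏ j ∈ s, quadraticChar F ((p j).eval a) ^ 2 : ℤ) : ℝ)
      ((∑ a : F, quadraticChar F (h.eval a) : ℤ) : ℝ)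
  linarith

/-- For every slope `β` at which the product of the `H_{f_j}` with `ε_j = 1` does not degenerate to
a square, the sum over the constant term has square-root cancellation. -/
lemma abs_line_sum_le (hq : Odd (Fintype.card F)) {n r : ℕ} (hn : 1 < n) (hr : 1 < r)
    (ε : Fin r → ℕ) (hε : ∀ j, ε j = 1 ∨ ε j = 2) (hε2 : ¬ ∀ j, ε j = 2)
    (f : Fin r → F[X]) (hf : ∀ j, (f j).Monic) (hfd : ∀ j, (f j).natDegree = n)
    (hf2 : ∀ j, derivative (derivative (f j)) ≠ 0) (β : F)
    (hns : ∀ (c : F) (u : F[X]), (∏ j with ε j = 1, pencilRes (f j)).map (evalRingHom β) ≠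
      C c * u ^ 2) :
    |((∑ τ : F, ∏ j, polyMoebius (f j + C β * X + C τ) ^ ε j : ℤ) : ℝ)| ≤
      2 * r * n * √(Fintype.card F) := by
  set s := Finset.univ.filter fun j => ε j = 1 with hs
  set t := Finset.univ.filter fun j => ¬ ε j = 1 with ht
  let p : Fin r → F[X] := fun j => (pencilRes (f j)).map (evalRingHom β)
  have he : ∀ j, 1 ≤ (derivative (f j)).natDegree := fun j => natDegree_derivative_pos (hf2 j)
  have hen : ∀ j, (derivative (f j)).natDegree ≤ n - 1 := fun j => by
    rw [← hfd j]; exact natDegree_derivative_le _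
  have hpd : ∀ j, (p j).natDegree = (derivative (f j)).natDegree := by
    intro j
    have h1 := natDegree_pencilRes (f j) (he j) (by rw [hfd]; exact hn)
    rw [← h1.1]
    refine natDegree_map_of_leadingCoeff_ne_zero _ ?_
    rw [h1.2, coe_evalRingHom, eval_C]
    refine pow_ne_zero _ ?_
    rw [leadingCoeff_ne_zero]
    intro h; have := he j; rw [h] at this; simp at this
  have hp0 : ∀ j, p j ≠ 0 := fun j h => by
    have h1 := hpd j; have h2 := he j; rw [h, natDegree_zero] at h1; omega
  choose σ hσ hσμ using fun j => polyMoebius_eq (F := F) hq n (derivative (f j)).natDegree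
  have hμ : ∀ j τ, polyMoebius (f j + C β * X + C τ) = σ j * quadraticChar F ((p j).eval τ) := by
    intro j τ
    have hlow : (C β * X + C τ).degree < (f j).degree := by
      refine lt_of_le_of_lt degree_linear_le ?_
      rw [degree_eq_natDegree (hf j).ne_zero, hfd]
      exact_mod_cast hn
    have hder : derivative (f j + C β * X + C τ) = derivative (f j) + C β := by
      simp
    have hres := eval_pencilRes (f j) β τ
    rw [hfd, ← hder] at hres
    have hpe : (p j).eval τ = _ := hres
    rw [hpe]
    refine hσμ j _ ?_ ?_ ?_
    · rw [add_assoc]; exact (hf j).add_of_left hlow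
    · rw [add_assoc, natDegree_add_eq_left_of_degree_lt hlow, hfd]
    · rw [hder, natDegree_add_C]
  set h := (∏ j ∈ s, pencilRes (f j)).map (evalRingHom β) with hh
  have hhp : h = ∏ j ∈ s, p j := by rw [hh, Polynomial.map_prod]
  have hhd : h.natDegree = ∑ j ∈ s, (derivative (f j)).natDegree := by
    rw [hhp, natDegree_prod _ _ fun j _ => hp0 j]
    exact Finset.sum_congr rfl fun j _ => hpd j
  have hsum : ∑ τ : F, ∏ j, polyMoebius (f j + C β * X + C τ) ^ ε j =
      (∏ j ∈ s, σ j) * ∑ τ : F, quadraticChar F (h.eval τ) *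
        ∏ j ∈ t, quadraticChar F ((p j).eval τ) ^ 2 := by
    rw [Finset.mul_sum]
    refine Finset.sum_congr rfl fun τ _ => ?_
    rw [← Finset.prod_filter_mul_prod_filter_not Finset.univ fun j => ε j = 1, ← mul_assoc]
    congr 1
    · rw [hhp, eval_prod, map_prod, ← Finset.prod_mul_distrib]
      refine Finset.prod_congr rfl fun j hj => ?_
      rw [(Finset.mem_filter.1 hj).2, pow_one, hμ]
    · refine Finset.prod_congr rfl fun j hj => ?_
      rw [(hε j).resolve_left (Finset.mem_filter.1 hj).2, hμ, mul_pow, hσ, one_mul]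
  have hcard : s.card + t.card = r := by
    rw [hs, ht, Finset.card_filter_add_card_filter_not]; simp
  have hs1 : s.Nonempty := by
    push Not at hε2
    obtain ⟨j, hj⟩ := hε2
    exact ⟨j, Finset.mem_filter.2 ⟨Finset.mem_univ _, (hε j).resolve_right hj⟩⟩
  have hm : 1 ≤ h.natDegree := by
    rw [hhd]
    obtain ⟨j, hj⟩ := hs1
    exact (he j).trans (Finset.single_le_sum (f := fun j => (derivative (f j)).natDegree)
      (fun _ _ => Nat.zero_le _) hj)
  have hmain := abs_sum_twisted_le hq t h p (fun j _ => hp0 j) hm hns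
  have hσ1 : |((∏ j ∈ s, σ j : ℤ) : ℝ)| = 1 := by
    rw [← Int.cast_abs, Finset.abs_prod, Finset.prod_eq_one]
    · simp
    · intro j _
      rw [← sq_eq_sq₀ (abs_nonneg _) zero_le_one, sq_abs, hσ, one_pow]
  rw [hsum, Int.cast_mul, abs_mul, hσ1, one_mul]
  refine hmain.trans ?_
  have b1 : (h.natDegree : ℝ) ≤ s.card * (n - 1) := by
    have : h.natDegree ≤ s.card * (n - 1) := by
      rw [hhd, ← smul_eq_mul]
      exact Finset.sum_le_card_nsmul _ _ _ fun j _ => hen j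
    rw [← Nat.cast_one, ← Nat.cast_sub hn.le]; exact_mod_cast this
  have b2 : (∑ j ∈ t, ((p j).natDegree : ℝ)) ≤ t.card * (n - 1) := by
    have : ∑ j ∈ t, (p j).natDegree ≤ t.card * (n - 1) := by
      rw [← smul_eq_mul]
      exact Finset.sum_le_card_nsmul _ _ _ fun j _ => (hpd j).trans_le (hen j)
    rw [← Nat.cast_one, ← Nat.cast_sub hn.le]; exact_mod_cast this
  have hq1 : 1 ≤ √(Fintype.card F : ℝ) := by
    rw [Real.one_le_sqrt]
    exact_mod_cast Fintype.card_pos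
  have hcr : (s.card : ℝ) + t.card = r := by exact_mod_cast hcard
  have hr' : (2 : ℝ) ≤ r := by exact_mod_cast hr
  have hn' : (2 : ℝ) ≤ n := by exact_mod_cast hn
  have ht0 : (0 : ℝ) ≤ t.card := Nat.cast_nonneg _
  set Q := √(Fintype.card F : ℝ)
  have b3 : (h.natDegree : ℝ) * Q ≤ s.card * (n - 1) * Q := by gcongr
  have b4 : (t.card : ℝ) * (n - 1) ≤ t.card * (n - 1) * (2 * Q) :=
    le_mul_of_one_le_right (mul_nonneg ht0 (by linarith)) (by linarith)
  have b5 : (4 : ℝ) * Q ≤ 2 * r * Q := by gcongr; linarith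
  have b6 : s.card * (n - 1) * Q + t.card * (n - 1) * Q = r * (n - 1) * Q := by
    rw [← hcr]; ring
  nlinarith

/-- The sum over all `f + β x + τ`, for a fixed `f` for which no `(f + α_j)''` vanishes. -/
lemma abs_plane_sum_le (hq : Odd (Fintype.card F)) {n r : ℕ} (hn : 1 < n) (hr : 1 < r)
    (ε : Fin r → ℕ) (hε : ∀ j, ε j = 1 ∨ ε j = 2) (hε2 : ¬ ∀ j, ε j = 2)
    (f : Fin r → F[X]) (hinj : Function.Injective f) (hf : ∀ j, (f j).Monic)
    (hfd : ∀ j, (f j).natDegree = n) (hf2 : ∀ j, derivative (derivative (f j)) ≠ 0) :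
    |((∑ β : F, ∑ τ : F, ∏ j, polyMoebius (f j + C β * X + C τ) ^ ε j : ℤ) : ℝ)| ≤
      Fintype.card F * (2 * r * n * √(Fintype.card F) + r * n * (n - 1)) := by
  set s := Finset.univ.filter fun j => ε j = 1 with hs
  have he : ∀ j, 1 ≤ (derivative (f j)).natDegree := fun j => natDegree_derivative_pos (hf2 j)
  have hen : ∀ j, (derivative (f j)).natDegree ≤ n - 1 := fun j => by
    rw [← hfd j]; exact natDegree_derivative_le _
  have hs1 : s.Nonempty := by
    push Not at hε2
    obtain ⟨j, hj⟩ := hε2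
    exact ⟨j, Finset.mem_filter.2 ⟨Finset.mem_univ _, (hε j).resolve_right hj⟩⟩
  have hpr := fun j => natDegree_pencilRes (f j) (he j) (by rw [hfd]; exact hn)
  set H := ∏ j ∈ s, pencilRes (f j) with hH
  have hp0 : ∀ j, pencilRes (f j) ≠ 0 := fun j h => by
    have h1 := (hpr j).1; have h2 := he j; rw [h, natDegree_zero] at h1; omega
  have hHd : H.natDegree = ∑ j ∈ s, (derivative (f j)).natDegree := by
    rw [hH, natDegree_prod _ _ fun j _ => hp0 j]
    exact Finset.sum_congr rfl fun j _ => (hpr j).1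
  have hHlc : H.leadingCoeff = C (∏ j ∈ s, (derivative (f j)).leadingCoeff ^ n) := by
    rw [hH, leadingCoeff_prod, map_prod]
    exact Finset.prod_congr rfl fun j _ => by rw [(hpr j).2, hfd]
  have hlc0 : ∏ j ∈ s, (derivative (f j)).leadingCoeff ^ n ≠ 0 := by
    refine Finset.prod_ne_zero_iff.2 fun j _ => pow_ne_zero _ ?_
    rw [leadingCoeff_ne_zero]
    intro h; have := he j; rw [h] at this; simp at this
  have hHw : WtLE 1 n (n * (∑ j ∈ s, (derivative (f j)).natDegree : ℕ)) H := by
    have := WtLE.prod (u := 1) (w := n) s (fun j => pencilRes (f j))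
      (fun j => (n * (derivative (f j)).natDegree : ℤ)) (fun j _ => by
        have := wtLE_pencilRes (f j) (he j) (by have := hen j; rw [hfd]; omega)
        rwa [hfd] at this)
    rw [← Finset.mul_sum] at this
    exact_mod_cast this
  set bad := Finset.univ.filter fun β : F => ∃ (c : F) (u : F[X]),
      H.map (evalRingHom β) = C c * u ^ 2 with hbad
  have hcb : bad.card ≤ n * (∑ j ∈ s, (derivative (f j)).natDegree) :=
    card_square_specialisations (two_ne_zero_of_odd_card hq) n _ H _ hlc0 hHlc hHd hHw
      (prod_pencilRes_ne s hs1 f hinj.injOn (fun j _ => hf2 j) fun j _ => by rw [hfd]; exact hn)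
  have hcb' : (bad.card : ℝ) ≤ r * n * (n - 1) := by
    have h1 : ∑ j ∈ s, (derivative (f j)).natDegree ≤ s.card * (n - 1) := by
      rw [← smul_eq_mul]
      exact Finset.sum_le_card_nsmul _ _ _ fun j _ => hen j
    have h2 : s.card ≤ r := by simpa using Finset.card_le_univ s
    have h3 : bad.card ≤ r * n * (n - 1) := by
      calc _ ≤ _ := hcb
        _ ≤ n * (r * (n - 1)) := Nat.mul_le_mul_left _ (h1.trans (Nat.mul_le_mul_right _ h2))
        _ = _ := by ring
    rw [← Nat.cast_one, ← Nat.cast_sub hn.le]; exact_mod_cast h3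
  have hline : ∀ β : F, |((∑ τ : F, ∏ j, polyMoebius (f j + C β * X + C τ) ^ ε j : ℤ) : ℝ)| ≤
      (if β ∈ bad then (Fintype.card F : ℝ) else 0) + 2 * r * n * √(Fintype.card F) := by
    intro β
    split_ifs with hβ
    · have : |∑ τ : F, ∏ j, polyMoebius (f j + C β * X + C τ) ^ ε j| ≤ (Fintype.card F : ℤ) := by
        refine (Finset.abs_sum_le_sum_abs _ _).trans ?_
        refine (Finset.sum_le_card_nsmul _ _ 1 fun τ _ => abs_prod_polyMoebius_le _ _ _).trans ?_
        simp
      have h' : |((∑ τ : F, ∏ j, polyMoebius (f j + C β * X + C τ) ^ ε j : ℤ) : ℝ)| ≤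
        (Fintype.card F : ℝ) := by exact_mod_cast this
      have : (0 : ℝ) ≤ 2 * r * n * √(Fintype.card F) := by positivity
      linarith
    · rw [zero_add]
      refine abs_line_sum_le hq hn hr ε hε hε2 f hf hfd hf2 β fun c u h => hβ ?_
      exact Finset.mem_filter.2 ⟨Finset.mem_univ _, c, u, h⟩
  rw [Int.cast_sum]
  refine (Finset.abs_sum_le_sum_abs _ _).trans ((Finset.sum_le_sum fun β _ => hline β).trans ?_)
  rw [Finset.sum_add_distrib, Finset.sum_ite_mem, Finset.univ_inter, Finset.sum_const,
    Finset.sum_const, nsmul_eq_mul, nsmul_eq_mul, Finset.card_univ]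
  have : (0 : ℝ) ≤ Fintype.card F := Nat.cast_nonneg _
  nlinarith [mul_le_mul_of_nonneg_left hcb' this]

end Assembly

section Coefficients

variable {F : Type*} [Field F]

/-- The monic polynomial of degree `m + 2` with the given coefficients in degrees `2, …, m + 1` and
vanishing coefficients in degrees `0` and `1`. -/
def topPart {m : ℕ} (c : Fin m → F) : F[X] :=
  X ^ (m + 2) + ∑ i : Fin m, C (c i) * X ^ ((i : ℕ) + 2)

lemma coeff_topPart {m : ℕ} (c : Fin m → F) (i : Fin m) :
    (topPart c).coeff ((i : ℕ) + 2) = c i := by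
  rw [topPart, coeff_add, coeff_X_pow, if_neg (by omega), finsetSum_coeff]
  simp only [coeff_C_mul_X_pow, add_left_inj]
  simp [Fin.val_inj]

lemma topPart_add {m : ℕ} (c : Fin m → F) {α : F[X]} (hα : α.degree < (m + 2 : ℕ)) :
    (topPart c + α).Monic ∧ (topPart c + α).natDegree = m + 2 := by
  have hlow : (∑ i : Fin m, C (c i) * X ^ ((i : ℕ) + 2) + α).degree < (X ^ (m + 2) : F[X]).degree := by
    rw [degree_X_pow]
    refine (degree_add_le _ _).trans_lt (max_lt ?_ hα)
    refine (degree_sum_le _ _).trans_lt ((Finset.sup_lt_iff (WithBot.bot_lt_coe _)).2 fun i _ => ?_)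
    refine (degree_C_mul_X_pow_le _ _).trans_lt ?_
    exact_mod_cast (by omega)
  rw [topPart, add_assoc]
  exact ⟨(monic_X_pow _).add_of_left hlow, by
    rw [natDegree_add_eq_left_of_degree_lt hlow, natDegree_X_pow]⟩

/-- Coefficientwise form of the sum, with the coefficients of `1` and `x` innermost. -/
lemma Csum_eq [Fintype F] (m r : ℕ) (α : Fin r → F[X]) (ε : Fin r → ℕ) :
    Csum F (m + 2) r α ε = ∑ c : Fin m → F, ∑ β : F, ∑ τ : F,
      ∏ j, polyMoebius (topPart c + α j + C β * X + C τ) ^ ε j := by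
  have hinj : Function.Injective (fun a : Fin (m + 2) → F =>
      X ^ (m + 2) + ∑ i : Fin (m + 2), Polynomial.C (a i) * X ^ (i : ℕ)) := by
    intro a b hab
    funext i
    have h := congrArg (fun p => p.coeff (i : ℕ)) (add_left_cancel hab)
    simp only [finsetSum_coeff, coeff_C_mul_X_pow] at h
    simpa [Fin.val_inj] using h
  have key : ∀ g : (Fin (m + 2) → F) → ℤ, ∑ a, g a =
      ∑ c : Fin m → F, ∑ β : F, ∑ τ : F, g (Fin.cons τ (Fin.cons β c : Fin (m + 1) → F)) := by
    intro g
    rw [← (Fin.consEquiv fun _ => F).sum_comp, Fintype.sum_prod_type, Finset.sum_comm,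
      ← (Fin.consEquiv fun _ => F).sum_comp, Fintype.sum_prod_type, Finset.sum_comm]
    rfl
  rw [Csum, monicPolys, Finset.sum_image fun a _ b _ h => hinj h, key]
  refine Finset.sum_congr rfl fun c _ => Finset.sum_congr rfl fun β _ => Finset.sum_congr rfl
    fun τ _ => Finset.prod_congr rfl fun j _ => ?_
  congr 2
  rw [topPart, Fin.sum_univ_succ, Fin.sum_univ_succ]
  simp
  ring

/-- The second derivative of `f + α_j` vanishes for some `j` only if the coefficient of `x²` in `f`
is one of at most `r` values. -/
lemma card_degenerate_le [Fintype F] (h2 : (2 : F) ≠ 0) (m r : ℕ) (α : Fin r → F[X])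
    (hα : ∀ j, (α j).degree < (m + 2 : ℕ)) :
    Fintype.card F * (Finset.univ.filter fun c : Fin m → F =>
      ∃ j, derivative (derivative (topPart c + α j)) = 0).card ≤ r * Fintype.card F ^ m := by
  have hcoeff : ∀ p : F[X], derivative (derivative p) = 0 → p.coeff 2 = 0 := by
    intro p hp
    have h := congrArg (fun p => p.coeff 0) hp
    simp only [coeff_derivative, coeff_zero] at h
    norm_num at h
    rcases h with h | h
    · exact h
    · exact absurd h h2
  cases m with
  | zero =>
    rw [Finset.filter_eq_empty_iff.2]
    · simp
    · rintro c - ⟨j, hj⟩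
      have h1 := topPart_add c (hα j)
      have h3 := h1.1.coeff_natDegree
      rw [h1.2, hcoeff _ hj] at h3
      exact zero_ne_one h3
  | succ k =>
    have hsub : (Finset.univ.filter fun c : Fin (k + 1) → F =>
        ∃ j, derivative (derivative (topPart c + α j)) = 0) ⊆
        Finset.univ.image fun x : Fin r × (Fin k → F) =>
          (Fin.cons (-(α x.1).coeff 2) x.2 : Fin (k + 1) → F) := by
      intro c hc
      obtain ⟨j, hj⟩ := (Finset.mem_filter.1 hc).2
      refine Finset.mem_image.2 ⟨(j, Fin.tail c), Finset.mem_univ _, ?_⟩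
      have h := hcoeff _ hj
      have h3 := coeff_topPart c 0
      rw [Fin.val_zero, zero_add] at h3
      rw [coeff_add, h3] at h
      rw [← Fin.cons_self_tail c]
      simp only [Fin.tail_cons]
      rw [eq_neg_of_add_eq_zero_left h]
    have hcard := (Finset.card_le_card hsub).trans Finset.card_image_le
    rw [Finset.card_univ, Fintype.card_prod, Fintype.card_fin, Fintype.card_fun,
      Fintype.card_fin] at hcard
    calc _ ≤ Fintype.card F * (r * Fintype.card F ^ k) := Nat.mul_le_mul_left _ hcard
      _ = _ := by ring

end Coefficients

/-- **Theorem 1.1** (Carmon–Rudnick). For `q` odd, `r > 1`, `n > 1`, distinct `α_j` of degree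
`< n` and exponents `ε_j ∈ {1,2}` not all even,
`|C(α_1,…,α_r;n)| ≤ 2 r n q^{n-1/2} + 3 r n² q^{n-1}`. -/
theorem chowla_function_field (q n r : ℕ) (hq : Odd q) (hn : 1 < n) (hr : 1 < r)
    (F : Type) [Field F] [Fintype F] (hF : Fintype.card F = q)
    (α : Fin r → Polynomial F) (hα : Function.Injective α)
    (hdeg : ∀ j, (α j).degree < n)
    (ε : Fin r → ℕ) (hε : ∀ j, ε j = 1 ∨ ε j = 2) (hε2 : ¬ ∀ j, ε j = 2) :
    |(Csum F n r α ε : ℝ)| ≤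
      2 * r * n * (q : ℝ) ^ ((n : ℝ) - 1 / 2) + 3 * r * n ^ 2 * (q : ℝ) ^ (n - 1) := by
  subst hF
  obtain ⟨m, rfl⟩ : ∃ m, n = m + 2 := ⟨n - 2, by omega⟩
  set q := Fintype.card F with hqdef
  have hq1 : (1 : ℝ) ≤ q := by exact_mod_cast Fintype.card_pos (α := F)
  set bad := Finset.univ.filter fun c : Fin m → F =>
      ∃ j, derivative (derivative (topPart c + α j)) = 0 with hbad
  set N : ℝ := ((m + 2 : ℕ) : ℝ) with hN
  have hN2 : 2 ≤ N := by rw [hN]; push_cast; linarith [Nat.cast_nonneg (α := ℝ) m]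
  have hr2 : (2 : ℝ) ≤ r := by exact_mod_cast hr
  have hcb : (q : ℝ) * bad.card ≤ r * (q : ℝ) ^ m := by
    exact_mod_cast card_degenerate_le (two_ne_zero_of_odd_card hq) m r α hdeg
  set B : ℝ := q * (2 * r * N * √q + r * N * (N - 1)) with hB
  have hB0 : 0 ≤ B := by
    have : 0 ≤ N - 1 := by linarith
    positivity
  have hplane : ∀ c : Fin m → F, |((∑ β : F, ∑ τ : F,
      ∏ j, polyMoebius (topPart c + α j + C β * X + C τ) ^ ε j : ℤ) : ℝ)| ≤
      (if c ∈ bad then (q : ℝ) * q else 0) + B := by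
    intro c
    split_ifs with hc
    · have : |∑ β : F, ∑ τ : F, ∏ j, polyMoebius (topPart c + α j + C β * X + C τ) ^ ε j| ≤
          (q * q : ℤ) := by
        refine (Finset.abs_sum_le_sum_abs _ _).trans ?_
        refine (Finset.sum_le_card_nsmul _ _ (q : ℤ) fun β _ => ?_).trans (by simp [hqdef])
        refine (Finset.abs_sum_le_sum_abs _ _).trans ?_
        refine (Finset.sum_le_card_nsmul _ _ 1 fun τ _ => abs_prod_polyMoebius_le _ _ _).trans ?_
        simp [hqdef]
      have h' : |((∑ β : F, ∑ τ : F,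
          ∏ j, polyMoebius (topPart c + α j + C β * X + C τ) ^ ε j : ℤ) : ℝ)| ≤ (q : ℝ) * q := by
        exact_mod_cast this
      linarith
    · rw [zero_add]
      refine abs_plane_sum_le hq hn hr ε hε hε2 (fun j => topPart c + α j)
        (fun i j h => hα (add_left_cancel h)) (fun j => (topPart_add c (hdeg j)).1)
        (fun j => (topPart_add c (hdeg j)).2) fun j h => hc ?_
      exact Finset.mem_filter.2 ⟨Finset.mem_univ _, j, h⟩
  have hsum : |(Csum F (m + 2) r α ε : ℝ)| ≤ bad.card * ((q : ℝ) * q) + (q : ℝ) ^ m * B := by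
    rw [Csum_eq, Int.cast_sum]
    refine (Finset.abs_sum_le_sum_abs _ _).trans ((Finset.sum_le_sum fun c _ => hplane c).trans ?_)
    rw [Finset.sum_add_distrib, Finset.sum_ite_mem, Finset.univ_inter, Finset.sum_const,
      Finset.sum_const, nsmul_eq_mul, nsmul_eq_mul, Finset.card_univ, Fintype.card_fun,
      Fintype.card_fin, Nat.cast_pow]
  have hpow : (q : ℝ) ^ (N - 1 / 2) = (q : ℝ) ^ (m + 1) * √q := by
    have : N - 1 / 2 = ((m + 1 : ℕ) : ℝ) + 1 / 2 := by rw [hN]; push_cast; ring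
    rw [this, Real.rpow_add (by linarith), Real.rpow_natCast, Real.sqrt_eq_rpow]
  rw [hpow, show m + 2 - 1 = m + 1 by omega]
  refine hsum.trans ?_
  have h1 : bad.card * ((q : ℝ) * q) ≤ r * (q : ℝ) ^ (m + 1) := by
    calc bad.card * ((q : ℝ) * q) = q * (q * bad.card) := by ring
      _ ≤ q * (r * (q : ℝ) ^ m) := by gcongr
      _ = _ := by ring
  have h2 : (q : ℝ) ^ m * B =
      2 * r * N * ((q : ℝ) ^ (m + 1) * √q) + r * N * (N - 1) * (q : ℝ) ^ (m + 1) := by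
    rw [hB]; ring
  have h3 : r + r * N * (N - 1) ≤ 3 * r * N ^ 2 := by nlinarith
  have h4 := mul_le_mul_of_nonneg_right h3 (by positivity : 0 ≤ (q : ℝ) ^ (m + 1))
  linarith
end
end

section
/- Fix integers r > 1 and n > 1. For every ε > 0 there exists Q such that for every odd prime power q > Q, every choice of distinct polynomials α_1, …, α_r ∈ F_q[x] with deg α_j < n, and every choice of exponents ε_1, …, ε_r ∈ {1,2} not all equal to 2, one has |C(α_1,…,α_r;n)| < ε·q^n. (Function field analogue of Chowla's conjecture in the large finite field limit.) -/
/-!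
By Pellet's formula (`polyMoebius_eq`) the Möbius function of a monic polynomial `F` of degree `n`
is, up to a sign depending only on `n`, the quadratic character `χ` of the discriminant of `F`.
Hence the summand is `± χ(D(F))`, where `D(F)` is the product of the discriminants of those `F + α_j`
with exponent `1`, except where a discriminant with exponent `2` vanishes.

All monic polynomials of degree `n` other than `F₀` are covered evenly by the punctured lines
`t ↦ F₀ + t g` with `deg g < n` (`Csum_lines`), so it suffices to bound character sums in one
variable `t`. Along a line, `D` is a polynomial in `t` of degree at most `2nr`. Cancellation requires
that it is not a constant times a square, and this is forced by the choice of base point. Let `j₀`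
be an index with exponent `1`, and put `F₀ + α_{j₀} = (x - ρ)² h` with `h` separable and `h(ρ) ≠ 0`.
The discriminant of `F₀ + α_{j₀} + t g` then has a simple zero at `t = 0` as soon as `g(ρ) ≠ 0`
(`lineDisc_simple_zero`). For all but boundedly many `ρ` the other translates `F₀ + α_j` are
separable (`card_inseparable_le`), so that the remaining factors of `D` do not vanish at `t = 0`.

For a polynomial `f` with a simple zero at `0`, Stepanov's method gives `∑ χ(f(t)) = o(q)`
uniformly in `f` of bounded degree (`quadraticChar_sum_bound`). The simple zero makes the
nonvanishing of the auxiliary polynomial elementary (`stepanov_nonvanishing`). The directions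
`g` with `g(ρ) = 0` form a proportion `1/q` of all directions and are estimated trivially.
-/

open Polynomial

noncomputable section
open scoped Classical

/-! ### Resultants and discriminants of monic polynomials -/

/-- For monic `f` the resultant does not depend on the formal degree of the second argument. -/
lemma resultant_monic_deg {R : Type*} [CommRing R] {f g : R[X]} (hf : f.Monic) {N : ℕ}
    (hN : g.natDegree ≤ N) :
    resultant f g f.natDegree N = resultant f g := by
  obtain ⟨k, rfl⟩ := Nat.exists_eq_add_of_le hN
  rw [resultant_add_right_deg _ _ _ _ _ le_rfl]
  simp [hf.coeff_natDegree]

lemma resultant_monic_mul_right {R : Type*} [CommRing R] {f : R[X]} (hf : f.Monic) (g₁ g₂ : R[X]) :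
    resultant f (g₁ * g₂) = resultant f g₁ * resultant f g₂ := by
  rw [← resultant_mul_right f g₁ g₂ _ le_rfl, resultant_monic_deg hf natDegree_mul_le]

lemma resultant_monic_add_mul {R : Type*} [CommRing R] {f : R[X]} (hf : f.Monic) (g p : R[X]) :
    resultant f (g + f * p) = resultant f g := by
  set N := g.natDegree + (p.natDegree + f.natDegree) with hN
  have h1 : (f * p).natDegree ≤ N := natDegree_mul_le.trans (by omega)
  have h2 : (g + f * p).natDegree ≤ N := natDegree_add_le_of_degree_le (by omega) h1
  rw [← resultant_monic_deg hf h2, ← resultant_monic_deg hf (show g.natDegree ≤ N by omega)]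
  exact resultant_add_mul_right _ _ _ _ _ (by omega) le_rfl

/-- The resultant of `f` with its derivative; for monic `f` of degree `n` this is
`(-1) ^ (n.choose 2)` times the discriminant. -/
def dres {R : Type*} [CommRing R] (f : R[X]) : R := resultant f (derivative f)

lemma dres_mul {R : Type*} [CommRing R] [Nontrivial R] {f g : R[X]} (hf : f.Monic) (hg : g.Monic) :
    dres (f * g) = dres f * dres g * ((-1) ^ (f.natDegree * g.natDegree) * resultant f g ^ 2) := by
  unfold dres
  have h := resultant_mul_left f g (derivative (f * g)) (derivative (f * g)).natDegree le_rfl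
  rw [← hf.natDegree_mul hg] at h
  rw [h]
  have e1 : derivative (f * g) = derivative f * g + f * derivative g := derivative_mul
  have e2 : derivative (f * g) = f * derivative g + g * derivative f := by rw [e1]; ring
  have h1 : resultant f (derivative (f * g)) = resultant f (derivative f) * resultant f g := by
    rw [e1, resultant_monic_add_mul hf, resultant_monic_mul_right hf]
  have h2 : resultant g (derivative (f * g)) = resultant g f * resultant g (derivative g) := by
    rw [e2, resultant_monic_add_mul hg, resultant_monic_mul_right hg]
  rw [h1, h2, resultant_comm g f, mul_comm g.natDegree]
  ring

lemma dres_ne_zero_iff {K : Type*} [Field K] {f : K[X]} (hf : f.Monic) :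
    dres f ≠ 0 ↔ f.Separable := by
  unfold dres
  rw [Ne, resultant_eq_zero_iff]
  simp [hf.ne_zero, Polynomial.Separable]

lemma dres_eq_of_natDegree {R : Type*} [CommRing R] {f : R[X]} (hf : f.Monic) {n : ℕ}
    (hn : f.natDegree = n) : resultant f (derivative f) n (n - 1) = dres f := by
  subst hn
  exact resultant_monic_deg hf (natDegree_derivative_le f)

/-- Compatibility of `dres` with ring homomorphisms, for monic polynomials. -/
lemma dres_map {R S : Type*} [CommRing R] [CommRing S] [Nontrivial S] (φ : R →+* S) {f : R[X]}
    (hf : f.Monic) : dres (f.map φ) = φ (dres f) := by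
  rw [← dres_eq_of_natDegree (hf.map φ) (hf.natDegree_map φ), ← dres_eq_of_natDegree hf rfl,
    derivative_map, resultant_map_map]

lemma resultant_monic_map {R S : Type*} [CommRing R] [CommRing S] [Nontrivial S] (φ : R →+* S)
    {f : R[X]} (hf : f.Monic) (g : R[X]) :
    resultant (f.map φ) (g.map φ) = φ (resultant f g) := by
  rw [← resultant_map_map, ← resultant_monic_deg (hf.map φ) natDegree_map_le, hf.natDegree_map]

/-! ### Stickelberger's theorem for irreducible polynomials -/

lemma dres_prod_X_sub_C {R : Type*} [CommRing R] [Nontrivial R] (d : ℕ) (v : Fin d → R) :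
    dres (∏ i, (X - C (v i))) = (-1) ^ (d.choose 2) * (Matrix.vandermonde v).det ^ 2 := by
  induction d with
  | zero => simp [dres]
  | succ d ih =>
    have hm : (∏ i : Fin d, (X - C (v i.succ))).Monic :=
      monic_prod_of_monic _ _ fun i _ => monic_X_sub_C _
    have hdeg : (∏ i : Fin d, (X - C (v i.succ))).natDegree = d := by
      rw [natDegree_prod_of_monic _ _ fun i _ => monic_X_sub_C _]; simp
    rw [Fin.prod_univ_succ, dres_mul (monic_X_sub_C _) hm, ih, hdeg, natDegree_X_sub_C]
    have h1 : dres (X - C (v 0)) = 1 := by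
      simp [dres]
    have h2 : resultant (X - C (v 0)) (∏ i : Fin d, (X - C (v i.succ))) 1 d
        = ∏ i : Fin d, (v 0 - v i.succ) := by
      rw [resultant_X_sub_C_left _ _ _ hdeg.le, eval_prod]
      simp
    have h3 : ∏ i : Fin d, (v 0 - v i.succ) = (-1) ^ d * ∏ i : Fin d, (v i.succ - v 0) := by
      rw [← Fin.prod_const, ← Finset.prod_mul_distrib]
      exact Finset.prod_congr rfl fun i _ => by ring
    have h4 : ((-1 : R) ^ d) ^ 2 = 1 := by rw [← pow_mul, mul_comm, pow_mul]; simp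
    rw [h1, h2, h3, Matrix.det_vandermonde, Matrix.det_vandermonde, Fin.prod_univ_succ,
      Nat.choose_succ_succ' d 1, Nat.choose_one_right, pow_add, mul_pow, h4]
    simp only [Fin.prod_Ioi_zero, Fin.prod_Ioi_succ]
    ring

/-- Over a finite field `K` with `q` elements, a monic irreducible polynomial of degree `d` splits
in `K[x]/(P)` with roots `θ ^ (q ^ i)`, `i < d`. -/
lemma irreducible_map_eq_prod {K L : Type*} [Field K] [Fintype K] [Field L] [Algebra K L]
    [Finite L] {P : K[X]} (hP : P.Monic) (θ : L) (hθ : aeval θ P = 0)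
    (hgen : Algebra.adjoin K {θ} = ⊤) {d : ℕ} (hdP : P.natDegree = d)
    (hd : d = Module.finrank K L) :
    P.map (algebraMap K L) =
      ∏ i : Fin d, (X - C (θ ^ (Fintype.card K ^ (i : ℕ)))) := by
  subst hd
  have hinj : Function.Injective
      (fun i : Fin (Module.finrank K L) => θ ^ (Fintype.card K ^ (i : ℕ))) := by
    intro i j hij
    apply (FiniteField.bijective_frobeniusAlgHom_pow K L).1
    refine AlgHom.ext_of_adjoin_eq_top hgen ?_
    intro x hx
    rw [Set.mem_singleton_iff] at hx
    subst hx
    simpa only [AlgHom.coe_pow, FiniteField.coe_frobeniusAlgHom, pow_iterate] using hij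
  have hroot : ∀ i : ℕ, aeval (θ ^ (Fintype.card K ^ i)) P = 0 := by
    intro i
    have := congrArg ((FiniteField.frobeniusAlgHom K L) ^ i) hθ
    rw [← aeval_algHom_apply, map_zero, AlgHom.coe_pow, FiniteField.coe_frobeniusAlgHom,
      pow_iterate] at this
    exact this
  have hm : (∏ i : Fin (Module.finrank K L), (X - C (θ ^ (Fintype.card K ^ (i : ℕ))))).Monic :=
    monic_prod_of_monic _ _ fun i _ => monic_X_sub_C _
  refine eq_of_monic_of_dvd_of_natDegree_le hm (hP.map _) ?_ ?_
  · refine Finset.prod_dvd_of_coprime ?_ ?_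
    · intro i _ j _ hij
      exact isCoprime_X_sub_C_of_isUnit_sub (sub_ne_zero.2 (hinj.ne hij)).isUnit
    · intro i _
      rw [dvd_iff_isRoot, IsRoot, eval_map_algebraMap]
      exact hroot i
  · rw [hP.natDegree_map, natDegree_prod_of_monic _ _ fun i _ => monic_X_sub_C _]
    simp only [natDegree_X_sub_C]
    simp [hdP]

/-- Stickelberger's theorem for an irreducible polynomial with a root `θ` generating `L`: Frobenius
permutes the roots by a `d`-cycle, hence multiplies the Vandermonde determinant by
`(-1) ^ (d - 1)`. -/
lemma quadraticChar_dres_of_generator {K L : Type*} [Field K] [Fintype K] [Field L] [Algebra K L]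
    [Finite L] (hK : Odd (Fintype.card K)) {P : K[X]} (hP : P.Monic) (hirr : Irreducible P)
    (θ : L) (hθ : aeval θ P = 0) (hgen : Algebra.adjoin K {θ} = ⊤) {d : ℕ}
    (hdP : P.natDegree = d) (hfr : d = Module.finrank K L) :
    quadraticChar K ((-1) ^ (d.choose 2) * dres P) = (-1) ^ (d + 1) := by
  have hprod := irreducible_map_eq_prod hP θ hθ hgen hdP hfr
  have hdpos : 0 < d := hdP ▸ hirr.natDegree_pos
  set q := Fintype.card K with hq
  set v : Fin d → L := fun i => θ ^ (q ^ (i : ℕ)) with hv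
  set V := (Matrix.vandermonde v).det with hV
  have hchar2 : ringChar K ≠ 2 := by
    intro h
    have := FiniteField.even_card_of_char_two h
    have h' := Nat.odd_iff.1 hK
    omega
  -- Frobenius acts on the Vandermonde determinant through the cycle `i ↦ i + 1`
  have hfrob : V ^ q = (-1) ^ (d + 1) * V := by
    have h1 : V ^ q = ((Matrix.vandermonde v).map (FiniteField.frobeniusAlgHom K L)).det := by
      rw [← AlgHom.mapMatrix_apply, ← AlgHom.map_det]
      rfl
    have hcyc : ∀ i, (v i) ^ q = v (finRotate d i) := by
      intro i
      obtain ⟨e, rfl⟩ : ∃ e, d = e + 1 := ⟨d - 1, by omega⟩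
      simp only [hv, ← pow_mul, ← pow_succ]
      by_cases hi : i = Fin.last e
      · subst hi
        have : θ ^ (q ^ (Module.finrank K L)) = θ := by
          let _ := Fintype.ofFinite L
          rw [← Module.card_eq_pow_finrank]
          exact FiniteField.pow_card _
        simp [← hfr] at this
        simp [this]
      · rw [coe_finRotate_of_ne_last hi]
    have h2 : (Matrix.vandermonde v).map (FiniteField.frobeniusAlgHom K L)
        = (Matrix.vandermonde v).submatrix (finRotate d) id := by
      ext i j
      simp only [Matrix.map_apply, Matrix.vandermonde_apply, Matrix.submatrix_apply, id, map_pow]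
      rw [← hcyc]
      rfl
    rw [h1, h2, Matrix.det_permute, sign_finRotate]
    have : (-1 : L) ^ (d - 1) = (-1) ^ (d + 1) := by
      rw [show d + 1 = d - 1 + 2 by omega, pow_add]; simp
    simp [this, hV]
  have hsq : algebraMap K L ((-1) ^ (d.choose 2) * dres P) = V ^ 2 := by
    rw [map_mul, ← dres_map _ hP, hprod, dres_prod_X_sub_C, ← mul_assoc, map_pow, map_neg, map_one,
      ← mul_pow]
    simp
    rfl
  have hsep : P.Separable := PerfectField.separable_of_irreducible hirr
  have hne : (-1) ^ (d.choose 2) * dres P ≠ 0 :=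
    mul_ne_zero (pow_ne_zero _ (neg_ne_zero.2 one_ne_zero)) ((dres_ne_zero_iff hP).2 hsep)
  have hV0 : V ≠ 0 := by
    intro h
    rw [h] at hsq
    simp at hsq
    exact (dres_ne_zero_iff hP).2 hsep hsq
  have hpow : V ^ (q - 1) = (-1) ^ (d + 1) := by
    apply mul_right_cancel₀ hV0
    rw [← hfrob, ← pow_succ, Nat.sub_add_cancel Fintype.card_pos]
  have hK' : ((-1) ^ (d.choose 2) * dres P) ^ (q / 2) = (-1) ^ (d + 1) := by
    apply (algebraMap K L).injective
    rw [map_pow, hsq, ← pow_mul, map_pow, map_neg, map_one, ← hpow]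
    congr 1
    obtain ⟨k, hk⟩ := hK
    omega
  have h3 := quadraticChar_eq_pow_of_char_ne_two hchar2 hne
  rw [h3, ← hq, hK']
  rcases Nat.even_or_odd (d + 1) with h | h
  · simp [h.neg_one_pow]
  · simp only [h.neg_one_pow]
    rw [if_neg]
    exact Ring.neg_one_ne_one_of_char_ne_two hchar2

/-- Stickelberger's theorem for an irreducible polynomial, stated over the base field. -/
lemma quadraticChar_dres_irreducible {K : Type*} [Field K] [Fintype K] (hK : Odd (Fintype.card K))
    {P : K[X]} (hP : P.Monic) (hirr : Irreducible P) :
    quadraticChar K ((-1) ^ (P.natDegree.choose 2) * dres P) = (-1) ^ (P.natDegree + 1) := by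
  have : Fact (Irreducible P) := ⟨hirr⟩
  have : FiniteDimensional K (AdjoinRoot P) := (AdjoinRoot.powerBasis hP.ne_zero).finite
  have : Finite (AdjoinRoot P) := Module.finite_of_finite K
  refine quadraticChar_dres_of_generator hK hP hirr (AdjoinRoot.root P) ?_
    AdjoinRoot.adjoinRoot_eq_top rfl ?_
  · rw [AdjoinRoot.aeval_eq, AdjoinRoot.mk_self]
  · rw [(AdjoinRoot.powerBasis hP.ne_zero).finrank, AdjoinRoot.powerBasis_dim]

/-! ### Pellet's formula -/

lemma choose_two_add (a b : ℕ) : (a + b).choose 2 = a.choose 2 + b.choose 2 + a * b := by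
  induction b with
  | zero => simp
  | succ b ih =>
    rw [← add_assoc, Nat.choose_succ_succ' (a + b) 1, ih, Nat.choose_succ_succ' b 1]
    simp only [Nat.choose_one_right]
    ring

/-- The step from irreducible to squarefree polynomials: by `dres_mul` the discriminant is
multiplicative up to a nonzero square on coprime factors. -/
lemma quadraticChar_dres_multiset {K : Type*} [Field K] [Fintype K] (hK : Odd (Fintype.card K))
    (s : Multiset K[X]) (hs : ∀ P ∈ s, P.Monic ∧ Irreducible P) (hnd : s.Nodup) :
    (-1) ^ s.card =
      (-1) ^ s.prod.natDegree *
        quadraticChar K ((-1) ^ (s.prod.natDegree.choose 2) * dres s.prod) := by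
  induction s using Multiset.induction with
  | empty => simp [dres]
  | cons P s ih =>
    have hP := hs P (Multiset.mem_cons_self _ _)
    have hs' : ∀ Q ∈ s, Q.Monic ∧ Irreducible Q := fun Q hQ => hs Q (Multiset.mem_cons_of_mem hQ)
    rw [Multiset.nodup_cons] at hnd
    have ih := ih hs' hnd.2
    set G := s.prod with hG
    have hGm : G.Monic := by
      simpa using monic_multiset_prod_of_monic s id (fun Q hQ => (hs' Q hQ).1)
    have hcop : IsCoprime P G := by
      rw [hG]
      refine (Multiset.prod_induction (fun Q => IsCoprime P Q) s (fun a b => IsCoprime.mul_right)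
        isCoprime_one_right ?_)
      intro Q hQ
      refine (hP.2.coprime_iff_not_dvd).2 fun hdvd => ?_
      have := eq_of_monic_of_associated hP.1 (hs' Q hQ).1
        (hP.2.associated_of_dvd (hs' Q hQ).2 hdvd)
      exact hnd.1 (this ▸ hQ)
    have hres : resultant P G ≠ 0 := resultant_ne_zero P G hcop
    have hirr := quadraticChar_dres_irreducible hK hP.1 hP.2
    rw [Multiset.card_cons, Multiset.prod_cons, hP.1.natDegree_mul hGm, dres_mul hP.1 hGm,
      choose_two_add]
    set a := P.natDegree
    set b := G.natDegree
    have e : ((-1 : K) ^ (a.choose 2 + b.choose 2 + a * b) *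
        (dres P * dres G * ((-1) ^ (a * b) * resultant P G ^ 2))) =
        ((-1) ^ a.choose 2 * dres P) * ((-1) ^ b.choose 2 * dres G) * resultant P G ^ 2 := by
      have : ((-1 : K) ^ (a * b)) * (-1) ^ (a * b) = 1 := by rw [← mul_pow]; simp
      rw [pow_add, pow_add]
      linear_combination ((-1) ^ a.choose 2 * dres P) * ((-1) ^ b.choose 2 * dres G) *
        resultant P G ^ 2 * this
    rw [e, map_mul, map_mul, quadraticChar_sq_one' hres, hirr, pow_succ, ih]
    have : ((-1 : ℤ) ^ a) * (-1) ^ a = 1 := by rw [← mul_pow]; simp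
    rw [pow_add, pow_succ]
    linear_combination ((-1) ^ b * quadraticChar K ((-1) ^ b.choose 2 * dres G)) * this

/-- Pellet's formula (Stickelberger's theorem): the Möbius function is, up to a sign depending only
on the degree, the quadratic character of the discriminant. -/
lemma polyMoebius_eq_s1 {K : Type*} [Field K] [Fintype K] (hK : Odd (Fintype.card K))
    {f : K[X]} (hf : f.Monic) :
    polyMoebius f =
      (-1) ^ f.natDegree * quadraticChar K ((-1) ^ (f.natDegree.choose 2) * dres f) := by
  unfold polyMoebius
  split_ifs with hsq
  · set s := UniqueFactorizationMonoid.normalizedFactors f with hs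
    have hprod : s.prod = f := by
      have h := UniqueFactorizationMonoid.prod_normalizedFactors_eq hf.ne_zero
      rwa [hf.normalize_eq_self] at h
    have h := quadraticChar_dres_multiset hK s ?_ ?_
    · rwa [hprod] at h
    · intro P hP
      have hirr := UniqueFactorizationMonoid.irreducible_of_normalized_factor P hP
      refine ⟨?_, hirr⟩
      rw [← UniqueFactorizationMonoid.normalize_normalized_factor P hP]
      exact monic_normalize hirr.ne_zero
    · exact (UniqueFactorizationMonoid.squarefree_iff_nodup_normalizedFactors hf.ne_zero).1 hsq
  · have : dres f = 0 := by
      by_contra h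
      exact hsq (PerfectField.separable_iff_squarefree.1 ((dres_ne_zero_iff hf).1 h))
    simp [this]

/-! ### Hasse derivatives and the nonvanishing criterion -/

/-- The `k`-th Hasse derivative lowers the multiplicity of each factor of `f` by at most `k`. -/
lemma pow_sub_dvd_hasseDeriv_pow {K : Type*} [Field K] (f : K[X]) (N k : ℕ) :
    f ^ (N - k) ∣ hasseDeriv k (f ^ N) := by
  induction N generalizing k with
  | zero => simp
  | succ N ih =>
    rw [pow_succ f N, hasseDeriv_mul]
    refine Finset.dvd_sum fun ij hij => ?_
    rw [Finset.HasAntidiagonal.mem_antidiagonal] at hij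
    rcases Nat.eq_zero_or_pos ij.2 with h | h
    · rw [h, hasseDeriv_zero', show ij.1 = k by omega]
      refine (pow_dvd_pow f (show N + 1 - k ≤ N - k + 1 by omega)).trans ?_
      rw [pow_succ]
      exact mul_dvd_mul_right (ih k) f
    · exact ((pow_dvd_pow f (show N + 1 - k ≤ N - ij.1 by omega)).trans (ih _)).mul_right _

/-- The `k`-th Hasse derivative of `f ^ N * r` is `f ^ (N - k)` times a polynomial depending
linearly on `r`, whose degree does not depend on `N`. -/
lemma exists_hasseDeriv_quotient {K : Type*} [Field K] (f : K[X]) (hf : f ≠ 0) (N k : ℕ)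
    (hk : k ≤ N) :
    ∃ T : K[X] →ₗ[K] K[X], (∀ r, hasseDeriv k (f ^ N * r) = f ^ (N - k) * T r) ∧
      ∀ r, (T r).natDegree ≤ k * f.natDegree + r.natDegree := by
  choose u hu using fun i => pow_sub_dvd_hasseDeriv_pow f N i
  let T : K[X] →ₗ[K] K[X] := ∑ ij ∈ Finset.HasAntidiagonal.antidiagonal k,
    (LinearMap.mulLeft K (f ^ (k - ij.1) * u ij.1)) ∘ₗ (hasseDeriv ij.2)
  have hT : ∀ r, hasseDeriv k (f ^ N * r) = f ^ (N - k) * T r := by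
    intro r
    rw [hasseDeriv_mul]
    simp only [T, LinearMap.sum_apply, LinearMap.comp_apply, LinearMap.mulLeft_apply,
      Finset.mul_sum]
    refine Finset.sum_congr rfl fun ij hij => ?_
    rw [Finset.HasAntidiagonal.mem_antidiagonal] at hij
    rw [hu ij.1, show N - ij.1 = (N - k) + (k - ij.1) by omega, pow_add]
    ring
  refine ⟨T, hT, fun r => ?_⟩
  by_cases h0 : T r = 0
  · simp [h0]
  have h1 : (f ^ (N - k) * T r).natDegree ≤ N * f.natDegree + r.natDegree := by
    rw [← hT]
    refine (natDegree_hasseDeriv_le _ _).trans ((Nat.sub_le _ _).trans ?_)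
    exact natDegree_mul_le.trans (by simp)
  rw [natDegree_mul (pow_ne_zero _ hf) h0, natDegree_pow] at h1
  have h2 : N * f.natDegree = (N - k) * f.natDegree + k * f.natDegree := by
    rw [← add_mul, Nat.sub_add_cancel hk]
  omega

/-- If `f` has a simple zero at `0`, then `∑ r_j x^(qj)` and `√(f(x^q)/f(x)) ∑ s_j x^(qj)` can only
agree up to sign when all the (low-degree) coefficients vanish: compare lowest powers of `x^q`. -/
lemma stepanov_nonvanishing {K : Type*} [Field K] (f f₁ : K[X]) (hf : f = X * f₁)
    (h1 : f₁.coeff 0 ≠ 0) (A q : ℕ) (hAq : f.natDegree + 2 * A ≤ q) (J : ℕ) (r s : ℕ → K[X])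
    (hr : ∀ j, (r j).natDegree < A) (hs : ∀ j, (s j).natDegree < A)
    (h : f * (∑ j ∈ Finset.range J, r j * X ^ (q * j)) ^ 2 =
      expand K q f * (∑ j ∈ Finset.range J, s j * X ^ (q * j)) ^ 2) :
    ∀ j < J, r j = 0 ∧ s j = 0 := by
  induction J generalizing r s with
  | zero => intro j hj; omega
  | succ J ih =>
    have hf1 : f₁ ≠ 0 := by rintro rfl; simp at h1
    have hf0 : f ≠ 0 := by rw [hf]; exact mul_ne_zero X_ne_zero hf1
    have hX : (X ^ q : K[X]) ≠ 0 := pow_ne_zero _ X_ne_zero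
    have hsplit : ∀ t : ℕ → K[X], ∑ j ∈ Finset.range (J + 1), t j * X ^ (q * j) =
        X ^ q * (∑ j ∈ Finset.range J, t (j + 1) * X ^ (q * j)) + t 0 := by
      intro t
      rw [Finset.sum_range_succ', Finset.mul_sum]
      congr 1
      · refine Finset.sum_congr rfl fun j _ => ?_
        rw [mul_add, pow_add, mul_one]; ring
      · simp
    rw [hsplit r, hsplit s] at h
    set R := ∑ j ∈ Finset.range J, r (j + 1) * X ^ (q * j)
    set S := ∑ j ∈ Finset.range J, s (j + 1) * X ^ (q * j)
    have hexp : expand K q f = X ^ q * expand K q f₁ := by rw [hf, map_mul, expand_X]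
    have hexp1 : expand K q f₁ = X ^ q * expand K q f₁.divX + C (f₁.coeff 0) := by
      have := congrArg (expand K q) (X_mul_divX_add f₁)
      rw [map_add, map_mul, expand_X, expand_C] at this
      exact this.symm
    have hr0 : r 0 = 0 := by
      by_contra hne
      have hd : X ^ q ∣ f * r 0 ^ 2 :=
        ⟨expand K q f₁ * (X ^ q * S + s 0) ^ 2 - f * (X ^ q * R ^ 2 + 2 * R * r 0), by
          rw [hexp] at h; linear_combination h⟩
      have := natDegree_le_of_dvd hd (mul_ne_zero hf0 (pow_ne_zero _ hne))
      rw [natDegree_X_pow, natDegree_mul hf0 (pow_ne_zero _ hne), natDegree_pow] at this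
      have := hr 0
      omega
    rw [hr0, add_zero] at h
    have hs0 : s 0 = 0 := by
      by_contra hne
      have h' : f * X ^ q * R ^ 2 = expand K q f₁ * (X ^ q * S + s 0) ^ 2 := by
        apply mul_left_cancel₀ hX
        rw [hexp] at h
        linear_combination h
      have hd : X ^ q ∣ C (f₁.coeff 0) * s 0 ^ 2 :=
        ⟨f * R ^ 2 - expand K q f₁ * (X ^ q * S ^ 2 + 2 * S * s 0) -
          expand K q f₁.divX * s 0 ^ 2, by
          linear_combination (-1) * h' - s 0 ^ 2 * hexp1⟩
      have := natDegree_le_of_dvd hd (mul_ne_zero (C_ne_zero.2 h1) (pow_ne_zero _ hne))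
      rw [natDegree_X_pow, natDegree_C_mul h1, natDegree_pow] at this
      have := hs 0
      omega
    rw [hs0, add_zero] at h
    have h'' : f * R ^ 2 = expand K q f * S ^ 2 := by
      apply mul_left_cancel₀ (pow_ne_zero 2 hX)
      linear_combination h
    have := ih (fun j => r (j + 1)) (fun j => s (j + 1)) (fun j => hr _) (fun j => hs _) h''
    intro j hj
    rcases j with _ | j
    · exact ⟨hr0, hs0⟩
    · exact this j (by omega)

lemma pow_dvd_of_hasseDeriv_eval {K : Type*} [Field K] (R : K[X]) (x : K) (l : ℕ)
    (h : ∀ k < l, (hasseDeriv k R).eval x = 0) : (X - C x) ^ l ∣ R := by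
  rw [X_sub_C_pow_dvd_iff, ← taylor_apply, X_pow_dvd_iff]
  intro k hk
  rw [taylor_coeff, h k hk]

lemma card_mul_le_natDegree {K : Type*} [Field K] (R : K[X]) (hR : R ≠ 0) (s : Finset K) (l : ℕ)
    (h : ∀ x ∈ s, (X - C x) ^ l ∣ R) : l * s.card ≤ R.natDegree := by
  have hd : ∏ x ∈ s, (X - C x) ^ l ∣ R := by
    refine Finset.prod_dvd_of_coprime ?_ h
    intro x _ y _ hxy
    exact (isCoprime_X_sub_C_of_isUnit_sub (sub_ne_zero.2 hxy).isUnit).pow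
  have := natDegree_le_of_dvd hd hR
  rw [natDegree_prod_of_monic _ _ fun i _ => (monic_X_sub_C _).pow _] at this
  simpa [natDegree_pow, mul_comm] using this

/-! ### Stepanov's method -/

/-- Hasse derivatives of order less than `q` treat `x ^ q` as a constant. -/
lemma hasseDeriv_eval_mul_X_pow_card {K : Type*} [Field K] [Fintype K] (P : K[X]) (x : K) (j k : ℕ)
    (hk : k < Fintype.card K) :
    (hasseDeriv k (P * X ^ (Fintype.card K * j))).eval x = x ^ j * (hasseDeriv k P).eval x := by
  set q := Fintype.card K
  have ht : taylor x (X ^ q : K[X]) = X ^ q + C x := by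
    have h := FiniteField.expand_card (X + C x : K[X])
    rw [map_add, expand_X, expand_C] at h
    rw [taylor_pow, taylor_X, ← h]
  obtain ⟨w, hw⟩ : (X ^ q : K[X]) ∣ (X ^ q + C x) ^ j - C x ^ j := by
    have := sub_dvd_pow_sub_pow (X ^ q + C x : K[X]) (C x) j
    rwa [add_sub_cancel_right] at this
  rw [← taylor_coeff, ← taylor_coeff, taylor_mul, pow_mul, taylor_pow, ht, sub_eq_iff_eq_add.1 hw,
    mul_add, coeff_add, ← C_pow, mul_comm _ (C _), coeff_C_mul, mul_left_comm, coeff_X_pow_mul',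
    if_neg (by omega), zero_add]

/-- Stepanov's auxiliary polynomial
`R = ∑_{j ≤ L} (f ^ l r_j + f ^ (l + (q - 1) / 2) s_j) x ^ (q j)`, with `l = 2L`: the linear
conditions that force `R` to vanish to order `2L` at every `x` with
`f(x)^((q-1)/2) = a` are fewer than the free coefficients of `R`. -/
lemma stepanov_exists {K : Type*} [Field K] [Fintype K] (hK : Odd (Fintype.card K)) (f f₁ : K[X])
    (hf : f = X * f₁) (h1 : f₁.coeff 0 ≠ 0) (M L : ℕ) (hM : f.natDegree ≤ M)
    (hbig : M + 2 + 2 * (L * (2 * L * M + L + 1)) ≤ Fintype.card K) (a : K) :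
    2 * L * (Finset.univ.filter fun x : K => f.eval x ^ (Fintype.card K / 2) = a).card ≤
      (2 * L + Fintype.card K / 2) * M + Fintype.card K + Fintype.card K * L := by
  set q := Fintype.card K with hq
  have hf1 : f₁ ≠ 0 := by rintro rfl; simp at h1
  have hf0 : f ≠ 0 := by rw [hf]; exact mul_ne_zero X_ne_zero hf1
  set l := 2 * L with hl
  set A := (q - M) / 2 with hA
  set B := A + l * M + (L + 1) with hB
  set N := l + q / 2 with hN
  have hlq : l ≤ q := by
    have : L * (l * M + L + 1) = L * (l * M + L) + L := by ring
    omega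
  choose T hT hTd using fun k : Fin l => exists_hasseDeriv_quotient f hf0 l k k.2.le
  choose T' hT' hTd' using fun k : Fin l =>
    exists_hasseDeriv_quotient f hf0 N k (k.2.le.trans (Nat.le_add_right _ _))
  let V := (Fin (L + 1) → degreeLT K A) × (Fin (L + 1) → degreeLT K A)
  -- `Φp k v` is the polynomial of degree less than `B` whose vanishing makes the `k`-th Hasse
  -- derivative of `R` vanish at the points in question, where `x ^ q = x` and `f ^ (q / 2) = a`.
  let Φp : Fin l → V →ₗ[K] K[X] := fun k => ∑ j : Fin (L + 1),
    (LinearMap.mulRight K (X ^ (j : ℕ))) ∘ₗ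
      (T k ∘ₗ (degreeLT K A).subtype ∘ₗ LinearMap.proj j ∘ₗ LinearMap.fst K _ _ +
        a • (T' k ∘ₗ (degreeLT K A).subtype ∘ₗ LinearMap.proj j ∘ₗ LinearMap.snd K _ _))
  have hΦp : ∀ k (v : V), Φp k v =
      ∑ j : Fin (L + 1), (T k (v.1 j) + a • T' k (v.2 j)) * X ^ (j : ℕ) := by
    intro k v
    simp [Φp, LinearMap.sum_apply]
    rfl
  have hApos : 0 < A := by omega
  have hdeg : ∀ p : degreeLT K A, (p : K[X]).natDegree < A := by
    intro p
    have := mem_degreeLT.1 p.2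
    by_cases h0 : (p : K[X]) = 0
    · rw [h0, natDegree_zero]; exact hApos
    · exact (natDegree_lt_iff_degree_lt h0).2 this
  have hΦdeg : ∀ k v, (Φp k v).natDegree < B := by
    intro k v
    rw [hΦp]
    have : (∑ j : Fin (L + 1), (T k (v.1 j) + a • T' k (v.2 j)) * X ^ (j : ℕ)).natDegree ≤
        B - 1 := by
      refine natDegree_sum_le_of_forall_le _ _ fun j _ => ?_
      have hkM : (k : ℕ) * f.natDegree ≤ l * M := Nat.mul_le_mul k.2.le hM
      have h1 := hTd k (v.1 j)
      have h2 := (natDegree_smul_le a (T' k (v.2 j))).trans (hTd' k (v.2 j))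
      have h3 := hdeg (v.1 j)
      have h4 := hdeg (v.2 j)
      have h5 := natDegree_mul_le (p := T k (v.1 j) + a • T' k (v.2 j)) (q := X ^ (j : ℕ))
      have h6 := natDegree_add_le (T k (v.1 j)) (a • T' k (v.2 j))
      rw [natDegree_X_pow] at h5
      have := j.2
      omega
    omega
  let Φ : V →ₗ[K] (Fin l → Fin B → K) :=
    LinearMap.pi fun k => LinearMap.pi fun i => lcoeff K i ∘ₗ Φp k
  have hrank : Module.finrank K (Fin l → Fin B → K) < Module.finrank K V := by
    have h1 : Module.finrank K (degreeLT K A) = A := by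
      rw [(degreeLTEquiv K A).finrank_eq]; simp
    have h2 : Module.finrank K V = (L + 1) * A + (L + 1) * A := by
      rw [Module.finrank_prod, Module.finrank_pi_fintype]
      simp [h1]
    have h3 : Module.finrank K (Fin l → Fin B → K) = l * B := by
      rw [Module.finrank_pi_fintype]
      simp
    rw [h2, h3]
    have h4 : L * (l * M + L + 1) < A := by omega
    have h5 : l * B = 2 * (L * A) + 2 * (L * (l * M + L + 1)) := by rw [hB, hl]; ring
    have h6 : (L + 1) * A = L * A + A := by ring
    omega
  have : FiniteDimensional K (degreeLT K A) := (degreeLTEquiv K A).symm.finiteDimensional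
  obtain ⟨v, hv, hv0⟩ := Submodule.exists_mem_ne_zero_of_ne_bot
    (LinearMap.ker_ne_bot_of_finrank_lt (f := Φ) hrank)
  have hΦ0 : ∀ k, Φp k v = 0 := by
    intro k
    ext i
    by_cases hi : i < B
    · have := congrFun (congrFun (LinearMap.mem_ker.1 hv) k) ⟨i, hi⟩
      simpa [Φ] using this
    · rw [coeff_eq_zero_of_natDegree_lt (by have := hΦdeg k v; omega), coeff_zero]
  let r : ℕ → K[X] := fun j => if h : j < L + 1 then v.1 ⟨j, h⟩ else 0
  let s : ℕ → K[X] := fun j => if h : j < L + 1 then v.2 ⟨j, h⟩ else 0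
  have hr : ∀ j, (r j).natDegree < A := by
    intro j
    by_cases h : j < L + 1
    · simpa only [r, dif_pos h] using hdeg _
    · simpa only [r, dif_neg h, natDegree_zero] using hApos
  have hs : ∀ j, (s j).natDegree < A := by
    intro j
    by_cases h : j < L + 1
    · simpa only [s, dif_pos h] using hdeg _
    · simpa only [s, dif_neg h, natDegree_zero] using hApos
  let R : K[X] := ∑ j ∈ Finset.range (L + 1), (f ^ l * r j + f ^ N * s j) * X ^ (q * j)
  have hR : R ≠ 0 := by
    intro hR0
    have hsplit : R = f ^ l * (∑ j ∈ Finset.range (L + 1), r j * X ^ (q * j) +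
        f ^ (q / 2) * ∑ j ∈ Finset.range (L + 1), s j * X ^ (q * j)) := by
      simp only [R, mul_add, Finset.mul_sum, ← Finset.sum_add_distrib]
      refine Finset.sum_congr rfl fun j _ => ?_
      rw [hN, pow_add]; ring
    have h2 := (mul_eq_zero.1 (hsplit.symm.trans hR0)).resolve_left (pow_ne_zero _ hf0)
    have hfq : expand K q f = f * (f ^ (q / 2)) ^ 2 := by
      rw [FiniteField.expand_card, ← pow_mul, ← pow_succ']
      congr 1
      obtain ⟨c, hc⟩ := hK
      omega
    have h3 := stepanov_nonvanishing f f₁ hf h1 A q (by omega) (L + 1) r s hr hs (by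
      rw [eq_neg_of_add_eq_zero_left h2, hfq]; ring)
    apply hv0
    refine Prod.ext (funext fun j => Subtype.ext ?_) (funext fun j => Subtype.ext ?_)
    · change (v.1 j : K[X]) = 0
      have := (h3 j j.2).1
      simpa only [r, dif_pos j.2] using this
    · change (v.2 j : K[X]) = 0
      have := (h3 j j.2).2
      simpa only [s, dif_pos j.2] using this
  have hRdeg : R.natDegree ≤ (l + q / 2) * M + q + q * L := by
    refine natDegree_sum_le_of_forall_le _ _ fun j hj => ?_
    have hjL : q * j ≤ q * L := Nat.mul_le_mul_left _ (by have := Finset.mem_range.1 hj; omega)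
    have h5 := natDegree_mul_le (p := f ^ l * r j + f ^ N * s j) (q := X ^ (q * j))
    have h6 := natDegree_add_le (f ^ l * r j) (f ^ N * s j)
    have h7 := natDegree_mul_le (p := f ^ l) (q := r j)
    have h8 := natDegree_mul_le (p := f ^ N) (q := s j)
    rw [natDegree_pow] at h7 h8
    rw [natDegree_X_pow] at h5
    have h9 : l * f.natDegree ≤ N * M := Nat.mul_le_mul (Nat.le_add_right _ _) hM
    have h10 : N * f.natDegree ≤ N * M := Nat.mul_le_mul_left _ hM
    have := hr j
    have := hs j
    have : A ≤ q := by omega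
    rw [← hN]
    omega
  refine le_trans (card_mul_le_natDegree R hR _ l fun x hx => ?_) hRdeg
  refine pow_dvd_of_hasseDeriv_eval _ _ _ fun k hk => ?_
  have hxa := (Finset.mem_filter.1 hx).2
  have hz := congrArg (eval x) (hΦ0 ⟨k, hk⟩)
  rw [hΦp, eval_zero, eval_finsetSum] at hz
  simp only [R, map_sum, eval_finsetSum, hq, hasseDeriv_eval_mul_X_pow_card _ x _ k (by omega)]
  rw [Finset.sum_range, ← mul_zero (f.eval x ^ (l - k)), ← hz, Finset.mul_sum]
  refine Finset.sum_congr rfl fun j _ => ?_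
  have e1 := hT ⟨k, hk⟩ (r j)
  have e2 := hT' ⟨k, hk⟩ (s j)
  have hNk : N - k = (l - k) + q / 2 := by omega
  simp only at e1 e2
  rw [map_add, e1, e2, hNk, pow_add]
  simp only [eval_add, eval_mul, eval_pow, eval_smul, eval_X, smul_eq_mul, hxa, r, s, dif_pos j.2]
  ring

/-- A Weil-type bound by Stepanov's method: `∑ χ(f(x)) = O(deg f) + O(q deg f / L)` when `f` has
a simple zero at `0`. The bound need only be `o(q)`. -/
lemma quadraticChar_sum_bound {K : Type*} [Field K] [Fintype K] (hK : Odd (Fintype.card K))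
    (f f₁ : K[X]) (hf : f = X * f₁) (h1 : f₁.coeff 0 ≠ 0) (M L : ℕ) (hM : f.natDegree ≤ M)
    (hbig : M + 2 + 2 * (L * (2 * L * M + L + 1)) ≤ Fintype.card K) :
    2 * L * |∑ x : K, quadraticChar K (f.eval x)| ≤ 6 * L * M + Fintype.card K * (M + 2) := by
  have hchar : ringChar K ≠ 2 := fun h => by
    have := FiniteField.even_card_of_char_two h
    rw [Nat.odd_iff] at hK; omega
  have hf0 : f ≠ 0 := by
    rintro rfl
    rcases mul_eq_zero.1 hf.symm with h | h
    · exact X_ne_zero h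
    · simp [h] at h1
  have key := stepanov_exists hK f f₁ hf h1 M L hM hbig
  set q := Fintype.card K with hq
  have hA : ∀ a : ℤ, a = 1 ∨ a = -1 → 2 * L * (Finset.univ.filter fun x : K =>
      quadraticChar K (f.eval x) = a).card ≤ (2 * L + q / 2) * M + q + q * L := by
    intro a ha
    refine (Nat.mul_le_mul_left _ (Finset.card_le_card ?_)).trans (key (a : K))
    intro x hx
    have hx := (Finset.mem_filter.1 hx).2
    refine Finset.mem_filter.2 ⟨Finset.mem_univ _, ?_⟩
    rw [hq, ← quadraticChar_eq_pow_of_char_ne_two' hchar, hx]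
  have hA1 := hA 1 (Or.inl rfl)
  have hA2 := hA (-1) (Or.inr rfl)
  have hA0 : (Finset.univ.filter fun x : K => quadraticChar K (f.eval x) = 0).card ≤ M := by
    refine le_trans (Finset.card_le_card (t := f.roots.toFinset) ?_)
      ((Multiset.toFinset_card_le _).trans ((card_roots' f).trans hM))
    intro x hx
    have hx := (Finset.mem_filter.1 hx).2
    rw [Multiset.mem_toFinset, mem_roots hf0]
    exact quadraticChar_eq_zero_iff.1 hx
  have hval : ∀ y : K, quadraticChar K y = 0 ∨ quadraticChar K y = 1 ∨ quadraticChar K y = -1 := by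
    intro y
    by_cases h : y = 0
    · left; rw [h]; exact quadraticChar_eq_zero_iff.2 rfl
    · right; exact quadraticChar_dichotomy h
  set N0 := (Finset.univ.filter fun x : K => quadraticChar K (f.eval x) = 0).card with hN0
  set N1 := (Finset.univ.filter fun x : K => quadraticChar K (f.eval x) = 1).card with hN1
  set N2 := (Finset.univ.filter fun x : K => quadraticChar K (f.eval x) = -1).card with hN2
  have hsum : ∑ x : K, quadraticChar K (f.eval x) = (N1 : ℤ) - N2 := by
    rw [hN1, hN2, Finset.card_filter, Finset.card_filter]
    push_cast
    rw [← Finset.sum_sub_distrib]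
    refine Finset.sum_congr rfl fun x _ => ?_
    rcases hval (f.eval x) with h | h | h <;> rw [h] <;> norm_num
  have htot : (q : ℤ) = N0 + N1 + N2 := by
    rw [hN0, hN1, hN2, Finset.card_filter, Finset.card_filter, Finset.card_filter, hq,
      ← Finset.card_univ, Finset.card_eq_sum_ones]
    push_cast
    rw [← Finset.sum_add_distrib, ← Finset.sum_add_distrib]
    refine Finset.sum_congr rfl fun x _ => ?_
    rcases hval (f.eval x) with h | h | h <;> rw [h] <;> norm_num
  rw [hsum]
  have hq2 : 2 * ((q / 2 * M : ℕ) : ℤ) ≤ q * M := by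
    have : 2 * (q / 2 * M) ≤ q * M := by
      rw [← mul_assoc]; exact Nat.mul_le_mul_right _ (Nat.mul_div_le q 2)
    exact_mod_cast this
  have hLN0 : (L : ℤ) * N0 ≤ L * M := by
    exact_mod_cast Nat.mul_le_mul_left L hA0
  have hB1 : 2 * (L : ℤ) * N1 ≤ 2 * L * M + (q / 2 * M : ℕ) + q + q * L := by
    rw [add_mul] at hA1; exact_mod_cast hA1
  have hB2 : 2 * (L : ℤ) * N2 ≤ 2 * L * M + (q / 2 * M : ℕ) + q + q * L := by
    rw [add_mul] at hA2; exact_mod_cast hA2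
  have hqL : (q : ℤ) * L = L * N0 + L * N1 + L * N2 := by rw [htot]; ring
  rcases abs_cases ((N1 : ℤ) - N2) with ⟨h, _⟩ | ⟨h, _⟩ <;> rw [h] <;> nlinarith

/-! ### The discriminant along a line -/

lemma monic_pencil {K S : Type*} [Field K] [CommRing S] [Nontrivial S] (φ : K →+* S) (c : S)
    {G g : K[X]} (hG : G.Monic) (hg : g.degree < G.degree) :
    (G.map φ + C c * g.map φ).Monic ∧ (G.map φ + C c * g.map φ).natDegree = G.natDegree := by
  have h1 : (C c * g.map φ).degree < (G.map φ).degree := by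
    rw [hG.degree_map φ]
    refine lt_of_le_of_lt ((degree_mul_le _ _).trans ?_) hg
    calc (C c).degree + (g.map φ).degree ≤ 0 + g.degree :=
          add_le_add degree_C_le degree_map_le
      _ = g.degree := zero_add _
  refine ⟨(hG.map φ).add_of_left h1, ?_⟩
  rw [natDegree_eq_of_degree_eq (degree_add_eq_left_of_degree_lt h1), hG.natDegree_map]

/-- The discriminant (up to sign) along the line `t ↦ G + t g`, as a polynomial in `t`. -/
def lineDisc {K : Type*} [Field K] (G g : K[X]) : K[X] := dres (G.map C + C X * g.map C)

lemma map_pencil {K S : Type*} [Field K] [CommRing S] (ψ : K[X] →+* S) (G g : K[X]) :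
    (G.map C + C X * g.map C).map ψ = G.map (ψ.comp C) + C (ψ X) * g.map (ψ.comp C) := by
  simp [Polynomial.map_map]

lemma lineDisc_eval {K : Type*} [Field K] {G g : K[X]} (hG : G.Monic) (hg : g.degree < G.degree)
    (t : K) : (lineDisc G g).eval t = dres (G + C t * g) := by
  have h := dres_map (evalRingHom t) (monic_pencil C X hG hg).1
  have hid : (evalRingHom t).comp (C : K →+* K[X]) = RingHom.id K := by ext; simp
  rw [map_pencil, hid, Polynomial.map_id, Polynomial.map_id, coe_evalRingHom, eval_X] at h
  exact h.symm

lemma lineDisc_natDegree {K : Type*} [Field K] {G g : K[X]} (hG : G.Monic)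
    (hg : g.degree < G.degree) : (lineDisc G g).natDegree ≤ 2 * G.natDegree := by
  obtain ⟨hm, hn⟩ := monic_pencil (C : K →+* K[X]) X hG hg
  rw [lineDisc, ← dres_eq_of_natDegree hm hn]
  have hs : sylvester (G.map C + C X * g.map C) (derivative (G.map C + C X * g.map C))
      G.natDegree (G.natDegree - 1) =
      ((X : K[X]) • (sylvester g (derivative g) G.natDegree (G.natDegree - 1)).map C +
        (sylvester G (derivative G) G.natDegree (G.natDegree - 1)).map C) := by
    ext1 i j
    simp only [sylvester, Matrix.of_apply, Matrix.add_apply, Matrix.smul_apply, Matrix.map_apply,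
      derivative_add, derivative_C_mul, coeff_add, coeff_C_mul, derivative_map, coeff_map,
      smul_eq_mul]
    refine Fin.addCases (fun j => ?_) (fun j => ?_) j
    · simp only [Fin.addCases_left]
      split_ifs
      · ring
      · simp
    · simp only [Fin.addCases_right]
      split_ifs
      · ring
      · simp
  rw [resultant, hs]
  refine (natDegree_det_X_add_C_le _ _).trans ?_
  rw [Fintype.card_fin]
  omega

lemma dres_quadratic {R : Type*} [CommRing R] [Nontrivial R] (b c : R) :
    dres (X ^ 2 + C b * X + C c) = 4 * c - b ^ 2 := by
  have hd : (X ^ 2 + C b * X + C c : R[X]).degree = 2 := by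
    simpa using degree_quadratic (a := (1 : R)) (b := b) (c := c) one_ne_zero
  have hn : (X ^ 2 + C b * X + C c : R[X]).natDegree = 2 := natDegree_eq_of_degree_eq_some hd
  have hm : (X ^ 2 + C b * X + C c : R[X]).Monic := by
    rw [Monic, leadingCoeff, hn]; simp
  rw [← dres_eq_of_natDegree hm rfl, resultant_deriv (by rw [hd]; norm_num),
    discr_of_degree_eq_two hd, hn, hm.leadingCoeff]
  simp

/-- The ring homomorphism `K[t] → K[t]/(t²)` onto the dual numbers. -/
def toDual (K : Type*) [Field K] : K[X] →+* DualNumber K :=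
  eval₂RingHom (TrivSqZeroExt.inlHom K K) DualNumber.eps

lemma toDual_fst {K : Type*} [Field K] (p : K[X]) : (toDual K p).fst = p.coeff 0 := by
  have hX : toDual K X = DualNumber.eps := by simp [toDual]
  have hC : toDual K (C (p.coeff 0)) = TrivSqZeroExt.inl (p.coeff 0) := by simp [toDual]
  conv_lhs => rw [← X_mul_divX_add p, map_add, map_mul, hX, hC]
  simp

lemma toDual_snd {K : Type*} [Field K] (p : K[X]) : (toDual K p).snd = p.coeff 1 := by
  have h : p.divX.coeff 0 = p.coeff 1 := by simp [coeff_divX]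
  have hX : toDual K X = DualNumber.eps := by simp [toDual]
  have hC : toDual K (C (p.coeff 0)) = TrivSqZeroExt.inl (p.coeff 0) := by simp [toDual]
  rw [← h, ← toDual_fst]
  conv_lhs => rw [← X_mul_divX_add p, map_add, map_mul, hX, hC]
  simp

/-- Modulo `h (x - ρ)²` with `h(ρ) ≠ 0`, every `g` of low degree splits as
`u h + v (x - ρ)²` with low-degree `u`, `v`. -/
lemma partial_fractions {K : Type*} [Field K] {h g : K[X]} (ρ : K) (hh : h.Monic)
    (hρ : h.eval ρ ≠ 0) (hg : g.degree < ((X - C ρ) ^ 2 * h).degree) :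
    ∃ u v : K[X], g = u * h + v * (X - C ρ) ^ 2 ∧ u.degree < ((X - C ρ) ^ 2).degree ∧
      v.degree < h.degree := by
  have hm : ((X - C ρ) ^ 2 : K[X]).Monic := (monic_X_sub_C ρ).pow 2
  have hc : IsCoprime ((X - C ρ) ^ 2) h := by
    refine IsCoprime.pow_left ((irreducible_X_sub_C ρ).coprime_iff_not_dvd.2 ?_)
    rwa [dvd_iff_isRoot]
  obtain ⟨a, b, hab⟩ := hc
  set P : K[X] := (X - C ρ) ^ 2 with hP
  have hdiv := modByMonic_add_div (g * b) P
  have hu : (g * b %ₘ P).degree < P.degree := degree_modByMonic_lt _ hm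
  have hgu : g = (g * b %ₘ P) * h + (g * a + h * (g * b /ₘ P)) * P := by
    linear_combination (-g) * hab - h * hdiv
  refine ⟨g * b %ₘ P, g * a + h * (g * b /ₘ P), hgu, hu, ?_⟩
  set u := g * b %ₘ P
  set v := g * a + h * (g * b /ₘ P)
  have h1 : (u * h).degree < (P * h).degree := by
    rw [degree_mul, degree_mul]
    exact WithBot.add_lt_add_right (degree_ne_bot.2 hh.ne_zero) hu
  have h2 : (v * P).degree < (P * h).degree := by
    rw [show v * P = g - u * h by rw [eq_sub_iff_add_eq, add_comm]; exact hgu.symm]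
    exact (degree_sub_le _ _).trans_lt (max_lt hg h1)
  rw [mul_comm P, degree_mul, degree_mul] at h2
  exact lt_of_add_lt_add_right h2

/-- The discriminant hypersurface is smooth at `(x - ρ)² h` with `h(ρ) ≠ 0` and `h` separable, and
the lines in direction `g` with `g(ρ) ≠ 0` are transverse to it. The proof factors
`(x - ρ)² h + t g` modulo `t²`. -/
lemma lineDisc_simple_zero {K : Type*} [Field K] (h2 : (2 : K) ≠ 0) {h g : K[X]} (ρ : K)
    (hh : h.Monic) (hsep : h.Separable) (hρ : h.eval ρ ≠ 0) (hgρ : g.eval ρ ≠ 0)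
    (hg : g.degree < ((X - C ρ) ^ 2 * h).degree) :
    (lineDisc ((X - C ρ) ^ 2 * h) g).coeff 0 = 0 ∧
      (lineDisc ((X - C ρ) ^ 2 * h) g).coeff 1 ≠ 0 := by
  obtain ⟨u, v, hguv, hu, hv⟩ := partial_fractions ρ hh hρ hg
  have hm : ((X - C ρ) ^ 2 : K[X]).Monic := (monic_X_sub_C ρ).pow 2
  set P : K[X] := (X - C ρ) ^ 2 with hP
  let ι : K →+* DualNumber K := TrivSqZeroExt.inlHom K K
  have hε : (DualNumber.eps : DualNumber K) * DualNumber.eps = 0 := DualNumber.eps_mul_eps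
  obtain ⟨m1, n1⟩ := monic_pencil ι DualNumber.eps hm hu
  obtain ⟨m2, n2⟩ := monic_pencil ι DualNumber.eps hh hv
  set P1 := P.map ι + C DualNumber.eps * u.map ι with hP1
  set P2 := h.map ι + C DualNumber.eps * v.map ι with hP2
  have hφC : (toDual K).comp C = ι := by ext <;> simp [toDual, ι]
  have hφX : toDual K X = DualNumber.eps := by simp [toDual]
  have hφ : toDual K (lineDisc (P * h) g) = dres (P1 * P2) := by
    rw [lineDisc, ← dres_map _ (monic_pencil C X (hm.mul hh) hg).1, map_pencil, hφC, hφX]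
    congr 1
    have hCε : (C (DualNumber.eps : DualNumber K)) * C DualNumber.eps = 0 := by
      rw [← C_mul, hε, C_0]
    rw [hP1, hP2]
    conv_lhs => rw [hguv]
    simp only [Polynomial.map_mul, Polynomial.map_add]
    linear_combination (-(u.map ι * v.map ι)) * hCε
  have hfstι : (TrivSqZeroExt.fstHom K K K).toRingHom.comp ι = RingHom.id K := by ext; simp [ι]
  have hfst : ∀ A B : K[X], (A.map ι + C DualNumber.eps * B.map ι).map
      (TrivSqZeroExt.fstHom K K K).toRingHom = A := by
    intro A B
    rw [Polynomial.map_add, Polynomial.map_mul, Polynomial.map_map, hfstι]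
    simp
  have e1 : (dres P2).fst = dres h := by
    have := dres_map (TrivSqZeroExt.fstHom K K K).toRingHom m2
    rw [hP2, hfst] at this
    exact this.symm
  have e2 : (resultant P1 P2).fst = h.eval ρ ^ 2 := by
    have := resultant_monic_map (TrivSqZeroExt.fstHom K K K).toRingHom m1 P2
    rw [hP1, hP2, hfst, hfst] at this
    have h3 := resultant_X_sub_C_pow_left ρ h 2 h.natDegree le_rfl
    have h4 : P.natDegree = 2 := by rw [hP, natDegree_pow, natDegree_X_sub_C]
    have h5 : resultant P h = h.eval ρ ^ 2 := by rw [h4]; exact h3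
    exact this.symm.trans h5
  have hu1 : u = C (u.coeff 1) * X + C (u.coeff 0) := by
    refine eq_X_add_C_of_degree_le_one ?_
    have : P.degree = 2 := by rw [hP, degree_pow, degree_X_sub_C]; rfl
    rw [this] at hu
    exact Order.lt_succ_iff.1 hu
  have hP1q : P1 = X ^ 2 + C (-2 * ι ρ + DualNumber.eps * ι (u.coeff 1)) * X +
      C (ι ρ ^ 2 + DualNumber.eps * ι (u.coeff 0)) := by
    rw [hP1, hP]
    conv_lhs => rw [hu1]
    have hC2 : C (2 : DualNumber K) = 2 := map_ofNat C 2
    simp [hC2]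
    ring
  have huρ : u.eval ρ ≠ 0 := by
    intro h0
    apply hgρ
    rw [hguv, eval_add, eval_mul, h0, hP]
    simp
  have e3 : (dres P1).fst = 0 ∧ (dres P1).snd = 4 * u.eval ρ := by
    have hx : u.eval ρ = u.coeff 1 * ρ + u.coeff 0 := by
      conv_lhs => rw [hu1]
      simp
    have : dres P1 = DualNumber.eps * ι (4 * u.eval ρ) := by
      rw [hP1q, dres_quadratic, hx]
      simp only [map_mul, map_add, map_ofNat]
      linear_combination (-(ι (u.coeff 1)) ^ 2) * hε
    rw [this]
    simp [ι]
  have e4 : ((-1 : DualNumber K) ^ (P1.natDegree * P2.natDegree)).fst ≠ 0 := by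
    rw [TrivSqZeroExt.fst_pow]
    simp
  rw [← toDual_fst, ← toDual_snd, hφ, dres_mul m1 m2]
  constructor
  · simp [e3.1]
  · rw [mul_assoc, DualNumber.snd_mul, e3.1, e3.2]
    simp only [TrivSqZeroExt.fst_mul, sq, e1, e2]
    have := (dres_ne_zero_iff hh).2 hsep
    have h4 : (4 : K) ≠ 0 := by
      rw [show (4 : K) = 2 * 2 by norm_num]; exact mul_ne_zero h2 h2
    simp [this, hρ, huρ, h4]

/-! ### The choice of the base point -/

/-- If `(x - ρ)² h + β` has a double root `σ`, then eliminating `ρ` shows that `σ` is a root of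
`(β h' - β' h)² + 4 β h³`, and each such `σ` comes from at most two values of `ρ`. -/
lemma card_inseparable_le {K : Type*} [Field K] [Fintype K] (h2 : (2 : K) ≠ 0) {h β : K[X]}
    (hh : h.Monic) (hsep : h.Separable) (hβ0 : β ≠ 0) (hβ : β.natDegree < h.natDegree + 2) :
    (Finset.univ.filter fun ρ : K => ¬ ((X - C ρ) ^ 2 * h + β).Separable).card ≤
      8 * (h.natDegree + 2) := by
  set V := β * derivative h - derivative β * h with hV
  -- As `deg V < deg β + deg h` and `deg β < deg h + 2`, the two terms of `W` cannot cancel.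
  set W := V ^ 2 + 4 * (β * h ^ 3) with hW
  have h4 : (4 : K) ≠ 0 := by
    rw [show (4 : K) = 2 * 2 by norm_num]; exact mul_ne_zero h2 h2
  have hC4 : (4 : K[X]) = C 4 := (map_ofNat C 4).symm
  have hVdeg : V.degree < (β * h).degree := by
    refine (degree_sub_le _ _).trans_lt (max_lt ?_ ?_)
    · rw [degree_mul, degree_mul]
      exact WithBot.add_lt_add_left (degree_ne_bot.2 hβ0) (degree_derivative_lt hh.ne_zero)
    · rw [degree_mul, degree_mul]
      exact WithBot.add_lt_add_right (degree_ne_bot.2 hh.ne_zero) (degree_derivative_lt hβ0)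
  have hβh : (β * h ^ 3).natDegree = β.natDegree + 3 * h.natDegree := by
    rw [natDegree_mul hβ0 (pow_ne_zero _ hh.ne_zero), natDegree_pow]
  have hW0 : W ≠ 0 := by
    intro h0
    have e1 : V ^ 2 = C (-4) * (β * h ^ 3) := by
      rw [hW, hC4] at h0
      rw [C_neg]; linear_combination h0
    have e2 := congrArg natDegree e1
    rw [natDegree_pow, natDegree_C_mul (neg_ne_zero.2 h4), hβh] at e2
    have hV0 : V ≠ 0 := by
      intro hV0
      rw [hV0, zero_pow two_ne_zero] at e1
      exact mul_ne_zero (C_ne_zero.2 (neg_ne_zero.2 h4))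
        (mul_ne_zero hβ0 (pow_ne_zero _ hh.ne_zero)) e1.symm
    have e3 := natDegree_lt_natDegree hV0 hVdeg
    rw [natDegree_mul hβ0 hh.ne_zero] at e3
    omega
  have hWdeg : W.natDegree ≤ 4 * (h.natDegree + 2) := by
    have e3 := natDegree_le_natDegree hVdeg.le
    rw [natDegree_mul hβ0 hh.ne_zero] at e3
    refine natDegree_add_le_of_degree_le ?_ ?_
    · rw [natDegree_pow]; omega
    · rw [hC4, natDegree_C_mul h4, hβh]; omega
  let L := AlgebraicClosure K
  let ι := algebraMap K L
  let S : Finset L := (W.map ι).roots.toFinset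
  have hS : S.card ≤ 4 * (h.natDegree + 2) :=
    (Multiset.toFinset_card_le _).trans ((card_roots' _).trans (natDegree_map_le.trans hWdeg))
  -- The values of `ρ` belonging to a given double root `σ` are among the roots of `Q σ`; the second
  -- equation replaces the first one when `h` vanishes at `σ` and the first one is degenerate.
  let Q : L → L[X] := fun σ => if aeval σ h = 0 then
      C (aeval σ (derivative h)) * (X - C σ) ^ 2 + C (aeval σ (derivative β)) else
      C (aeval σ h) * (X - C σ) ^ 2 + C (aeval σ β)
  have hquad : ∀ a b σ : L, a ≠ 0 → (C a * (X - C σ) ^ 2 + C b).natDegree = 2 := by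
    intro a b σ ha
    rw [natDegree_add_C, natDegree_C_mul ha, natDegree_pow, natDegree_X_sub_C]
  have hh' : ∀ σ : L, aeval σ h = 0 → aeval σ (derivative h) ≠ 0 := by
    intro σ h0
    have := (isCoprime_iff_aeval_ne_zero_of_isAlgClosed K L h (derivative h)).1 hsep σ
    tauto
  have hQ : ∀ σ, (Q σ).natDegree = 2 := by
    intro σ
    simp only [Q]
    split_ifs with h0
    · exact hquad _ _ _ (hh' σ h0)
    · exact hquad _ _ _ h0
  have hsub : (Finset.univ.filter fun ρ : K => ¬ ((X - C ρ) ^ 2 * h + β).Separable).image ι ⊆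
      S.biUnion fun σ => (Q σ).roots.toFinset := by
    intro y hy
    obtain ⟨ρ, hρ, rfl⟩ := Finset.mem_image.1 hy
    have hρ := (Finset.mem_filter.1 hρ).2
    rw [Polynomial.Separable, isCoprime_iff_aeval_ne_zero_of_isAlgClosed K L] at hρ
    push Not at hρ
    obtain ⟨σ, e1, e2⟩ := hρ
    simp only [derivative_mul, derivative_sq, derivative_X, derivative_C, map_add, map_mul,
      map_pow, map_sub, aeval_X, aeval_C, map_ofNat, sub_zero, mul_one] at e1 e2
    have hQ0 : Q σ ≠ 0 := by
      intro h0
      have := hQ σ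
      rw [h0, natDegree_zero] at this
      omega
    rw [Finset.mem_biUnion]
    refine ⟨σ, ?_, ?_⟩
    · rw [Multiset.mem_toFinset, mem_roots (by
        rwa [Ne, Polynomial.map_eq_zero]), IsRoot.def, eval_map_algebraMap]
      simp only [hW, hV, map_add, map_mul, map_pow, map_sub, map_ofNat]
      set y := σ - algebraMap K L ρ
      set H := aeval σ h
      set H' := aeval σ (derivative h)
      set B := aeval σ β
      set B' := aeval σ (derivative β)
      have e3 : B * H' - B' * H = 2 * y * H ^ 2 := by linear_combination H' * e1 - H * e2
      rw [e3]
      linear_combination (4 * H ^ 3) * e1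
    · rw [Multiset.mem_toFinset, mem_roots hQ0, IsRoot.def]
      simp only [Q]
      split_ifs with h0
      · rw [h0] at e2
        simp only [eval_add, eval_mul, eval_C, eval_pow, eval_sub, eval_X]
        linear_combination e2
      · simp only [eval_add, eval_mul, eval_C, eval_pow, eval_sub, eval_X]
        linear_combination e1
  rw [← Finset.card_image_of_injective _ ι.injective]
  refine (Finset.card_le_card hsub).trans ((Finset.card_biUnion_le_card_mul _ _ 2 ?_).trans ?_)
  · intro σ _
    exact (Multiset.toFinset_card_le _).trans ((card_roots' _).trans (hQ σ).le)
  · omega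

/-- For large `q` there is a point `F₀ = (x - ρ)² h` to which `lineDisc_simple_zero` applies, and
for which every translate `F₀ + β_j` with `β_j ≠ 0` is separable. -/
lemma exists_base_point {K : Type*} [Field K] [Fintype K] (h2 : (2 : K) ≠ 0) {n r : ℕ} (hn : 1 < n)
    (β : Fin r → K[X]) (hβ : ∀ j, (β j).natDegree < n)
    (hq : n + 8 * n * r < Fintype.card K) :
    ∃ (h : K[X]) (ρ : K), h.Monic ∧ h.natDegree + 2 = n ∧ h.Separable ∧ h.eval ρ ≠ 0 ∧
      ∀ j, β j ≠ 0 → ((X - C ρ) ^ 2 * h + β j).Separable := by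
  obtain ⟨s, -, hs⟩ := Finset.exists_subset_card_eq (s := (Finset.univ : Finset K)) (n := n - 2)
    (by rw [Finset.card_univ]; omega)
  set h : K[X] := ∏ c ∈ s, (X - C c) with hh
  have hm : h.Monic := monic_prod_of_monic _ _ fun c _ => monic_X_sub_C c
  have hd : h.natDegree + 2 = n := by
    rw [hh, natDegree_prod_of_monic _ _ fun c _ => monic_X_sub_C c]
    simp [hs]; omega
  have hsep : h.Separable := separable_prod_X_sub_C_iff'.2 fun x _ y _ hxy => hxy
  let bad : Finset K := s ∪ Finset.univ.biUnion fun j : Fin r =>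
    Finset.univ.filter fun ρ : K => β j ≠ 0 ∧ ¬ ((X - C ρ) ^ 2 * h + β j).Separable
  have hbad : bad.card < (Finset.univ : Finset K).card := by
    refine lt_of_le_of_lt (Finset.card_union_le _ _) ?_
    have : (Finset.univ.biUnion fun j : Fin r => Finset.univ.filter fun ρ : K =>
        β j ≠ 0 ∧ ¬ ((X - C ρ) ^ 2 * h + β j).Separable).card ≤
        (Finset.univ : Finset (Fin r)).card * (8 * n) := by
      refine Finset.card_biUnion_le_card_mul _ _ _ fun j _ => ?_
      by_cases h0 : β j = 0
      · simp [h0]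
      · refine le_trans (Finset.card_le_card ?_)
          ((card_inseparable_le h2 hm hsep h0 (by rw [hd]; exact hβ j)).trans (by rw [hd]))
        intro ρ hρ
        simp only [Finset.mem_filter] at hρ ⊢
        exact ⟨hρ.1, hρ.2.2⟩
    rw [Finset.card_fin, show r * (8 * n) = 8 * n * r by ring] at this
    rw [Finset.card_univ]
    omega
  obtain ⟨ρ, -, hρ⟩ := Finset.exists_mem_notMem_of_card_lt_card hbad
  simp only [bad, Finset.mem_union, Finset.mem_biUnion, Finset.mem_filter, Finset.mem_univ,
    true_and, not_or, not_exists, not_and, not_not] at hρ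
  refine ⟨h, ρ, hm, hd, hsep, ?_, fun j hj => hρ.2 j hj⟩
  rw [hh, eval_prod]
  refine Finset.prod_ne_zero_iff.2 fun c hc => ?_
  simp only [eval_sub, eval_X, eval_C]
  exact sub_ne_zero.2 fun e => hρ.1 (e ▸ hc)

/-! ### Summation over lines -/

lemma abs_polyMoebius_le_s1 {K : Type*} [Field K] (f : K[X]) : |polyMoebius f| ≤ 1 := by
  unfold polyMoebius
  split_ifs
  · rw [abs_pow]; simp
  · simp

lemma abs_prod_polyMoebius_le_s1 {K : Type*} [Field K] {r : ℕ} (G : Fin r → K[X]) (e : Fin r → ℕ) :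
    |∏ j, polyMoebius (G j) ^ e j| ≤ 1 := by
  rw [Finset.abs_prod]
  refine Finset.prod_le_one (fun _ _ => abs_nonneg _) fun j _ => ?_
  rw [abs_pow]
  exact pow_le_one₀ (abs_nonneg _) (abs_polyMoebius_le_s1 _)

lemma quadraticChar_trichotomy {K : Type*} [Field K] [Fintype K] (y : K) :
    quadraticChar K y = 0 ∨ quadraticChar K y = 1 ∨ quadraticChar K y = -1 := by
  by_cases h : y = 0
  · left; rw [h]; exact quadraticChar_eq_zero_iff.2 rfl
  · right; exact quadraticChar_dichotomy h

/-- Along a line the product of Möbius values is, by Pellet's formula, a constant sign times the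
quadratic character of the product `f` of the discriminants with exponent `1`, except at the zeros
of the remaining discriminants. -/
lemma line_sum_bound {K : Type*} [Field K] [Fintype K] (hK : Odd (Fintype.card K)) {n r : ℕ}
    (G : Fin r → K[X]) (hG : ∀ j, (G j).Monic) (hGn : ∀ j, (G j).natDegree = n) (g : K[X])
    (hg : g.degree < n) (e : Fin r → ℕ) (he : ∀ j, e j = 1 ∨ e j = 2) (j₀ : Fin r)
    (hj₀ : e j₀ = 1) (hD0 : (lineDisc (G j₀) g).coeff 0 = 0) (hD1 : (lineDisc (G j₀) g).coeff 1 ≠ 0)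
    (hsep : ∀ j, j ≠ j₀ → (G j).Separable) (L : ℕ)
    (hbig : 2 * n * r + 2 + 2 * (L * (2 * L * (2 * n * r) + L + 1)) ≤ Fintype.card K) :
    2 * L * |∑ t : K, ∏ j, polyMoebius (G j + C t * g) ^ e j| ≤
      8 * L * (2 * n * r) + Fintype.card K * (2 * n * r + 2) := by
  have hgG : ∀ j, g.degree < (G j).degree := fun j => by
    rw [degree_eq_natDegree (hG j).ne_zero, hGn]; exact hg
  set D : Fin r → K[X] := fun j => lineDisc (G j) g with hD
  have hDeval : ∀ j t, (D j).eval t = dres (G j + C t * g) := fun j t =>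
    lineDisc_eval (hG j) (hgG j) t
  have hDdeg : ∀ j, (D j).natDegree ≤ 2 * n := fun j => by
    have := lineDisc_natDegree (hG j) (hgG j)
    rwa [hGn] at this
  have hDcoeff : ∀ j, j ≠ j₀ → (D j).coeff 0 ≠ 0 := by
    intro j hj
    rw [coeff_zero_eq_eval_zero, hDeval]
    simpa using (dres_ne_zero_iff (hG j)).2 (hsep j hj)
  have hDne : ∀ j, D j ≠ 0 := by
    intro j h0
    by_cases hj : j = j₀
    · subst hj; apply hD1; change (D j).coeff 1 = 0; rw [h0, coeff_zero]
    · exact hDcoeff j hj (by rw [h0, coeff_zero])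
  set f : K[X] := ∏ j, (if e j = 1 then D j else 1) with hf
  set f₁ : K[X] := (D j₀).divX * ∏ j ∈ Finset.univ.erase j₀, (if e j = 1 then D j else 1) with hf₁
  have hff₁ : f = X * f₁ := by
    have hX : D j₀ = X * (D j₀).divX := by
      conv_lhs => rw [← X_mul_divX_add (D j₀)]
      have : (D j₀).coeff 0 = 0 := hD0
      rw [this, C_0, add_zero]
    rw [hf, ← Finset.mul_prod_erase _ _ (Finset.mem_univ j₀), if_pos hj₀, hf₁, ← mul_assoc, ← hX]
  have hf₁0 : f₁.coeff 0 ≠ 0 := by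
    rw [hf₁, mul_coeff_zero, coeff_divX]
    refine mul_ne_zero hD1 ?_
    rw [coeff_zero_eq_eval_zero, eval_prod]
    refine Finset.prod_ne_zero_iff.2 fun j hj => ?_
    split_ifs
    · rw [← coeff_zero_eq_eval_zero]; exact hDcoeff j (Finset.ne_of_mem_erase hj)
    · simp
  have hfdeg : f.natDegree ≤ 2 * n * r := by
    refine (natDegree_prod_le _ _).trans ?_
    calc _ ≤ ∑ _j : Fin r, 2 * n := Finset.sum_le_sum fun j _ => by
          split_ifs
          · exact hDdeg j
          · simp
      _ = 2 * n * r := by simp [mul_comm]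
  have hmain := quadraticChar_sum_bound hK f f₁ hff₁ hf₁0 _ L hfdeg hbig
  set σ : ℤ := (-1) ^ n * quadraticChar K ((-1) ^ (n.choose 2)) with hσ
  have hσ1 : σ ^ 2 = 1 := by
    have h1 : ((-1 : K) ^ (n.choose 2)) ≠ 0 := pow_ne_zero _ (neg_ne_zero.2 one_ne_zero)
    rw [hσ, mul_pow, quadraticChar_sq_one h1, ← pow_mul, mul_comm n, pow_mul]
    norm_num
  have hμ : ∀ j t, polyMoebius (G j + C t * g) = σ * quadraticChar K ((D j).eval t) := by
    intro j t
    have := monic_pencil (RingHom.id K) t (hG j) (hgG j)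
    rw [Polynomial.map_id, Polynomial.map_id] at this
    rw [polyMoebius_eq_s1 hK this.1, this.2, hGn, map_mul, hDeval, hσ, mul_assoc]
  set s : ℤ := ∏ j, (if e j = 1 then σ else 1) with hs
  have hs1 : |s| = 1 := by
    have hσa : |σ| = 1 := by
      have h : |σ| ^ 2 = 1 := by rw [sq_abs, hσ1]
      nlinarith [abs_nonneg σ]
    rw [hs, Finset.abs_prod]
    refine Finset.prod_eq_one fun j _ => ?_
    split_ifs <;> simp [hσa]
  let Z : K → ℤ := fun t => ∏ j, (if e j = 1 then 1 else quadraticChar K ((D j).eval t) ^ 2)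
  have hprod : ∀ t, ∏ j, polyMoebius (G j + C t * g) ^ e j =
      s * quadraticChar K (f.eval t) * Z t := by
    intro t
    rw [hs, hf, eval_prod, map_prod, ← Finset.prod_mul_distrib, ← Finset.prod_mul_distrib]
    refine Finset.prod_congr rfl fun j _ => ?_
    rw [hμ]
    rcases he j with h | h
    · simp [h]
    · simp [h, mul_pow, hσ1]
  let B : Finset K := (∏ j, D j).roots.toFinset
  have hB : B.card ≤ 2 * n * r := by
    refine (Multiset.toFinset_card_le _).trans ((card_roots' _).trans
      ((natDegree_prod_le _ _).trans ?_))
    calc _ ≤ ∑ _j : Fin r, 2 * n := Finset.sum_le_sum fun j _ => hDdeg j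
      _ = 2 * n * r := by simp [mul_comm]
  have hdiff : ∀ t, |∏ j, polyMoebius (G j + C t * g) ^ e j - s * quadraticChar K (f.eval t)| ≤
      if t ∈ B then 1 else 0 := by
    intro t
    have hχ : |quadraticChar K (f.eval t)| ≤ 1 := by
      rcases quadraticChar_trichotomy (f.eval t) with h | h | h <;> rw [h] <;> norm_num
    rw [hprod, show s * quadraticChar K (f.eval t) * Z t - s * quadraticChar K (f.eval t) =
      s * (quadraticChar K (f.eval t) * (Z t - 1)) by ring, abs_mul, hs1, one_mul, abs_mul]
    split_ifs with ht
    · refine mul_le_one₀ hχ (abs_nonneg _) ?_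
      have hZ0 : 0 ≤ Z t := Finset.prod_nonneg fun j _ => by split_ifs <;> positivity
      have hZ1 : Z t ≤ 1 := Finset.prod_le_one (fun j _ => by split_ifs <;> positivity)
        fun j _ => by
          split_ifs
          · exact le_rfl
          · rcases quadraticChar_trichotomy ((D j).eval t) with h | h | h <;> rw [h] <;> norm_num
      rw [abs_le]; constructor <;> linarith
    · have hZ : Z t = 1 := Finset.prod_eq_one fun j _ => by
        split_ifs
        · rfl
        · refine quadraticChar_sq_one fun h0 => ht ?_
          rw [Multiset.mem_toFinset, mem_roots (Finset.prod_ne_zero_iff.2 fun j _ => hDne j),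
            IsRoot.def, eval_prod]
          exact Finset.prod_eq_zero (Finset.mem_univ j) h0
      simp [hZ]
  have hdiffsum : |∑ t : K, ∏ j, polyMoebius (G j + C t * g) ^ e j| ≤
      |∑ t : K, quadraticChar K (f.eval t)| + 2 * n * r := by
    have h1 : |∑ t : K, (∏ j, polyMoebius (G j + C t * g) ^ e j -
        s * quadraticChar K (f.eval t))| ≤ 2 * n * r := by
      refine (Finset.abs_sum_le_sum_abs _ _).trans ((Finset.sum_le_sum fun t _ => hdiff t).trans ?_)
      rw [Finset.sum_ite_mem, Finset.univ_inter]
      simp only [Finset.sum_const, nsmul_eq_mul, mul_one]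
      exact_mod_cast hB
    rw [Finset.sum_sub_distrib, ← Finset.mul_sum] at h1
    have h2 : |s * ∑ t : K, quadraticChar K (f.eval t)| = |∑ t : K, quadraticChar K (f.eval t)| := by
      rw [abs_mul, hs1, one_mul]
    have h3 := abs_sub_abs_le_abs_sub (∑ t : K, ∏ j, polyMoebius (G j + C t * g) ^ e j)
      (s * ∑ t : K, quadraticChar K (f.eval t))
    linarith
  push_cast at hmain
  nlinarith [mul_le_mul_of_nonneg_left hdiffsum (show (0 : ℤ) ≤ 2 * L by positivity)]

/-- The polynomial of degree less than `n` with coefficient vector `b`. -/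
def lowPoly {K : Type*} [Field K] {n : ℕ} (b : Fin n → K) : K[X] := ∑ i, C (b i) * X ^ (i : ℕ)

lemma lowPoly_coeff {K : Type*} [Field K] {n : ℕ} (b : Fin n → K) (i : Fin n) :
    (lowPoly b).coeff i = b i := by
  simp [lowPoly, coeff_X_pow, Fin.val_inj]

lemma lowPoly_degree {K : Type*} [Field K] {n : ℕ} (b : Fin n → K) : (lowPoly b).degree < n :=
  degree_sum_fin_lt b

lemma exists_lowPoly {K : Type*} [Field K] {n : ℕ} {p : K[X]} (hp : p.degree < n) :
    ∃ c : Fin n → K, lowPoly c = p := by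
  refine ⟨fun i => p.coeff i, ?_⟩
  ext i
  by_cases hi : i < n
  · exact lowPoly_coeff _ ⟨i, hi⟩
  · rw [coeff_eq_zero_of_degree_lt ((lowPoly_degree _).trans_le (by exact_mod_cast not_lt.1 hi)),
      coeff_eq_zero_of_degree_lt (hp.trans_le (by exact_mod_cast not_lt.1 hi))]

lemma lowPoly_add_smul {K : Type*} [Field K] {n : ℕ} (c b : Fin n → K) (t : K) :
    lowPoly (c + t • b) = lowPoly c + C t * lowPoly b := by
  simp only [lowPoly, Pi.add_apply, Pi.smul_apply, smul_eq_mul, C_add, C_mul, add_mul,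
    Finset.sum_add_distrib, Finset.mul_sum, mul_assoc]

lemma Csum_eq_s1 {K : Type*} [Field K] [Fintype K] (n r : ℕ) (α : Fin r → K[X]) (e : Fin r → ℕ) :
    Csum K n r α e = ∑ b : Fin n → K, ∏ j, polyMoebius (X ^ n + lowPoly b + α j) ^ e j := by
  rw [Csum, monicPolys, Finset.sum_image]
  · rfl
  · intro a _ b _ hab
    have : lowPoly a = lowPoly b := add_left_cancel hab
    ext i
    rw [← lowPoly_coeff a, ← lowPoly_coeff b, this]

/-- The affine maps `b ↦ c + t b` with `t ≠ 0` permute the coefficient vectors, so `Csum` is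
an average over the lines through a fixed point. -/
lemma Csum_lines {K : Type*} [Field K] [Fintype K] (n r : ℕ) (α : Fin r → K[X]) (e : Fin r → ℕ)
    {F₀ : K[X]} (hF₀ : degree (F₀ - X ^ n : K[X]) < (n : WithBot ℕ)) :
    ((Fintype.card K : ℤ) - 1) * Csum K n r α e = ∑ b : Fin n → K,
      ∑ t ∈ Finset.univ.erase (0 : K), ∏ j, polyMoebius (F₀ + α j + C t * lowPoly b) ^ e j := by
  obtain ⟨c, hc⟩ := exists_lowPoly hF₀
  rw [Finset.sum_comm]
  have h : ∀ t ∈ Finset.univ.erase (0 : K),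
      ∑ b : Fin n → K, ∏ j, polyMoebius (F₀ + α j + C t * lowPoly b) ^ e j = Csum K n r α e := by
    intro t ht
    have ht := Finset.ne_of_mem_erase ht
    have hbij : Function.Bijective fun b : Fin n → K => c + t • b := by
      refine Finite.injective_iff_bijective.1 fun a b hab => ?_
      exact smul_right_injective _ ht (add_left_cancel hab)
    rw [Csum_eq_s1, ← hbij.sum_comp fun b => ∏ j, polyMoebius (X ^ n + lowPoly b + α j) ^ e j]
    refine Finset.sum_congr rfl fun b _ => Finset.prod_congr rfl fun j _ => ?_
    rw [lowPoly_add_smul, hc]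
    congr 2
    ring
  rw [Finset.sum_congr rfl h, Finset.sum_const, Finset.card_erase_of_mem (Finset.mem_univ _),
    Finset.card_univ, nsmul_eq_mul, Nat.cast_sub Fintype.card_pos, Nat.cast_one]

/-- Vanishing at `ρ` is one linear condition on the coefficients, so it has density at most `1/q`. -/
lemma card_lowPoly_root_le {K : Type*} [Field K] [Fintype K] {n : ℕ} (hn : 0 < n) (ρ : K) :
    (Finset.univ.filter fun b : Fin n → K => (lowPoly b).eval ρ = 0).card * Fintype.card K ≤
      Fintype.card K ^ n := by
  set Z := Finset.univ.filter fun b : Fin n → K => (lowPoly b).eval ρ = 0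
  have hX : lowPoly (Pi.single (⟨0, hn⟩ : Fin n) (1 : K)) = 1 := by
    rw [lowPoly, Finset.sum_eq_single ⟨0, hn⟩]
    · simp
    · intro i _ hi; simp [hi]
    · simp
  have hinj : Set.InjOn (fun p : (Fin n → K) × K => p.1 + p.2 • Pi.single (⟨0, hn⟩ : Fin n) (1 : K))
      (Z ×ˢ (Finset.univ : Finset K) : Finset _) := by
    rintro ⟨b, y⟩ hb ⟨b', y'⟩ hb' h
    have hb := (Finset.mem_filter.1 (Finset.mem_product.1 hb).1).2
    have hb' := (Finset.mem_filter.1 (Finset.mem_product.1 hb').1).2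
    simp only at hb hb' h
    have h' := congrArg (fun v => (lowPoly v).eval ρ) h
    simp only [lowPoly_add_smul, hX, eval_add, hb, hb', eval_mul, eval_C, eval_one] at h'
    have hy : y = y' := by simpa using h'
    subst hy
    rw [add_right_cancel h]
  have := Finset.card_le_card_of_injOn (t := Finset.univ) _ (fun _ _ => Finset.mem_univ _) hinj
  simpa [Finset.card_product] using this

/-- The explicit estimate behind the theorem: `C = O(q^(n-1)) + O(q^n / L)`, with `L` a free
parameter that only has to be small compared with `√q`. The lines through the base point in a
direction vanishing at `ρ` are estimated trivially, the others by `line_sum_bound`. -/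
lemma Csum_bound {K : Type*} [Field K] [Fintype K] (hK : Odd (Fintype.card K)) {n r : ℕ}
    (hn : 1 < n) (α : Fin r → K[X]) (hα : Function.Injective α) (hαn : ∀ j, (α j).degree < n)
    (e : Fin r → ℕ) (he : ∀ j, e j = 1 ∨ e j = 2) (he' : ¬ ∀ j, e j = 2) (L : ℕ)
    (hq : n + 8 * n * r < Fintype.card K)
    (hbig : 2 * n * r + 2 + 2 * (L * (2 * L * (2 * n * r) + L + 1)) ≤ Fintype.card K) :
    2 * L * ((Fintype.card K : ℤ) - 1) * |Csum K n r α e| ≤ (Fintype.card K : ℤ) ^ n *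
      (8 * L * (2 * n * r) + 4 * L + Fintype.card K * (2 * n * r + 2)) := by
  have h2 : (2 : K) ≠ 0 := Ring.two_ne_zero fun h => by
    have := FiniteField.even_card_of_char_two h
    rw [Nat.odd_iff] at hK; omega
  push Not at he'
  obtain ⟨j₀, hj₀⟩ := he'
  have hj₀ : e j₀ = 1 := (he j₀).resolve_right hj₀
  have hβ : ∀ j, (α j - α j₀).degree < n := fun j =>
    (degree_sub_le _ _).trans_lt (max_lt (hαn j) (hαn j₀))
  obtain ⟨h, ρ, hm, hd, hsep, hρ, hβsep⟩ := exists_base_point h2 hn (fun j => α j - α j₀)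
    (fun j => by
      by_cases h0 : α j - α j₀ = 0
      · rw [h0, natDegree_zero]; omega
      · exact (natDegree_lt_iff_degree_lt h0).2 (hβ j)) hq
  set F : K[X] := (X - C ρ) ^ 2 * h with hF
  have hFm : F.Monic := ((monic_X_sub_C ρ).pow 2).mul hm
  have hFn : F.natDegree = n := by
    rw [hF, ((monic_X_sub_C ρ).pow 2).natDegree_mul hm, natDegree_pow, natDegree_X_sub_C]; omega
  have hFd : F.degree = n := by rw [degree_eq_natDegree hFm.ne_zero, hFn]
  have hGm : ∀ j, (F + (α j - α j₀)).Monic := fun j =>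
    hFm.add_of_left (by rw [hFd]; exact hβ j)
  have hGn : ∀ j, (F + (α j - α j₀)).natDegree = n := fun j => by
    rw [natDegree_eq_of_degree_eq (degree_add_eq_left_of_degree_lt (by rw [hFd]; exact hβ j)), hFn]
  have hlines := Csum_lines n r α e (F₀ := F - α j₀) (by
    rw [show F - α j₀ - X ^ n = (F - X ^ n) - α j₀ by ring]
    refine (degree_sub_le _ _).trans_lt (max_lt ?_ (hαn j₀))
    rw [← hFd]
    exact degree_sub_lt_left (by rw [hFd, degree_X_pow]) hFm.ne_zero
      (by rw [hFm.leadingCoeff, (monic_X_pow n).leadingCoeff]))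
  set q := Fintype.card K with hqdef
  let T : (Fin n → K) → ℤ := fun b =>
    ∑ t ∈ Finset.univ.erase (0 : K), ∏ j, polyMoebius (F - α j₀ + α j + C t * lowPoly b) ^ e j
  -- The extra `2 * L` accounts for the point `t = 0`, which is left out of `T b`.
  let E : ℤ := 8 * L * (2 * n * r) + 2 * L + q * (2 * n * r + 2)
  have hq1 : (1 : ℤ) ≤ q := by exact_mod_cast (Fintype.card_pos : 0 < Fintype.card K)
  have hE : 0 ≤ E := by positivity
  have hT : ∀ b, 2 * L * |T b| ≤ E + (if (lowPoly b).eval ρ = 0 then 2 * (L : ℤ) * q else 0) := by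
    intro b
    split_ifs with hb
    · have h1 : |T b| ≤ q := by
        refine (Finset.abs_sum_le_sum_abs _ _).trans ((Finset.sum_le_sum fun t _ =>
          abs_prod_polyMoebius_le_s1 _ _).trans ?_)
        rw [Finset.sum_const, Finset.card_erase_of_mem (Finset.mem_univ _), Finset.card_univ,
          nsmul_eq_mul, mul_one]
        exact_mod_cast Nat.sub_le _ _
      have := mul_le_mul_of_nonneg_left h1 (show (0 : ℤ) ≤ 2 * L by positivity)
      linarith
    · have hz := lineDisc_simple_zero h2 ρ hm hsep hρ hb (by
        rw [← hF, hFd]; exact lowPoly_degree b)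
      have hline := line_sum_bound hK (fun j => F + (α j - α j₀)) hGm hGn (lowPoly b)
        (lowPoly_degree b) e he j₀ hj₀ (by simpa using hz.1) (by simpa using hz.2)
        (fun j hj => hβsep j (sub_ne_zero.2 fun h => hj (hα h))) L hbig
      have hsplit := Finset.add_sum_erase Finset.univ
        (fun t : K => ∏ j, polyMoebius (F + (α j - α j₀) + C t * lowPoly b) ^ e j)
        (Finset.mem_univ (0 : K))
      have hTb : T b = ∑ t ∈ Finset.univ.erase (0 : K),
          ∏ j, polyMoebius (F + (α j - α j₀) + C t * lowPoly b) ^ e j := by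
        refine Finset.sum_congr rfl fun t _ => Finset.prod_congr rfl fun j _ => ?_
        congr 2; ring
      beta_reduce at hsplit hline
      rw [← hsplit, ← hTb] at hline
      have h0 := abs_prod_polyMoebius_le_s1 (fun j => F + (α j - α j₀) + C (0 : K) * lowPoly b) e
      set c := ∏ j, polyMoebius (F + (α j - α j₀) + C (0 : K) * lowPoly b) ^ e j
      have h1 : |T b| ≤ |c + T b| + 1 := by
        have := abs_sub_abs_le_abs_sub (T b) (-c)
        rw [abs_neg, sub_neg_eq_add, add_comm (T b)] at this
        linarith
      have := mul_le_mul_of_nonneg_left h1 (show (0 : ℤ) ≤ 2 * L by positivity)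
      simp only [E]
      linarith
  have hsum : 2 * L * |∑ b, T b| ≤ (q : ℤ) ^ n * E + 2 * L * (q : ℤ) ^ n := by
    have h1 : 2 * L * |∑ b, T b| ≤ ∑ b, 2 * L * |T b| := by
      rw [← Finset.mul_sum]
      exact mul_le_mul_of_nonneg_left (Finset.abs_sum_le_sum_abs _ _) (by positivity)
    refine h1.trans ((Finset.sum_le_sum fun b _ => hT b).trans ?_)
    rw [Finset.sum_add_distrib, Finset.sum_const, ← Finset.sum_filter, Finset.sum_const,
      Finset.card_univ, Fintype.card_fun, Fintype.card_fin, nsmul_eq_mul, nsmul_eq_mul]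
    have h3 : ((Finset.univ.filter fun b : Fin n → K => (lowPoly b).eval ρ = 0).card : ℤ) * q ≤
        (q : ℤ) ^ n := by exact_mod_cast card_lowPoly_root_le (by omega) ρ
    have := mul_le_mul_of_nonneg_left h3 (show (0 : ℤ) ≤ 2 * L by positivity)
    push_cast
    linarith
  have habs : ((q : ℤ) - 1) * |Csum K n r α e| = |∑ b, T b| := by
    have h1 : ∑ b, T b = ((q : ℤ) - 1) * Csum K n r α e := hlines.symm
    rw [h1, abs_mul, abs_of_nonneg (by linarith : (0 : ℤ) ≤ (q : ℤ) - 1)]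
  rw [mul_assoc, habs]
  refine hsum.trans (le_of_eq ?_)
  simp only [E]
  ring

/-- Function field analogue of Chowla's conjecture in the large finite field limit:
for fixed `r > 1` and `n > 1`, `C(α_1,…,α_r;n) = o(q^n)` as `q → ∞` over odd prime powers,
uniformly in the `α_j` and the exponents. -/
theorem chowla_function_field_limit (r n : ℕ) (hr : 1 < r) (hn : 1 < n) :
    ∀ ε : ℝ, 0 < ε → ∃ Q : ℕ, ∀ q : ℕ, Q < q → Odd q →
      ∀ (F : Type) [Field F] [Fintype F], Fintype.card F = q →
        ∀ α : Fin r → Polynomial F, Function.Injective α →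
          (∀ j, (α j).degree < n) →
            ∀ e : Fin r → ℕ, (∀ j, e j = 1 ∨ e j = 2) → (¬ ∀ j, e j = 2) →
              |(Csum F n r α e : ℝ)| < ε * (q : ℝ) ^ n := by
  intro ε hε
  set M := 2 * n * r with hM
  -- `L` makes the term `(M + 2) / L` small, and then `q` makes `(8 M + 4) / q` small.
  obtain ⟨L, hL⟩ := exists_nat_gt ((M + 2) * 2 / ε : ℝ)
  obtain ⟨Q, hQ⟩ := exists_nat_gt ((8 * M + 4) * 2 / ε : ℝ)
  refine ⟨Q + (n + 8 * n * r) + (M + 2 + 2 * (L * (2 * L * M + L + 1))), ?_⟩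
  intro q hq hodd F _ _ hcard α hα hαn e he he'
  subst hcard
  have hb := Csum_bound hodd hn α hα hαn e he he' L (by omega) (by rw [← hM]; omega)
  set q := Fintype.card F
  have hb' : 2 * (L : ℝ) * ((q : ℝ) - 1) * |(Csum F n r α e : ℝ)| ≤
      (q : ℝ) ^ n * (8 * L * M + 4 * L + q * (M + 2)) := by
    rw [hM]
    exact_mod_cast hb
  have hQq : (Q : ℝ) < q := by exact_mod_cast (by omega : Q < q)
  have hq2 : (2 : ℝ) ≤ q := by exact_mod_cast (by omega : 2 ≤ q)
  have hLpos : (0 : ℝ) < L := lt_trans (by positivity) hL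
  rw [div_lt_iff₀ hε] at hL hQ
  have hqn : (0 : ℝ) < (q : ℝ) ^ n := by positivity
  have hlt : 8 * (L : ℝ) * M + 4 * L + q * (M + 2) < ε * (L * q) := by
    have h1 : (8 * (M : ℝ) + 4) * 2 < q * ε := hQ.trans (by gcongr)
    have h2 := mul_lt_mul_of_pos_left h1 hLpos
    have h3 := mul_lt_mul_of_pos_left hL (show (0 : ℝ) < q by linarith)
    nlinarith
  have h1 : (L : ℝ) * q * |(Csum F n r α e : ℝ)| < L * q * (ε * (q : ℝ) ^ n) := by
    calc (L : ℝ) * q * |(Csum F n r α e : ℝ)|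
        ≤ 2 * (L : ℝ) * ((q : ℝ) - 1) * |(Csum F n r α e : ℝ)| := by
          refine mul_le_mul_of_nonneg_right ?_ (abs_nonneg _)
          nlinarith
      _ ≤ _ := hb'
      _ < (q : ℝ) ^ n * (ε * (L * q)) := mul_lt_mul_of_pos_left hlt hqn
      _ = _ := by ring
  exact lt_of_mul_lt_mul_left h1 (by positivity)
end
end
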